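/- arXiv:0806.3721 — 3 statements merged into one kernel-verified Lean document; each statement's English description precedes it below -/
import Mathlib

section
/- Let μ₀ ∈ Vₙ∖{0} satisfy the Jacobi identity, and suppose there exists g ∈ GL(n,ℝ) with ∇F(g·μ₀) = 0 (i.e., the orbit GL(n,ℝ)·μ₀ is distinguished; equivalently, by Lauret's theorem, the nilpotent Lie group N_{μ₀} is an Einstein nilradical). Let φ : [0,∞) → Vₙ∖{0} satisfy φ(0) = μ₀ and φ'(t) = −∇F(φ(t)) for all t ≥ 0. Then every ω-limit point μ_∞ of φ (i.e., every limit of a sequence φ(tₙ) with tₙ → ∞) lies in the orbit GL(n,ℝ)·μ₀; in particular the limit of the negative gradient flow defines a Lie bracket isomorphic to μ₀. -/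
/-!
Convergence of the negative gradient flow of the norm-squared moment map within the orbit
of an Einstein nilradical (Jablonski, application of the real gradient flow theorem).

The space `Vₙ` of alternating bilinear maps `μ : ℝⁿ × ℝⁿ → ℝⁿ` is identified, via the
standard basis `(eᵢ)`, with its structure coefficient arrays `c : Fin n → Fin n → (Fin n → ℝ)`,
`c i j = μ(eᵢ, eⱼ)`, satisfying `c i j = - c j i`.
-/

open Matrix Filter Topology

noncomputable section

namespace NilsolitonFlow

variable {n : ℕ}

/-- Bilinear maps `ℝⁿ × ℝⁿ → ℝⁿ`, recorded by their values on the standard basis. -/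
abbrev Bil (n : ℕ) := Fin n → Fin n → (Fin n → ℝ)

/-- `μ` is alternating. -/
def IsAlt (c : Bil n) : Prop := ∀ i j, c i j = -c j i

/-- The inner product `⟨μ, λ⟩ = ∑_{i,j} ⟨μ(eᵢ,eⱼ), λ(eᵢ,eⱼ)⟩` on `Vₙ`. -/
def innB (c e : Bil n) : ℝ := ∑ i, ∑ j, c i j ⬝ᵥ e i j

/-- The `GL(n,ℝ)`-action `(g·μ)(x,y) = g μ(g⁻¹x, g⁻¹y)`, in structure coefficients. -/
def actG (g : GL (Fin n) ℝ) (c : Bil n) : Bil n := fun i j =>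
  ∑ k, ∑ l,
    (((g⁻¹ : GL (Fin n) ℝ) : Matrix (Fin n) (Fin n) ℝ) k i *
      ((g⁻¹ : GL (Fin n) ℝ) : Matrix (Fin n) (Fin n) ℝ) l j) •
      ((g : Matrix (Fin n) (Fin n) ℝ) *ᵥ c k l)

/-- The derived `𝔤𝔩(n,ℝ)`-action `(X·μ)(x,y) = Xμ(x,y) − μ(Xx,y) − μ(x,Xy)`,
in structure coefficients. -/
def actX (X : Matrix (Fin n) (Fin n) ℝ) (c : Bil n) : Bil n := fun i j =>
  X *ᵥ c i j - (∑ k, X k i • c k j) - (∑ k, X k j • c i k)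

/-- The bilinear map (bracket) associated to a coefficient array. -/
def brkt (c : Bil n) (x y : Fin n → ℝ) : Fin n → ℝ := ∑ i, ∑ j, (x i * y j) • c i j

/-- The Jacobi identity. -/
def Jacobi (c : Bil n) : Prop :=
  ∀ x y z : Fin n → ℝ,
    brkt c (brkt c x y) z + brkt c (brkt c y z) x + brkt c (brkt c z x) y = 0

/-!
Write `M(μ) = m̃(μ)/⟨μ,μ⟩`. A direct computation gives `∇F(μ) = (4/⟨μ,μ⟩)(M(μ)·μ − F(μ)μ)`
(`gradient_formula`). The flow therefore preserves the norm, and a critical point `c` in the orbit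
satisfies `β·c = F(c)c` with `β = M(c)`. After multiplication by a positive function of time the
trajectory becomes a solution `χ` of `χ' = −κ(M(χ)·χ − F(c)χ)`, where the multiplier is constant.

Since `c` is critical, this trajectory is `χ(t) = b(t)·c`, where `b` solves
`b' = −κ(M(χ)b − bβ)` (`rel_of_ode`). The key point is that `b(t)` stays in a compact subset
of `GL(n,ℝ)`. Let `b = W √λ Uᵀ` be a singular value decomposition. Along the geodesic of
`O(n)\GL(n,ℝ)` from the class of `1` to the class of `b`, the moment map is monotone:
`tr(M(b·c) W log λ Wᵀ) ≥ tr(M(c) U log λ Uᵀ)`. This is Chebyshev's inequality, because in the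
adapted bases the squared coefficients of `b·c` are those of `c` times exponentials
(`tilt`, `moment_monotone`). It says exactly that `logSq b(t) = ∑ (log λᵢ)²`, a multiple of the
squared distance to the base point, does not increase (`deriv_logSq_nonpos`, `flow_bounded`).

Bounded `logSq` means that `b` and `b⁻¹` are bounded, so along a subsequence `b(tₙ)` converges in
`GL(n,ℝ)` (`exists_subseq`), and the limit of `φ(tₙ)` is a positive multiple of a point of the
orbit. Orbits are cones, because scalar matrices act by scalars (`limit_in_orbit`).
-/

/-! ### The three-slot action and the inner product -/

/-- The three-slot action, sending `μ` to `(x, y) ↦ r μ(p x, q y)`; the slots vary independently, so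
that both `actG` and `actX` are expressed by it. -/
def T (p q r : Matrix (Fin n) (Fin n) ℝ) (c : Bil n) : Bil n := fun i j =>
  ∑ k, ∑ l, (p k i * q l j) • (r *ᵥ c k l)

/-- The matrix of a bilinear map, as a linear map `ℝⁿ ⊗ ℝⁿ → ℝⁿ`. -/
def flat (c : Bil n) : Matrix (Fin n) (Fin n × Fin n) ℝ := fun a kl => c kl.1 kl.2 a

lemma flat_inj {c e : Bil n} (h : flat c = flat e) : c = e := by
  funext i j a
  exact congrFun (congrFun h a) (i, j)

lemma flat_T (p q r : Matrix (Fin n) (Fin n) ℝ) (c : Bil n) :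
    flat (T p q r c) = r * flat c * kroneckerMap (· * ·) p q := by
  ext a ⟨i, j⟩
  simp only [flat, T, Finset.sum_apply, Pi.smul_apply, smul_eq_mul, mul_apply, kroneckerMap_apply,
    Fintype.sum_prod_type, mulVec, dotProduct]
  refine Finset.sum_congr rfl fun k _ => Finset.sum_congr rfl fun l _ => ?_
  ring

lemma actG_eq (g : GL (Fin n) ℝ) (c : Bil n) :
    actG g c = T ((g⁻¹ : GL (Fin n) ℝ) : Matrix (Fin n) (Fin n) ℝ)
      ((g⁻¹ : GL (Fin n) ℝ) : Matrix (Fin n) (Fin n) ℝ) (g : Matrix (Fin n) (Fin n) ℝ) c := rfl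

lemma T_comp (p q r p' q' r' : Matrix (Fin n) (Fin n) ℝ) (c : Bil n) :
    T p q r (T p' q' r' c) = T (p' * p) (q' * q) (r * r') c := by
  apply flat_inj
  simp only [flat_T, mul_kronecker_mul, Matrix.mul_assoc]

lemma T_one (c : Bil n) : T 1 1 1 c = c := by
  apply flat_inj
  simp [flat_T]

lemma actX_eq (X : Matrix (Fin n) (Fin n) ℝ) (c : Bil n) :
    actX X c = T 1 1 X c - T X 1 1 c - T 1 X 1 c := by
  funext i j
  simp [actX, T, Matrix.one_apply, Finset.sum_ite_eq', ite_smul]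

lemma T_add₁ (p p' q r : Matrix (Fin n) (Fin n) ℝ) (c : Bil n) :
    T (p + p') q r c = T p q r c + T p' q r c := by
  funext i j; simp [T, add_mul, add_smul, Finset.sum_add_distrib]
lemma T_add₂ (p q q' r : Matrix (Fin n) (Fin n) ℝ) (c : Bil n) :
    T p (q + q') r c = T p q r c + T p q' r c := by
  funext i j; simp [T, mul_add, add_smul, Finset.sum_add_distrib]
lemma T_add₃ (p q r r' : Matrix (Fin n) (Fin n) ℝ) (c : Bil n) :
    T p q (r + r') c = T p q r c + T p q r' c := by
  funext i j; simp [T, add_mulVec, Finset.sum_add_distrib]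
lemma T_smul₁ (s : ℝ) (p q r : Matrix (Fin n) (Fin n) ℝ) (c : Bil n) :
    T (s • p) q r c = s • T p q r c := by
  funext i j; simp [T, mul_assoc, Finset.smul_sum, smul_smul]
lemma T_smul₂ (s : ℝ) (p q r : Matrix (Fin n) (Fin n) ℝ) (c : Bil n) :
    T p (s • q) r c = s • T p q r c := by
  funext i j; simp [T, mul_left_comm, Finset.smul_sum, smul_smul]
lemma T_smul₃ (s : ℝ) (p q r : Matrix (Fin n) (Fin n) ℝ) (c : Bil n) :
    T p q (s • r) c = s • T p q r c := by
  funext i j; simp [T, Finset.smul_sum, smul_smul, smul_mulVec, mul_comm]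
lemma T_addc (p q r : Matrix (Fin n) (Fin n) ℝ) (c e : Bil n) :
    T p q r (c + e) = T p q r c + T p q r e := by
  funext i j; simp [T, mulVec_add, Finset.sum_add_distrib]
lemma T_smulc (s : ℝ) (p q r : Matrix (Fin n) (Fin n) ℝ) (c : Bil n) :
    T p q r (s • c) = s • T p q r c := by
  funext i j; simp [T, Finset.smul_sum, smul_smul, mulVec_smul, mul_comm]
lemma T_subc (p q r : Matrix (Fin n) (Fin n) ℝ) (c e : Bil n) :
    T p q r (c - e) = T p q r c - T p q r e := by
  have := T_addc p q r (c - e) e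
  rw [sub_add_cancel] at this
  rw [this, add_sub_cancel_right]

lemma innB_flat (c e : Bil n) : innB c e = trace ((flat c)ᵀ * flat e) := by
  simp only [innB, flat, trace, diag, mul_apply, transpose_apply, Fintype.sum_prod_type, dotProduct]

lemma innB_T (p q r : Matrix (Fin n) (Fin n) ℝ) (c e : Bil n) :
    innB (T p q r c) e = innB c (T pᵀ qᵀ rᵀ e) := by
  simp only [innB_flat, flat_T, transpose_mul, kroneckerMap_transpose, Matrix.mul_assoc]
  rw [trace_mul_comm]
  simp only [Matrix.mul_assoc]

lemma innB_comm (c e : Bil n) : innB c e = innB e c := by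
  simp only [innB, dotProduct_comm]
lemma innB_add_left (c d e : Bil n) : innB (c + d) e = innB c e + innB d e := by
  simp [innB, Finset.sum_add_distrib]
lemma innB_sub_left (c d e : Bil n) : innB (c - d) e = innB c e - innB d e := by
  simp [innB, Finset.sum_sub_distrib]
lemma innB_smul_left (s : ℝ) (c e : Bil n) : innB (s • c) e = s * innB c e := by
  simp [innB, Finset.mul_sum]
lemma innB_add_right (c d e : Bil n) : innB c (d + e) = innB c d + innB c e := by
  simp [innB, Finset.sum_add_distrib]
lemma innB_smul_right (s : ℝ) (c e : Bil n) : innB c (s • e) = s * innB c e := by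
  simp [innB, Finset.mul_sum]

lemma innB_self (c : Bil n) : innB c c = ∑ i, ∑ j, ∑ k, c i j k ^ 2 := by
  simp [innB, dotProduct, sq]

lemma innB_self_nonneg (c : Bil n) : 0 ≤ innB c c := by
  rw [innB_self]; positivity

lemma innB_self_pos {c : Bil n} (hc : c ≠ 0) : 0 < innB c c := by
  refine lt_of_le_of_ne (innB_self_nonneg c) fun h => hc ?_
  rw [innB_self] at h
  funext i j k
  have h1 := (Finset.sum_eq_zero_iff_of_nonneg (fun i _ => by positivity)).1 h.symm i (by simp)
  have h2 := (Finset.sum_eq_zero_iff_of_nonneg (fun i _ => by positivity)).1 h1 j (by simp)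
  have h3 := (Finset.sum_eq_zero_iff_of_nonneg (fun i _ => by positivity)).1 h2 k (by simp)
  simpa using h3

lemma innB_ext {c d : Bil n} (h : ∀ e, innB c e = innB d e) : c = d := by
  by_contra hne
  have := innB_self_pos (sub_ne_zero.2 hne)
  rw [innB_sub_left, h, sub_self] at this
  exact lt_irrefl _ this

lemma innB_actX {X : Matrix (Fin n) (Fin n) ℝ} (hX : Xᵀ = X) (c e : Bil n) :
    innB (actX X c) e = innB c (actX X e) := by
  have hs : ∀ a b : Bil n, innB c (a - b) = innB c a - innB c b := fun a b => by
    rw [innB_comm, innB_sub_left, innB_comm a, innB_comm b]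
  simp only [actX_eq, innB_sub_left, innB_T, hX, transpose_one, hs]

lemma actX_add (X : Matrix (Fin n) (Fin n) ℝ) (c e : Bil n) :
    actX X (c + e) = actX X c + actX X e := by
  simp only [actX_eq, T_addc]; abel
lemma actX_smul (X : Matrix (Fin n) (Fin n) ℝ) (s : ℝ) (c : Bil n) :
    actX X (s • c) = s • actX X c := by
  simp only [actX_eq, T_smulc, smul_sub]
lemma actX_smul_left (X : Matrix (Fin n) (Fin n) ℝ) (s : ℝ) (c : Bil n) :
    actX (s • X) c = s • actX X c := by
  simp only [actX_eq, T_smul₁, T_smul₂, T_smul₃, smul_sub]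

/-- Change of basis intertwines the infinitesimal action with conjugation of matrices. -/
lemma actX_T {U V : Matrix (Fin n) (Fin n) ℝ} (hVU : V * U = 1)
    (X : Matrix (Fin n) (Fin n) ℝ) (c : Bil n) :
    T U U V (actX (U * X * V) c) = actX X (T U U V c) := by
  simp only [actX_eq, T_subc, T_comp, Matrix.one_mul, Matrix.mul_one]
  have h1 : V * (U * X * V) = X * V := by
    rw [← Matrix.mul_assoc, ← Matrix.mul_assoc, hVU, Matrix.one_mul]
  have h2 : U * X * V * U = U * X := by rw [Matrix.mul_assoc, hVU, Matrix.mul_one]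
  rw [h1, h2]

/-! ### The moment map and the gradient of `F` -/

/-- The defining property of the moment map `m̃`. -/
def IsMoment (mt : Bil n → Matrix (Fin n) (Fin n) ℝ) : Prop :=
  ∀ c : Bil n, (mt c)ᵀ = mt c ∧
    ∀ X : Matrix (Fin n) (Fin n) ℝ, Xᵀ = X → trace (mt c * X) = innB (actX X c) c

lemma sym_ext {A B : Matrix (Fin n) (Fin n) ℝ} (hA : Aᵀ = A) (hB : Bᵀ = B)
    (h : ∀ X : Matrix (Fin n) (Fin n) ℝ, Xᵀ = X → trace (A * X) = trace (B * X)) : A = B := by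
  have hs : (A - B)ᵀ = A - B := by rw [transpose_sub, hA, hB]
  have h0 : trace ((A - B)ᴴ * (A - B)) = 0 := by
    rw [conjTranspose_eq_transpose_of_trivial, hs, Matrix.sub_mul, trace_sub, h _ hs, sub_self]
  exact sub_eq_zero.1 (trace_conjTranspose_mul_self_eq_zero_iff.1 h0)

lemma mt_entry {mt : Bil n → Matrix (Fin n) (Fin n) ℝ} (hmt : IsMoment mt) (c : Bil n)
    (i j : Fin n) :
    mt c i j = innB (actX (single i j 1 + single j i 1) c) c / 2 := by
  have h := (hmt c).2 (single i j 1 + single j i 1) (by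
    rw [transpose_add, transpose_single, transpose_single, add_comm])
  have hs : mt c i j = mt c j i := congrFun (congrFun (hmt c).1 j) i
  rw [← h, Matrix.mul_add, trace_add, trace_mul_single, trace_mul_single, hs]
  simp

lemma mt_smul {mt : Bil n → Matrix (Fin n) (Fin n) ℝ} (hmt : IsMoment mt) (s : ℝ) (c : Bil n) :
    mt (s • c) = (s ^ 2) • mt c := by
  refine sym_ext (hmt _).1 (by rw [transpose_smul, (hmt c).1]) fun X hX => ?_
  rw [(hmt _).2 X hX, smul_mul, trace_smul, (hmt c).2 X hX, actX_smul, innB_smul_left,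
    innB_smul_right, smul_eq_mul]
  ring

lemma actX_apply (X : Matrix (Fin n) (Fin n) ℝ) (c : Bil n) (i j a : Fin n) :
    actX X c i j a = (∑ k, X a k * c i j k) - (∑ k, X k i * c k j a) - ∑ k, X k j * c i k a := by
  simp [actX, mulVec, dotProduct]

lemma continuous_innB : Continuous fun c : Bil n => innB c c := by
  simp only [innB_self]; fun_prop

lemma differentiable_innB : Differentiable ℝ fun c : Bil n => innB c c := by
  simp only [innB_self]; fun_prop

lemma differentiable_mt {mt : Bil n → Matrix (Fin n) (Fin n) ℝ} (hmt : IsMoment mt) (i j : Fin n) :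
    Differentiable ℝ fun c => mt c i j := by
  simp only [mt_entry hmt, innB, dotProduct, actX_apply]
  fun_prop

/-- First variation of the moment map, by polarization of a quadratic map. -/
lemma mt_line {mt : Bil n → Matrix (Fin n) (Fin n) ℝ} (hmt : IsMoment mt) (c e : Bil n) :
    ∃ Q : Matrix (Fin n) (Fin n) ℝ,
      (∀ X : Matrix (Fin n) (Fin n) ℝ, Xᵀ = X → trace (X * Q) = 2 * innB (actX X c) e) ∧
      ∀ s : ℝ, mt (c + s • e) = mt c + s • Q + (s ^ 2) • mt e := by
  have key : ∀ X : Matrix (Fin n) (Fin n) ℝ, Xᵀ = X →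
      trace ((mt (c + e) - mt c - mt e) * X) = 2 * innB (actX X c) e := fun X hX => by
    rw [Matrix.sub_mul, Matrix.sub_mul, trace_sub, trace_sub, (hmt _).2 X hX, (hmt _).2 X hX,
      (hmt _).2 X hX, actX_add, innB_add_left, innB_add_right, innB_add_right,
      innB_actX hX e c, innB_comm e]
    ring
  refine ⟨mt (c + e) - mt c - mt e, fun X hX => by rw [trace_mul_comm, key X hX], fun s => ?_⟩
  refine sym_ext (hmt _).1 ?_ fun X hX => ?_
  · simp only [transpose_add, transpose_smul, transpose_sub, (hmt _).1]
  · rw [(hmt _).2 X hX, Matrix.add_mul, Matrix.add_mul, smul_mul, smul_mul, trace_add, trace_add,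
      trace_smul, trace_smul, key X hX, (hmt _).2 X hX, (hmt _).2 X hX, actX_add, innB_add_left,
      innB_add_right, innB_add_right, actX_smul, innB_smul_left, innB_smul_left, innB_smul_right,
      innB_smul_right, innB_actX hX e c, innB_comm e]
    simp only [smul_eq_mul]
    ring

/-- The formula `∇F(c) = (4/⟨c,c⟩)(M(c)·c − F(c)c)` with `M = m̃/⟨·,·⟩`, obtained by differentiating
`F` along lines `c + s e`. -/
lemma gradient_formula {mt : Bil n → Matrix (Fin n) (Fin n) ℝ} (hmt : IsMoment mt)
    {F : Bil n → ℝ} (hF : ∀ c : Bil n, F c = trace (mt c * mt c) / (innB c c) ^ 2)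
    {gF : Bil n → Bil n} (hgF : ∀ c e : Bil n, innB (gF c) e = fderiv ℝ F c e)
    {c : Bil n} (hc : c ≠ 0) :
    gF c = (4 / innB c c) • (actX ((innB c c)⁻¹ • mt c) c - F c • c) := by
  have hN := innB_self_pos hc
  refine innB_ext fun e => ?_
  rw [hgF]
  have hdiff : DifferentiableAt ℝ F c := by
    have : F = fun c => (∑ i, ∑ j, mt c i j * mt c j i) / (innB c c) ^ 2 := by
      funext c; rw [hF]; simp [trace, mul_apply]
    rw [this]
    have hnum : DifferentiableAt ℝ (fun c => ∑ i, ∑ j, mt c i j * mt c j i) c :=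
      DifferentiableAt.fun_sum fun i _ => DifferentiableAt.fun_sum fun j _ =>
        (differentiable_mt hmt i j c).fun_mul (differentiable_mt hmt j i c)
    have hden : DifferentiableAt ℝ (fun c : Bil n => (innB c c) ^ 2) c :=
      (differentiable_innB c).fun_pow 2
    simp only [div_eq_mul_inv]
    exact hnum.fun_mul (hden.fun_inv (pow_pos hN 2).ne')
  obtain ⟨Q, hQ, hline⟩ := mt_line hmt c e
  have h1 : HasDerivAt (fun s : ℝ => F (c + s • e)) (fderiv ℝ F c e) 0 := by
    have hl : HasDerivAt (fun s : ℝ => c + s • e) e 0 := by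
      simpa using ((hasDerivAt_id (0:ℝ)).smul_const e).const_add c
    have hd : HasFDerivAt F (fderiv ℝ F c) (c + (0:ℝ) • e) := by
      simpa using hdiff.hasFDerivAt
    exact hd.comp_hasDerivAt (0:ℝ) hl
  set m := mt c
  have hnum : (fun s : ℝ => F (c + s • e)) = fun s =>
      (trace (m * m) + s * (2 * trace (m * Q)) + s ^ 2 * (2 * trace (m * mt e) + trace (Q * Q))
        + s ^ 3 * (2 * trace (Q * mt e)) + s ^ 4 * trace (mt e * mt e)) /
      (innB c c + s * (2 * innB c e) + s ^ 2 * innB e e) ^ 2 := by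
    funext s
    rw [hF, hline]
    congr 1
    · simp only [Matrix.add_mul, Matrix.mul_add, smul_mul, Matrix.mul_smul, trace_add, trace_smul,
        smul_eq_mul]
      rw [trace_mul_comm Q m, trace_mul_comm (mt e) m, trace_mul_comm (mt e) Q]
      ring
    · rw [innB_add_left, innB_add_right, innB_add_right, innB_smul_left, innB_smul_left,
        innB_smul_right, innB_smul_right, innB_comm e c]
      ring
  rw [hnum] at h1
  have hid := hasDerivAt_id (0:ℝ)
  have hn2 := ((((hid.mul_const (2 * trace (m * Q))).const_add (trace (m * m))).add
      ((hid.pow 2).mul_const (2 * trace (m * mt e) + trace (Q * Q)))).add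
      ((hid.pow 3).mul_const (2 * trace (Q * mt e)))).add
      ((hid.pow 4).mul_const (trace (mt e * mt e)))
  have hd2 := (((hid.mul_const (2 * innB c e)).const_add (innB c c)).add
      ((hid.pow 2).mul_const (innB e e))).pow 2
  have h2 := hn2.div hd2 (by simpa using hN.ne')
  have h3 := h1.unique (h2.congr_of_eventuallyEq (by
    refine Filter.Eventually.of_forall fun s => ?_
    simp))
  rw [h3]
  simp only [id, innB_smul_left, innB_sub_left, actX_smul_left]
  have := hQ m (hmt c).1
  rw [hF c]
  simp [this]
  field_simp
  ring

/-! ### Spectral functions and singular values -/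

/-- The eigenvalues of `bᵀ b`, i.e. the squared singular values of `b`. -/
def sqSing (b : Matrix (Fin n) (Fin n) ℝ) : Fin n → ℝ :=
  (isHermitian_conjTranspose_mul_self b).eigenvalues

/-- Four times the squared distance, in the symmetric space `O(n)\GL(n,ℝ)`, from the base point to
the class of `b`. -/
def logSq (b : Matrix (Fin n) (Fin n) ℝ) : ℝ := ∑ i, Real.log (sqSing b i) ^ 2

lemma exists_spectral (b : Matrix (Fin n) (Fin n) ℝ) :
    ∃ U : Matrix (Fin n) (Fin n) ℝ, Uᵀ * U = 1 ∧ U * Uᵀ = 1 ∧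
      bᵀ * b = U * diagonal (sqSing b) * Uᵀ := by
  have h := isHermitian_conjTranspose_mul_self b
  refine ⟨h.eigenvectorUnitary, ?_, ?_, ?_⟩
  · have := Unitary.coe_star_mul_self h.eigenvectorUnitary
    rwa [star_eq_conjTranspose, conjTranspose_eq_transpose_of_trivial] at this
  · have := Unitary.coe_mul_star_self h.eigenvectorUnitary
    rwa [Unitary.coe_star, star_eq_conjTranspose, conjTranspose_eq_transpose_of_trivial
      (h.eigenvectorUnitary : Matrix (Fin n) (Fin n) ℝ)] at this
  · have := h.spectral_theorem
    rw [Unitary.conjStarAlgAut_apply, star_eq_conjTranspose,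
      conjTranspose_eq_transpose_of_trivial (h.eigenvectorUnitary : Matrix (Fin n) (Fin n) ℝ)] at this
    rw [← conjTranspose_eq_transpose_of_trivial b]
    exact this

/-- The trace pairing of two matrices diagonalized in different bases, through the squared entries
`⟨uᵢ, vⱼ⟩²` of the transition matrix. -/
lemma trace_two_bases (U V : Matrix (Fin n) (Fin n) ℝ) (f g : Fin n → ℝ) :
    trace (U * diagonal f * Uᵀ * (V * diagonal g * Vᵀ)) =
      ∑ i, ∑ j, (Uᵀ * V) i j ^ 2 * (f i * g j) := by
  have : trace (U * diagonal f * Uᵀ * (V * diagonal g * Vᵀ)) =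
      trace (diagonal f * (Uᵀ * V) * (diagonal g * (Uᵀ * V)ᵀ)) := by
    rw [transpose_mul, transpose_transpose, Matrix.mul_assoc U, Matrix.mul_assoc U, trace_mul_comm]
    simp only [Matrix.mul_assoc]
  rw [this]
  simp only [trace, diag, mul_apply, transpose_apply (_ * _)]
  simp only [diagonal_apply, ite_mul, zero_mul, Finset.sum_ite_eq,
    Finset.mem_univ, if_true]
  refine Finset.sum_congr rfl fun i _ => Finset.sum_congr rfl fun j _ => ?_
  simp only [transpose_apply]
  ring

/-- A scalar second-order Taylor bound for `h` transfers to the spectral function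
`A ↦ tr h(A)`: expanding in two orthonormal eigenbases, the Taylor remainder becomes an average of
scalar remainders with the doubly stochastic weights `⟨uᵢ, vⱼ⟩²`. -/
lemma trace_taylor {A B U V : Matrix (Fin n) (Fin n) ℝ} {α β : Fin n → ℝ} (h h' : ℝ → ℝ) {K : ℝ}
    (hU : Uᵀ * U = 1) (hU' : U * Uᵀ = 1) (hV : Vᵀ * V = 1) (hV' : V * Vᵀ = 1)
    (hA : A = U * diagonal α * Uᵀ) (hB : B = V * diagonal β * Vᵀ)
    (hK : ∀ i j, |h (β j) - h (α i) - h' (α i) * (β j - α i)| ≤ K * (β j - α i) ^ 2) :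
    |∑ j, h (β j) - ∑ i, h (α i) - trace (U * diagonal (fun i => h' (α i)) * Uᵀ * (B - A))|
      ≤ K * trace ((B - A) * (B - A)) := by
  set S : Fin n → Fin n → ℝ := fun i j => (Uᵀ * V) i j ^ 2 with hS
  have hrow : ∀ i, ∑ j, S i j = 1 := fun i => by
    have : (Uᵀ * V * (Uᵀ * V)ᵀ) i i = 1 := by
      rw [transpose_mul, transpose_transpose, Matrix.mul_assoc, ← Matrix.mul_assoc V, hV',
        Matrix.one_mul, hU, one_apply_eq]
    rw [mul_apply] at this
    simpa only [sq, hS, transpose_apply (Uᵀ * V)] using this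
  have hcol : ∀ j, ∑ i, S i j = 1 := fun j => by
    have : ((Uᵀ * V)ᵀ * (Uᵀ * V)) j j = 1 := by
      rw [transpose_mul, transpose_transpose, Matrix.mul_assoc, ← Matrix.mul_assoc U, hU',
        Matrix.one_mul, hV, one_apply_eq]
    rw [mul_apply] at this
    simpa only [sq, hS, transpose_apply (Uᵀ * V)] using this
  have hr : ∀ f : Fin n → ℝ, ∑ i, f i = ∑ i, ∑ j, S i j * f i := fun f =>
    Finset.sum_congr rfl fun i _ => by rw [← Finset.sum_mul, hrow, one_mul]
  have hc : ∀ f : Fin n → ℝ, ∑ j, f j = ∑ i, ∑ j, S i j * f j := fun f => by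
    rw [Finset.sum_comm]
    exact Finset.sum_congr rfl fun j _ => by rw [← Finset.sum_mul, hcol, one_mul]
  have hdiag : ∀ (W : Matrix (Fin n) (Fin n) ℝ) (f g : Fin n → ℝ), Wᵀ * W = 1 →
      trace (W * diagonal f * Wᵀ * (W * diagonal g * Wᵀ)) = ∑ i, f i * g i := fun W f g hW => by
    rw [trace_two_bases, hW]
    simp [one_apply]
  have e1 : trace (U * diagonal (fun i => h' (α i)) * Uᵀ * (B - A)) =
      ∑ i, ∑ j, S i j * (h' (α i) * (β j - α i)) := by
    rw [Matrix.mul_sub, trace_sub, hB, hA, trace_two_bases, hdiag _ _ _ hU,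
      hr (fun i => h' (α i) * α i), ← Finset.sum_sub_distrib]
    refine Finset.sum_congr rfl fun i _ => ?_
    rw [← Finset.sum_sub_distrib]
    refine Finset.sum_congr rfl fun j _ => ?_
    rw [hS]; ring
  have e2 : trace ((B - A) * (B - A)) = ∑ i, ∑ j, S i j * (β j - α i) ^ 2 := by
    rw [Matrix.mul_sub, Matrix.sub_mul, Matrix.sub_mul, trace_sub, trace_sub, trace_sub,
      trace_mul_comm B A, hB, hA, hdiag _ _ _ hU, hdiag _ _ _ hV, trace_two_bases,
      hr (fun i => α i * α i), hc (fun j => β j * β j),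
      ← Finset.sum_sub_distrib, ← Finset.sum_sub_distrib, ← Finset.sum_sub_distrib]
    refine Finset.sum_congr rfl fun i _ => ?_
    rw [← Finset.sum_sub_distrib, ← Finset.sum_sub_distrib, ← Finset.sum_sub_distrib]
    refine Finset.sum_congr rfl fun j _ => ?_
    rw [hS]; ring
  have e3 : ∑ j, h (β j) - ∑ i, h (α i) - trace (U * diagonal (fun i => h' (α i)) * Uᵀ * (B - A)) =
      ∑ i, ∑ j, S i j * (h (β j) - h (α i) - h' (α i) * (β j - α i)) := by
    rw [e1, hr (fun i => h (α i)), hc (fun j => h (β j)), ← Finset.sum_sub_distrib,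
      ← Finset.sum_sub_distrib]
    refine Finset.sum_congr rfl fun i _ => ?_
    rw [← Finset.sum_sub_distrib, ← Finset.sum_sub_distrib]
    refine Finset.sum_congr rfl fun j _ => ?_
    ring
  rw [e3, e2, Finset.mul_sum]
  refine (Finset.abs_sum_le_sum_abs _ _).trans (Finset.sum_le_sum fun i _ => ?_)
  rw [Finset.mul_sum]
  refine (Finset.abs_sum_le_sum_abs _ _).trans (Finset.sum_le_sum fun j _ => ?_)
  have h0 : 0 ≤ S i j := sq_nonneg _
  rw [abs_mul, abs_of_nonneg h0]
  calc _ ≤ S i j * (K * (β j - α i) ^ 2) := mul_le_mul_of_nonneg_left (hK i j) h0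
    _ = _ := by ring

/-- Second-order Taylor bound for `log²`. -/
lemma log_sq_taylor {a L x y : ℝ} (ha : 0 < a) (hx : a ≤ x) (hy : a ≤ y) (hL : |Real.log x| ≤ L) :
    |Real.log y ^ 2 - Real.log x ^ 2 - 2 * Real.log x / x * (y - x)| ≤
      ((1 + 2 * L) / a ^ 2) * (y - x) ^ 2 := by
  have hx0 : 0 < x := ha.trans_le hx
  have hy0 : 0 < y := ha.trans_le hy
  set d := Real.log y - Real.log x with hd
  have hdu : d ≤ (y - x) / x := by
    have := Real.log_le_sub_one_of_pos (div_pos hy0 hx0)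
    rw [Real.log_div hy0.ne' hx0.ne'] at this
    rw [sub_div, div_self hx0.ne']; exact this
  have hdl : (y - x) / y ≤ d := by
    have := Real.log_le_sub_one_of_pos (div_pos hx0 hy0)
    rw [Real.log_div hx0.ne' hy0.ne'] at this
    rw [sub_div, div_self hy0.ne']; linarith
  have hxx : |(y - x) / x| ≤ |y - x| / a := by
    rw [abs_div, abs_of_pos hx0]; gcongr
  have hyy : |(y - x) / y| ≤ |y - x| / a := by
    rw [abs_div, abs_of_pos hy0]; gcongr
  have hdabs : |d| ≤ |y - x| / a :=
    abs_le.2 ⟨by linarith [(abs_le.1 hyy).1], by linarith [(abs_le.1 hxx).2]⟩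
  have hd2 : d ^ 2 ≤ (y - x) ^ 2 / a ^ 2 := by
    rw [← sq_abs d, ← sq_abs (y - x), ← div_pow]
    gcongr
  have hr : |d - (y - x) / x| ≤ (y - x) ^ 2 / a ^ 2 := by
    have h1 : (y - x) / x - (y - x) / y = (y - x) ^ 2 / (x * y) := by field_simp
    have h2 : (y - x) ^ 2 / (x * y) ≤ (y - x) ^ 2 / a ^ 2 := by
      gcongr
      nlinarith
    rw [abs_le]; constructor
    · linarith
    · have : 0 ≤ (y - x) ^ 2 / a ^ 2 := by positivity
      linarith
  have e : Real.log y ^ 2 - Real.log x ^ 2 - 2 * Real.log x / x * (y - x) =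
      d ^ 2 + 2 * Real.log x * (d - (y - x) / x) := by
    rw [hd]; field_simp; ring
  rw [e]
  calc |d ^ 2 + 2 * Real.log x * (d - (y - x) / x)|
      ≤ d ^ 2 + 2 * |Real.log x| * |d - (y - x) / x| := by
        refine (abs_add_le _ _).trans ?_
        rw [abs_mul, abs_mul, abs_of_nonneg (sq_nonneg d), abs_two]
    _ ≤ (y - x) ^ 2 / a ^ 2 + 2 * L * ((y - x) ^ 2 / a ^ 2) := by
        have : 0 ≤ L := (abs_nonneg _).trans hL
        gcongr
    _ = _ := by ring

/-- An invertible matrix has positive squared singular values, and their inverses sum to the squared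
Frobenius norm of the inverse matrix. -/
lemma sqSing_inv {b e : Matrix (Fin n) (Fin n) ℝ} (hbe : b * e = 1) :
    (∀ i, 0 < sqSing b i) ∧ ∑ i, (sqSing b i)⁻¹ = ∑ i, ∑ j, e i j ^ 2 := by
  obtain ⟨U, hU, hU', hspec⟩ := exists_spectral b
  have h1 : bᵀ * b * (e * eᵀ) = 1 := by
    rw [Matrix.mul_assoc, ← Matrix.mul_assoc b, hbe, Matrix.one_mul, ← transpose_mul,
      mul_eq_one_comm.1 hbe, transpose_one]
  have h2 : diagonal (sqSing b) * ((Uᵀ * e) * (Uᵀ * e)ᵀ) = 1 := by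
    rw [hspec] at h1
    calc diagonal (sqSing b) * ((Uᵀ * e) * (Uᵀ * e)ᵀ)
        = Uᵀ * U * diagonal (sqSing b) * ((Uᵀ * e) * (Uᵀ * e)ᵀ) := by rw [hU, Matrix.one_mul]
      _ = Uᵀ * (U * diagonal (sqSing b) * Uᵀ * (e * eᵀ)) * U := by
          simp only [transpose_mul, transpose_transpose, Matrix.mul_assoc]
      _ = 1 := by rw [h1, Matrix.mul_one, hU]
  have h3 : ∀ i, sqSing b i * ∑ k, (Uᵀ * e) i k ^ 2 = 1 := fun i => by
    have := congrFun (congrFun h2 i) i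
    rw [diagonal_mul, mul_apply, one_apply_eq] at this
    simpa only [sq, transpose_apply (Uᵀ * e)] using this
  have h4 : ∀ i, (sqSing b i)⁻¹ = ∑ k, (Uᵀ * e) i k ^ 2 := fun i =>
    inv_eq_of_mul_eq_one_right (h3 i)
  refine ⟨fun i => ?_, ?_⟩
  · have h0 : 0 ≤ ∑ k, (Uᵀ * e) i k ^ 2 := by positivity
    by_contra hneg
    nlinarith [h3 i]
  · have ht : ∀ M : Matrix (Fin n) (Fin n) ℝ, ∑ i, ∑ j, M i j ^ 2 = trace (M * Mᵀ) := fun M => by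
      simp [trace, mul_apply, sq]
    simp only [h4]
    rw [ht, ht, transpose_mul, transpose_transpose, Matrix.mul_assoc, trace_mul_comm,
      Matrix.mul_assoc, Matrix.mul_assoc, hU', Matrix.mul_one]

lemma sqSing_sum (b : Matrix (Fin n) (Fin n) ℝ) :
    ∑ i, sqSing b i = ∑ i, ∑ j, b i j ^ 2 := by
  obtain ⟨U, hU, hU', hspec⟩ := exists_spectral b
  have h1 : trace (bᵀ * b) = ∑ i, sqSing b i := by
    rw [hspec, trace_mul_comm, ← Matrix.mul_assoc, hU, Matrix.one_mul, trace_diagonal]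
  rw [← h1, Finset.sum_comm]
  simp [trace, mul_apply, sq]

/-! ### Derivative of `logSq`, and Chebyshev's inequality -/

section
attribute [local instance] Matrix.linftyOpNormedRing Matrix.linftyOpNormedAlgebra

lemma hasDeriv_entry {b : ℝ → Matrix (Fin n) (Fin n) ℝ} {b' : Matrix (Fin n) (Fin n) ℝ}
    {S : Set ℝ} {s : ℝ} :
    HasDerivWithinAt b b' S s ↔ ∀ i j, HasDerivWithinAt (fun t => b t i j) (b' i j) S s := by
  refine ⟨fun h i j => ?_, fun h => ?_⟩
  · exact hasDerivWithinAt_pi.1 (hasDerivWithinAt_pi.1 h i) j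
  · exact hasDerivWithinAt_pi.2 fun i => hasDerivWithinAt_pi.2 fun j => h i j

lemma hasDeriv_transpose {b : ℝ → Matrix (Fin n) (Fin n) ℝ} {b' : Matrix (Fin n) (Fin n) ℝ}
    {S : Set ℝ} {s : ℝ} (h : HasDerivWithinAt b b' S s) :
    HasDerivWithinAt (fun t => (b t)ᵀ) b'ᵀ S s :=
  hasDeriv_entry.2 fun i j => hasDeriv_entry.1 h j i

lemma hasDeriv_trace {b : ℝ → Matrix (Fin n) (Fin n) ℝ} {b' : Matrix (Fin n) (Fin n) ℝ}
    {S : Set ℝ} {s : ℝ} (h : HasDerivWithinAt b b' S s) :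
    HasDerivWithinAt (fun t => trace (b t)) (trace b') S s := by
  simp only [trace, diag]
  exact HasDerivWithinAt.fun_sum fun i _ => hasDeriv_entry.1 h i i

/-- The chain rule for the spectral function `logSq`. The individual eigenvalues of `bᵀ b` need not
be differentiable, so the derivative is read off from the Taylor bound `trace_taylor` with a
remainder quadratic in the increment of `bᵀ b`. -/
lemma hasDeriv_logSq {b : ℝ → Matrix (Fin n) (Fin n) ℝ} {b' : Matrix (Fin n) (Fin n) ℝ}
    {S : Set ℝ} {s : ℝ} (hs : s ∈ S) (hb : HasDerivWithinAt b b' S s)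
    (hu : ∀ t ∈ S, IsUnit (b t)) {U : Matrix (Fin n) (Fin n) ℝ} (hU : Uᵀ * U = 1) (hU' : U * Uᵀ = 1)
    (hspec : (b s)ᵀ * b s = U * diagonal (sqSing (b s)) * Uᵀ) :
    HasDerivWithinAt (fun t => logSq (b t))
      (trace (U * diagonal (fun i => 2 * Real.log (sqSing (b s) i) / sqSing (b s) i) * Uᵀ *
        (b'ᵀ * b s + (b s)ᵀ * b'))) S s := by
  have hinv : ∀ t ∈ S, b t * Ring.inverse (b t) = 1 := fun t ht =>
    Ring.mul_inverse_cancel _ (hu t ht)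
  -- near `s` the singular values are bounded below, through the entries of the inverse
  obtain ⟨C, hC0, hC⟩ : ∃ C : ℝ, 0 < C ∧
      ∀ᶠ t in 𝓝[S] s, ∑ i, ∑ j, (Ring.inverse (b t)) i j ^ 2 ≤ C := by
    obtain ⟨u, hu'⟩ := hu s hs
    have hcont : ContinuousWithinAt (fun t => Ring.inverse (b t)) S s := by
      have h1 : ContinuousAt Ring.inverse (b s) := by
        rw [← hu']; exact NormedRing.inverse_continuousAt u
      exact h1.comp_continuousWithinAt hb.continuousWithinAt
    have hc2 : ContinuousWithinAt (fun t => ∑ i, ∑ j, (Ring.inverse (b t)) i j ^ 2) S s := by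
      have hf : Continuous fun M : Matrix (Fin n) (Fin n) ℝ => ∑ i, ∑ j, M i j ^ 2 := by fun_prop
      exact hf.continuousAt.comp_continuousWithinAt hcont
    refine ⟨∑ i, ∑ j, (Ring.inverse (b s)) i j ^ 2 + 1, by positivity, ?_⟩
    filter_upwards [hc2.eventually (gt_mem_nhds (lt_add_one _))] with t ht using ht.le
  have hlow : ∀ᶠ t in 𝓝[S] s, ∀ i, C⁻¹ ≤ sqSing (b t) i := by
    filter_upwards [hC, self_mem_nhdsWithin] with t ht htS i
    obtain ⟨hpos, hsum⟩ := sqSing_inv (hinv t htS)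
    have h1 : (sqSing (b t) i)⁻¹ ≤ C := by
      refine le_trans ?_ (hsum.le.trans ht)
      exact Finset.single_le_sum (f := fun i => (sqSing (b t) i)⁻¹)
        (fun j _ => (inv_pos.2 (hpos j)).le) (Finset.mem_univ i)
    exact inv_le_of_inv_le₀ (hpos i) h1
  have hlow_s := hlow.self_of_nhdsWithin hs
  set L : ℝ := ∑ i, |Real.log (sqSing (b s) i)| with hL
  have hLi : ∀ i, |Real.log (sqSing (b s) i)| ≤ L := fun i =>
    Finset.single_le_sum (f := fun i => |Real.log (sqSing (b s) i)|)
      (fun j _ => abs_nonneg _) (Finset.mem_univ i)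
  set H := U * diagonal (fun i => 2 * Real.log (sqSing (b s) i) / sqSing (b s) i) * Uᵀ with hH
  set K := (1 + 2 * L) / C⁻¹ ^ 2
  have hest : ∀ᶠ t in 𝓝[S] s,
      |logSq (b t) - logSq (b s) - trace (H * ((b t)ᵀ * b t - (b s)ᵀ * b s))| ≤
        K * trace (((b t)ᵀ * b t - (b s)ᵀ * b s) * ((b t)ᵀ * b t - (b s)ᵀ * b s)) := by
    filter_upwards [hlow] with t ht
    obtain ⟨V, hV, hV', hspec'⟩ := exists_spectral (b t)
    exact trace_taylor (fun x => Real.log x ^ 2) (fun x => 2 * Real.log x / x) hU hU' hV hV' hspec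
      hspec' fun i j => log_sq_taylor (inv_pos.2 hC0) (hlow_s i) (ht j) (hLi i)
  have hB : HasDerivWithinAt (fun t => (b t)ᵀ * b t) (b'ᵀ * b s + (b s)ᵀ * b') S s :=
    (hasDeriv_transpose hb).mul hb
  have hdel := hB.sub_const ((b s)ᵀ * b s)
  have hE : HasDerivWithinAt (fun t => K * trace
      (((b t)ᵀ * b t - (b s)ᵀ * b s) * ((b t)ᵀ * b t - (b s)ᵀ * b s))) 0 S s := by
    have := (hasDeriv_trace (hdel.mul hdel)).const_mul K
    simpa using this
  have hR : HasDerivWithinAt (fun t =>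
      logSq (b t) - logSq (b s) - trace (H * ((b t)ᵀ * b t - (b s)ᵀ * b s))) 0 S s := by
    rw [hasDerivWithinAt_iff_isLittleO] at hE ⊢
    refine Asymptotics.IsBigO.trans_isLittleO ?_ hE
    refine Asymptotics.IsBigO.of_bound 1 ?_
    filter_upwards [hest] with t ht
    simp only [sub_self, trace_zero, smul_zero, sub_zero, one_mul, Real.norm_eq_abs,
      mul_zero]
    exact ht.trans (le_abs_self _)
  have hlin : HasDerivWithinAt (fun t => trace (H * ((b t)ᵀ * b t - (b s)ᵀ * b s)))
      (trace (H * (b'ᵀ * b s + (b s)ᵀ * b'))) S s := by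
    exact hasDeriv_trace (hdel.const_mul H)
  have := (hR.add hlin).add_const (logSq (b s))
  rw [zero_add] at this
  refine this.congr_of_eventuallyEq (Eventually.of_forall fun t => ?_) ?_ <;> simp
end

/-- Chebyshev's inequality for the exponentially tilted weights `w e^θ`. -/
lemma tilt {ι : Type*} [Fintype ι] (w θ : ι → ℝ) (hw : ∀ i, 0 ≤ w i) :
    (∑ i, w i * θ i) * (∑ i, w i * Real.exp (θ i)) ≤
      (∑ i, w i * Real.exp (θ i) * θ i) * ∑ i, w i := by
  have h : 0 ≤ ∑ i, ∑ j, w i * w j * ((Real.exp (θ i) - Real.exp (θ j)) * (θ i - θ j)) := by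
    refine Finset.sum_nonneg fun i _ => Finset.sum_nonneg fun j _ =>
      mul_nonneg (mul_nonneg (hw i) (hw j)) ?_
    rcases le_total (θ i) (θ j) with hij | hij
    · exact mul_nonneg_of_nonpos_of_nonpos (sub_nonpos.2 (Real.exp_le_exp.2 hij)) (sub_nonpos.2 hij)
    · exact mul_nonneg (sub_nonneg.2 (Real.exp_le_exp.2 hij)) (sub_nonneg.2 hij)
  have e : ∑ i, ∑ j, w i * w j * ((Real.exp (θ i) - Real.exp (θ j)) * (θ i - θ j)) =
      2 * ((∑ i, w i * Real.exp (θ i) * θ i) * ∑ i, w i) -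
      2 * ((∑ i, w i * θ i) * (∑ i, w i * Real.exp (θ i))) := by
    have e1 : ∀ i j, w i * w j * ((Real.exp (θ i) - Real.exp (θ j)) * (θ i - θ j)) =
        (w i * Real.exp (θ i) * θ i) * w j + w i * (w j * Real.exp (θ j) * θ j)
        - (w i * θ i) * (w j * Real.exp (θ j)) - (w i * Real.exp (θ i)) * (w j * θ j) := by
      intro i j; ring
    simp only [e1, Finset.sum_add_distrib, Finset.sum_sub_distrib, ← Finset.sum_mul_sum]
    ring
  linarith

/-! ### Monotonicity of the moment map -/

/-- The normalized moment map `m̃(μ)/⟨μ,μ⟩`. -/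
def nm (mt : Bil n → Matrix (Fin n) (Fin n) ℝ) (c : Bil n) : Matrix (Fin n) (Fin n) ℝ :=
  (innB c c)⁻¹ • mt c

lemma innB_orth {W : Matrix (Fin n) (Fin n) ℝ} (hW : W * Wᵀ = 1) (c e : Bil n) :
    innB (T W W Wᵀ c) (T W W Wᵀ e) = innB c e := by
  rw [innB_T, T_comp, transpose_transpose, hW, T_one]

lemma innB_actX_diagonal (l : Fin n → ℝ) (c : Bil n) :
    innB (actX (diagonal l) c) c = ∑ i, ∑ j, ∑ k, c i j k ^ 2 * (l k - l i - l j) := by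
  simp only [innB, dotProduct, actX_apply, diagonal_apply, ite_mul, zero_mul, Finset.sum_ite_eq,
    Finset.sum_ite_eq', Finset.mem_univ, if_true]
  refine Finset.sum_congr rfl fun i _ => Finset.sum_congr rfl fun j _ =>
    Finset.sum_congr rfl fun k _ => ?_
  ring

lemma T_diagonal (p q r : Fin n → ℝ) (c : Bil n) (i j k : Fin n) :
    T (diagonal p) (diagonal q) (diagonal r) c i j k = p i * q j * r k * c i j k := by
  simp only [T, Finset.sum_apply, Pi.smul_apply, smul_eq_mul, mulVec_diagonal, diagonal_apply,
    ite_mul, mul_ite, mul_zero, zero_mul, Finset.sum_ite_eq', Finset.mem_univ,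
    if_true, mul_assoc]

/-- In an orthonormal basis which diagonalizes the direction, the moment map is a sum of squared
structure coefficients with weights `lₖ − lᵢ − lⱼ`. -/
lemma trace_mt_conj {mt : Bil n → Matrix (Fin n) (Fin n) ℝ} (hmt : IsMoment mt)
    {W : Matrix (Fin n) (Fin n) ℝ} (hW : Wᵀ * W = 1) (hW' : W * Wᵀ = 1) (l : Fin n → ℝ) (c : Bil n) :
    trace (mt c * (W * diagonal l * Wᵀ)) =
      ∑ i, ∑ j, ∑ k, T W W Wᵀ c i j k ^ 2 * (l k - l i - l j) := by
  rw [(hmt c).2 _ (by simp [transpose_mul, Matrix.mul_assoc]), ← innB_orth hW', actX_T hW,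
    innB_actX_diagonal]

/-- Monotonicity of the moment map along geodesics of the symmetric space: with the singular value
decomposition `b = W √λ Uᵀ`, one has `⟨M(b·c), W log λ Wᵀ⟩ ≥ ⟨M(c), U log λ Uᵀ⟩`. -/
lemma moment_monotone {mt : Bil n → Matrix (Fin n) (Fin n) ℝ} (hmt : IsMoment mt)
    {U W : Matrix (Fin n) (Fin n) ℝ} (hU : Uᵀ * U = 1) (hU' : U * Uᵀ = 1)
    (hW : Wᵀ * W = 1) (hW' : W * Wᵀ = 1) {c χ : Bil n} (hc : c ≠ 0) (hχ0 : χ ≠ 0)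
    {l : Fin n → ℝ}
    (hcoef : ∀ i j k, T W W Wᵀ χ i j k ^ 2 = T U U Uᵀ c i j k ^ 2 * Real.exp (l k - l i - l j)) :
    trace (nm mt c * (U * diagonal l * Uᵀ)) ≤ trace (nm mt χ * (W * diagonal l * Wᵀ)) := by
  have hNc := innB_self_pos hc
  have hNχ := innB_self_pos hχ0
  rw [nm, nm, smul_mul, smul_mul, trace_smul, trace_smul, smul_eq_mul, smul_eq_mul,
    trace_mt_conj hmt hU hU', trace_mt_conj hmt hW hW', inv_mul_eq_div, inv_mul_eq_div,
    div_le_div_iff₀ hNc hNχ]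
  have h := tilt (ι := Fin n × Fin n × Fin n) (fun x => T U U Uᵀ c x.1 x.2.1 x.2.2 ^ 2)
    (fun x => l x.2.2 - l x.1 - l x.2.1) (fun x => sq_nonneg _)
  simp only [Fintype.sum_prod_type] at h
  simp only [← hcoef] at h
  rwa [← innB_self, ← innB_self, innB_orth hU', innB_orth hW'] at h

/-- The relation `b·c = χ`, written without inverses as `b c(x,y) = χ(bx, by)`. -/
def Rel (b : Matrix (Fin n) (Fin n) ℝ) (c χ : Bil n) : Prop := T 1 1 b c = T b b 1 χ

/-- Infinitesimal contraction of the moment-map flow with respect to the distance of the symmetric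
space. -/
lemma deriv_logSq_nonpos {mt : Bil n → Matrix (Fin n) (Fin n) ℝ} (hmt : IsMoment mt)
    {b e U : Matrix (Fin n) (Fin n) ℝ} (hbe : b * e = 1) (hU : Uᵀ * U = 1) (hU' : U * Uᵀ = 1)
    (hspec : bᵀ * b = U * diagonal (sqSing b) * Uᵀ) {c χ : Bil n} (hc : c ≠ 0) (hχ0 : χ ≠ 0)
    (hrel : Rel b c χ) {κ : ℝ} (hκ : 0 ≤ κ) {b' : Matrix (Fin n) (Fin n) ℝ}
    (hb' : b' = -κ • (nm mt χ * b - b * nm mt c)) :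
    trace (U * diagonal (fun i => 2 * Real.log (sqSing b i) / sqSing b i) * Uᵀ *
        (b'ᵀ * b + bᵀ * b')) ≤ 0 := by
  obtain ⟨hpos, -⟩ := sqSing_inv hbe
  set lam := sqSing b with hlam
  set l : Fin n → ℝ := fun i => Real.log (lam i) with hl
  set σ : Fin n → ℝ := fun i => √(lam i) with hσ
  have hσpos : ∀ i, 0 < σ i := fun i => Real.sqrt_pos.2 (hpos i)
  have hσsq : ∀ i, σ i * σ i = lam i := fun i => Real.mul_self_sqrt (hpos i).le
  -- the left factor of the singular value decomposition `b = W √λ Uᵀ`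
  set W := b * U * diagonal (fun i => (σ i)⁻¹) with hWdef
  have hσi : diagonal (fun i => (σ i)⁻¹) * diagonal σ = 1 := by
    rw [diagonal_mul_diagonal, ← diagonal_one]
    congr 1; funext i; exact inv_mul_cancel₀ (hσpos i).ne'
  have hW : Wᵀ * W = 1 := by
    have : Wᵀ * W = diagonal (fun i => (σ i)⁻¹) * (Uᵀ * (bᵀ * b) * U) *
        diagonal (fun i => (σ i)⁻¹) := by
      simp only [hWdef, transpose_mul, diagonal_transpose, Matrix.mul_assoc]
    rw [this, hspec]
    have h2 : Uᵀ * (U * diagonal lam * Uᵀ) * U = diagonal lam := by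
      simp only [Matrix.mul_assoc]
      rw [hU, Matrix.mul_one, ← Matrix.mul_assoc, hU, Matrix.one_mul]
    rw [h2, diagonal_mul_diagonal, diagonal_mul_diagonal, ← diagonal_one]
    congr 1; funext i
    rw [← hσsq]
    have := (hσpos i).ne'
    field_simp
  have hW' : W * Wᵀ = 1 := mul_eq_one_comm.1 hW
  have hbW : b = W * diagonal σ * Uᵀ := by
    rw [hWdef, Matrix.mul_assoc (b * U), hσi, Matrix.mul_one, Matrix.mul_assoc, hU', Matrix.mul_one]
  have hWb : Wᵀ * b = diagonal σ * Uᵀ := by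
    conv_lhs => rw [hbW]
    rw [Matrix.mul_assoc W, ← Matrix.mul_assoc, hW, Matrix.one_mul]
  have htilde : T W W Wᵀ χ = T (diagonal (fun i => (σ i)⁻¹)) (diagonal (fun i => (σ i)⁻¹))
      (diagonal σ) (T U U Uᵀ c) := by
    have h := congrArg (T (U * diagonal (fun i => (σ i)⁻¹)) (U * diagonal (fun i => (σ i)⁻¹)) Wᵀ) hrel
    rw [T_comp, T_comp, Matrix.mul_one, Matrix.one_mul, ← Matrix.mul_assoc, hWb] at h
    rw [T_comp]
    exact h.symm
  have hcoef : ∀ i j k,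
      T W W Wᵀ χ i j k ^ 2 = T U U Uᵀ c i j k ^ 2 * Real.exp (l k - l i - l j) := by
    intro i j k
    rw [htilde, T_diagonal, Real.exp_sub, Real.exp_sub, hl, Real.exp_log (hpos k),
      Real.exp_log (hpos i), Real.exp_log (hpos j), ← hσsq, ← hσsq, ← hσsq]
    have := (hσpos i).ne'
    have := (hσpos j).ne'
    field_simp
  have hmono := moment_monotone hmt hU hU' hW hW' hc hχ0 hcoef
  set H := U * diagonal (fun i => 2 * l i / lam i) * Uᵀ with hH
  have hHt : Hᵀ = H := by simp [hH, transpose_mul, Matrix.mul_assoc]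
  have hHbb : H * (bᵀ * b) = (2 : ℝ) • (U * diagonal l * Uᵀ) := by
    rw [hspec, hH]
    have : U * diagonal (fun i => 2 * l i / lam i) * Uᵀ * (U * diagonal lam * Uᵀ) =
        U * (diagonal (fun i => 2 * l i / lam i) * (Uᵀ * U) * diagonal lam) * Uᵀ := by
      simp only [Matrix.mul_assoc]
    rw [this, hU, Matrix.mul_one, diagonal_mul_diagonal]
    have h2 : (fun i => 2 * l i / lam i * lam i) = (2 : ℝ) • l := by
      funext i
      have := (hpos i).ne'
      simp only [Pi.smul_apply, smul_eq_mul]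
      field_simp
    rw [h2, diagonal_smul, Matrix.mul_smul, smul_mul]
  have hbHb : b * H * bᵀ = (2 : ℝ) • (W * diagonal l * Wᵀ) := by
    have : b * H * bᵀ = W * (diagonal σ * (Uᵀ * U) * diagonal (fun i => 2 * l i / lam i) *
        (Uᵀ * U) * diagonal σ) * Wᵀ := by
      conv_lhs => rw [hbW]
      simp only [hH, transpose_mul, transpose_transpose, diagonal_transpose, Matrix.mul_assoc]
    rw [this, hU, Matrix.mul_one, Matrix.mul_one, diagonal_mul_diagonal, diagonal_mul_diagonal]
    have h2 : (fun i => σ i * (2 * l i / lam i) * σ i) = (2 : ℝ) • l := by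
      funext i
      have := (hσpos i).ne'
      simp only [Pi.smul_apply, smul_eq_mul]
      rw [← hσsq]
      field_simp
    rw [h2, diagonal_smul, Matrix.mul_smul, smul_mul]
  have hsym : trace (H * (b'ᵀ * b)) = trace (H * (bᵀ * b')) := by
    rw [← trace_transpose, transpose_mul, transpose_mul, transpose_transpose, hHt, trace_mul_comm]
  have hmain : trace (H * (bᵀ * b')) = -κ * (2 * trace (nm mt χ * (W * diagonal l * Wᵀ)) -
      2 * trace (nm mt c * (U * diagonal l * Uᵀ))) := by
    rw [hb', Matrix.mul_smul, Matrix.mul_smul, trace_smul, smul_eq_mul, Matrix.mul_sub,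
      Matrix.mul_sub, trace_sub]
    congr 2
    · have : trace (H * (bᵀ * (nm mt χ * b))) = trace (nm mt χ * (b * H * bᵀ)) := by
        rw [← Matrix.mul_assoc, ← Matrix.mul_assoc, trace_mul_comm, ← Matrix.mul_assoc,
          ← Matrix.mul_assoc, trace_mul_comm]
      rw [this, hbHb, Matrix.mul_smul, trace_smul, smul_eq_mul]
    · rw [← Matrix.mul_assoc bᵀ, ← Matrix.mul_assoc H, hHbb, smul_mul, trace_smul, smul_eq_mul,
        trace_mul_comm]
  rw [Matrix.mul_add, trace_add, hsym, hmain]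
  nlinarith

/-! ### Linear differential equations -/

/-- Short-time existence for the linear equation `U' = A U`, `U(a) = 1`, in a Banach algebra, with
the additional information that the solution stays invertible. -/
lemma exists_linear_flow {𝔸 : Type*} [NormedRing 𝔸] [NormedAlgebra ℝ 𝔸] [CompleteSpace 𝔸]
    {A : ℝ → 𝔸} {a δ C : ℝ} (hδ : 0 ≤ δ) (hA : ContinuousOn A (Set.Icc a (a + δ)))
    (hC0 : 0 ≤ C) (hC : ∀ t ∈ Set.Icc a (a + δ), ‖A t‖ ≤ C)
    (hCδ : C * (‖(1 : 𝔸)‖ + 1 / 2) * δ ≤ 1 / 2) :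
    ∃ U : ℝ → 𝔸, U a = 1 ∧ ∀ t ∈ Set.Icc a (a + δ),
      HasDerivWithinAt U (A t * U t) (Set.Icc a (a + δ)) t ∧ IsUnit (U t) := by
  have ha : a ∈ Set.Icc a (a + δ) := ⟨le_rfl, by linarith⟩
  lift C to NNReal using hC0
  obtain ⟨L, hL⟩ : ∃ L : NNReal, (L : ℝ) = C * (‖(1 : 𝔸)‖ + 1 / 2) := ⟨⟨_, by positivity⟩, rfl⟩
  have hf : IsPicardLindelof (fun t x => A t * x) (⟨a, ha⟩ : Set.Icc a (a + δ)) (1 : 𝔸) (1 / 2) 0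
      L C := by
    constructor
    · intro t ht
      refine LipschitzWith.lipschitzOnWith (LipschitzWith.of_dist_le_mul fun x y => ?_)
      rw [dist_eq_norm, dist_eq_norm, ← mul_sub]
      exact (norm_mul_le _ _).trans (mul_le_mul_of_nonneg_right (hC t ht) (norm_nonneg _))
    · intro x _
      exact hA.mul continuousOn_const
    · intro t ht x hx
      rw [mem_closedBall_iff_norm] at hx
      have h1 : ‖x‖ ≤ ‖(1 : 𝔸)‖ + 1 / 2 := by
        have := norm_add_le (1 : 𝔸) (x - 1)
        rw [add_sub_cancel] at this
        push_cast at hx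
        linarith
      rw [hL]
      exact (norm_mul_le _ _).trans (mul_le_mul (hC t ht) h1 (norm_nonneg _) C.2)
    · have : max (a + δ - a) (a - a) = δ := by simp [hδ]
      rw [hL, this]
      push_cast
      linarith
  have hx : (1 : 𝔸) ∈ Metric.closedBall (1 : 𝔸) ((0 : NNReal) : ℝ) := by simp
  obtain ⟨α, hα⟩ := ODE.FunSpace.exists_isFixedPt_next hf hx
  have hval := ODE.FunSpace.compProj_val (α := α) (t := (⟨a, ha⟩ : Set.Icc a (a + δ)))
  refine ⟨α.compProj, ?_, fun t ht => ⟨?_, ?_⟩⟩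
  · refine hval.trans ?_
    rw [← hα, ODE.FunSpace.next_apply₀]
  · apply ODE.hasDerivWithinAt_picard_Icc ha hf.continuousOn_uncurry
      α.continuous_compProj.continuousOn (fun _ ht' => α.compProj_mem_closedBall hf.mul_max_le)
      1 ht |>.congr_of_mem _ ht
    intro t' ht'
    nth_rw 1 [← hα]
    rw [ODE.FunSpace.compProj_of_mem ht', ODE.FunSpace.next_apply]
  · have h := α.compProj_mem_closedBall (t := t) hf.mul_max_le
    rw [mem_closedBall_iff_norm] at h
    have h2 : ‖1 - α.compProj t‖ < 1 := by
      rw [norm_sub_rev]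
      push_cast at h
      linarith
    simpa using isUnit_one_sub_of_norm_lt_one h2

section
attribute [local instance] Matrix.linftyOpNormedRing Matrix.linftyOpNormedAlgebra

lemma hasDeriv_T {p q r : ℝ → Matrix (Fin n) (Fin n) ℝ} {p' q' r' : Matrix (Fin n) (Fin n) ℝ}
    {c : ℝ → Bil n} {c' : Bil n} {S : Set ℝ} {s : ℝ} (hp : HasDerivWithinAt p p' S s)
    (hq : HasDerivWithinAt q q' S s) (hr : HasDerivWithinAt r r' S s)
    (hc : HasDerivWithinAt c c' S s) :
    HasDerivWithinAt (fun t => T (p t) (q t) (r t) (c t))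
      (T p' (q s) (r s) (c s) + T (p s) q' (r s) (c s) + T (p s) (q s) r' (c s) +
        T (p s) (q s) (r s) c') S s := by
  rw [hasDeriv_entry] at hp hq hr
  have hc' : ∀ i j k, HasDerivWithinAt (fun t => c t i j k) (c' i j k) S s := fun i j k =>
    hasDerivWithinAt_pi.1 (hasDerivWithinAt_pi.1 (hasDerivWithinAt_pi.1 hc i) j) k
  refine hasDerivWithinAt_pi.2 fun i => hasDerivWithinAt_pi.2 fun j =>
    hasDerivWithinAt_pi.2 fun a => ?_
  have h := HasDerivWithinAt.fun_sum (u := Finset.univ) fun k _ =>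
    HasDerivWithinAt.fun_sum (u := Finset.univ) fun l _ =>
      ((hp k i).fun_mul (hq l j)).fun_mul (HasDerivWithinAt.fun_sum (u := Finset.univ)
        fun m _ => (hr a m).fun_mul (hc' k l m))
  convert h using 1
  · funext t
    simp [T, mulVec, dotProduct]
  · simp only [T, Pi.add_apply, Finset.sum_apply, Pi.smul_apply, smul_eq_mul, mulVec, dotProduct,
      ← Finset.sum_add_distrib]
    refine Finset.sum_congr rfl fun k _ => Finset.sum_congr rfl fun l _ => ?_
    rw [Finset.sum_add_distrib]
    ring

/-- The relation `Rel b c χ` propagates along the flow: the defect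
`T 1 1 b c - T b b 1 χ` satisfies a homogeneous linear differential equation. -/
lemma rel_of_ode {P b : ℝ → Matrix (Fin n) (Fin n) ℝ} {β : Matrix (Fin n) (Fin n) ℝ}
    {c : Bil n} {χ : ℝ → Bil n} {a a' κ f C : ℝ} (hcrit : actX β c = f • c)
    (hC : ∀ t ∈ Set.Icc a a', ‖P t‖ ≤ C)
    (hb : ∀ t ∈ Set.Icc a a', HasDerivWithinAt b (-κ • (P t * b t - b t * β)) (Set.Icc a a') t)
    (hχ : ∀ t ∈ Set.Icc a a',
      HasDerivWithinAt χ (-κ • (actX (P t) (χ t) - f • χ t)) (Set.Icc a a') t)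
    (h0 : Rel (b a) c (χ a)) : ∀ t ∈ Set.Icc a a', Rel (b t) c (χ t) := by
  set Z : ℝ → Bil n := fun t => T 1 1 (b t) c - T (b t) (b t) 1 (χ t) with hZ
  set L : Bil n →ₗ[ℝ] Bil n :=
    { toFun := fun z => T β 1 1 z + T 1 β 1 z + f • z
      map_add' := fun x y => by simp only [T_addc, smul_add]; abel
      map_smul' := fun s x => by
        simp only [T_smulc, smul_add, RingHom.id_apply, smul_comm f s] } with hL
  have hLapp : ∀ z, L z = T β 1 1 z + T 1 β 1 z + f • z := fun z => rfl
  have hder : ∀ t ∈ Set.Icc a a',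
      HasDerivWithinAt Z (-κ • (T 1 1 (P t) (Z t) - L (Z t))) (Set.Icc a a') t := by
    intro t ht
    have h1 : ∀ (X : Matrix (Fin n) (Fin n) ℝ), HasDerivWithinAt
        (fun _ : ℝ => X) (0 : Matrix (Fin n) (Fin n) ℝ) (Set.Icc a a') t :=
      fun X => hasDerivWithinAt_const ..
    have h2 := (hasDeriv_T (h1 1) (h1 1) (hb t ht) (hasDerivWithinAt_const t _ c)).sub
      (hasDeriv_T (hb t ht) (hb t ht) (h1 1) (hχ t ht))
    refine h2.congr_deriv ?_
    have z1 : ∀ q r (c : Bil n), T 0 q r c = 0 := fun q r c => by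
      simpa using T_smul₁ 0 0 q r c
    have z2 : ∀ q r (c : Bil n), T q 0 r c = 0 := fun q r c => by
      simpa using T_smul₂ 0 q 0 r c
    have z3 : ∀ q r (c : Bil n), T q r 0 c = 0 := fun q r c => by
      simpa using T_smul₃ 0 q r 0 c
    have z4 : ∀ p q r, T p q r (0 : Bil n) = 0 := fun p q r => by
      simpa using T_smulc 0 p q r (0 : Bil n)
    have hs1 : ∀ p p' q r (c : Bil n), T (p - p') q r c = T p q r c - T p' q r c := by
      intro p p' q r c
      rw [eq_sub_iff_add_eq, ← T_add₁, sub_add_cancel]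
    have hs2 : ∀ p p' q r (c : Bil n), T q (p - p') r c = T q p r c - T q p' r c := by
      intro p p' q r c
      rw [eq_sub_iff_add_eq, ← T_add₂, sub_add_cancel]
    have hs3 : ∀ p p' q r (c : Bil n), T q r (p - p') c = T q r p c - T q r p' c := by
      intro p p' q r c
      rw [eq_sub_iff_add_eq, ← T_add₃, sub_add_cancel]
    have hβ : T 1 1 (b t * β) c = f • T 1 1 (b t) c + T β 1 (b t) c + T 1 β (b t) c := by
      rw [actX_eq] at hcrit
      have h3 : T 1 1 β c = f • c + T β 1 1 c + T 1 β 1 c := by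
        rw [← hcrit]; abel
      have h4 := congrArg (T 1 1 (b t)) h3
      simpa only [T_comp, T_addc, T_smulc, Matrix.mul_one, Matrix.one_mul] using h4
    simp only [hLapp, hZ, z1, z2, z3, z4, T_smul₁, T_smul₂, T_smul₃, T_smulc, hs1, hs2, hs3, hβ,
      actX_eq, T_subc, T_comp, Matrix.mul_one, Matrix.one_mul, zero_add, add_zero, ← smul_add,
      ← smul_sub]
    congr 1
    simp only [smul_sub]
    abel
  have hbound : ∀ t ∈ Set.Icc a a', ‖-κ • (T 1 1 (P t) (Z t) - L (Z t))‖ ≤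
      (|κ| * (C + ‖LinearMap.toContinuousLinearMap L‖)) * ‖Z t‖ := by
    intro t ht
    rw [norm_smul, norm_neg, Real.norm_eq_abs, mul_assoc]
    refine mul_le_mul_of_nonneg_left ?_ (abs_nonneg _)
    rw [add_mul]
    refine (norm_sub_le _ _).trans (add_le_add ?_ ?_)
    · have hTP : T 1 1 (P t) (Z t) = fun i j => P t *ᵥ Z t i j := by
        funext i j
        simp [T, Matrix.one_apply, ite_smul]
      have hC0 : 0 ≤ C := (norm_nonneg _).trans (hC t ht)
      rw [hTP]
      refine (pi_norm_le_iff_of_nonneg (by positivity)).2 fun i =>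
        (pi_norm_le_iff_of_nonneg (by positivity)).2 fun j => ?_
      refine (Matrix.linfty_opNorm_mulVec _ _).trans (mul_le_mul (hC t ht) ?_ (norm_nonneg _) hC0)
      exact (norm_le_pi_norm (Z t i) j).trans (norm_le_pi_norm (Z t) i)
    · exact (LinearMap.toContinuousLinearMap L).le_opNorm (Z t)
  have hzero := eq_zero_of_abs_deriv_le_mul_abs_self_of_eq_zero_right (f := Z)
    (fun t ht => (hder t ht).continuousWithinAt)
    (fun t ht => ((hder t ⟨ht.1, ht.2.le⟩).mono_of_mem_nhdsWithin
      (Icc_mem_nhdsGE_of_mem ht))) (sub_eq_zero.2 h0)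
    (fun t ht => hbound t ⟨ht.1, ht.2.le⟩)
  exact fun t ht => sub_eq_zero.1 (hzero t ht)

end

/-! ### The flow on `GL(n,ℝ)` -/

lemma nm_smul {mt : Bil n → Matrix (Fin n) (Fin n) ℝ} (hmt : IsMoment mt) {s : ℝ} (hs : s ≠ 0)
    (c : Bil n) : nm mt (s • c) = nm mt c := by
  simp only [nm, mt_smul hmt, innB_smul_left, innB_smul_right, smul_smul]
  congr 1
  field_simp

section
attribute [local instance] Matrix.linftyOpNormedRing Matrix.linftyOpNormedAlgebra

lemma continuous_mt {mt : Bil n → Matrix (Fin n) (Fin n) ℝ} (hmt : IsMoment mt) :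
    Continuous mt :=
  continuous_pi fun i => continuous_pi fun j => (differentiable_mt hmt i j).continuous

lemma continuousOn_nm {mt : Bil n → Matrix (Fin n) (Fin n) ℝ} (hmt : IsMoment mt)
    {χ : ℝ → Bil n} {S : Set ℝ} (hχ : ContinuousOn χ S) (h0 : ∀ t ∈ S, χ t ≠ 0) :
    ContinuousOn (fun t => nm mt (χ t)) S := by
  have h1 : ContinuousOn (fun t => innB (χ t) (χ t)) S := continuous_innB.comp_continuousOn hχ
  exact (h1.inv₀ fun t ht => (innB_self_pos (h0 t ht)).ne').smul
    ((continuous_mt hmt).comp_continuousOn hχ)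

lemma norm_sq_le_innB (c : Bil n) : ‖c‖ ^ 2 ≤ innB c c := by
  have h : ‖c‖ ≤ √(innB c c) := by
    refine (pi_norm_le_iff_of_nonneg (Real.sqrt_nonneg _)).2 fun i =>
      (pi_norm_le_iff_of_nonneg (Real.sqrt_nonneg _)).2 fun j =>
      (pi_norm_le_iff_of_nonneg (Real.sqrt_nonneg _)).2 fun k => ?_
    refine Real.le_sqrt_of_sq_le ?_
    rw [Real.norm_eq_abs, sq_abs, innB_self]
    refine le_trans ?_ (Finset.single_le_sum (fun i _ => Finset.sum_nonneg fun j _ =>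
      Finset.sum_nonneg fun k _ => sq_nonneg _) (Finset.mem_univ i))
    refine le_trans ?_ (Finset.single_le_sum (fun j _ =>
      Finset.sum_nonneg fun k _ => sq_nonneg _) (Finset.mem_univ j))
    exact Finset.single_le_sum (f := fun k => c i j k ^ 2) (fun k _ => sq_nonneg _)
      (Finset.mem_univ k)
  calc ‖c‖ ^ 2 ≤ √(innB c c) ^ 2 := by gcongr
    _ = innB c c := Real.sq_sqrt (innB_self_nonneg c)

/-- The normalized moment map is bounded, being a continuous function on the unit sphere. -/
lemma exists_nm_bound {mt : Bil n → Matrix (Fin n) (Fin n) ℝ} (hmt : IsMoment mt) :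
    ∃ C : ℝ, 0 ≤ C ∧ ∀ c : Bil n, c ≠ 0 → ‖nm mt c‖ ≤ C := by
  have hK : IsCompact {c : Bil n | innB c c = 1} := by
    refine Metric.isCompact_of_isClosed_isBounded (isClosed_eq continuous_innB continuous_const) ?_
    refine (Metric.isBounded_closedBall (x := (0 : Bil n)) (r := 1)).subset fun c hc => ?_
    rw [mem_closedBall_zero_iff]
    have h := norm_sq_le_innB c
    have hc' : innB c c = 1 := hc
    rw [hc'] at h
    nlinarith [norm_nonneg c]
  obtain ⟨C, hC⟩ := hK.exists_bound_of_continuousOn (continuous_mt hmt).continuousOn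
  refine ⟨max C 0, le_max_right _ _, fun c hc => ?_⟩
  have hpos := innB_self_pos hc
  have hs : (√(innB c c))⁻¹ ≠ 0 := inv_ne_zero (Real.sqrt_pos.2 hpos).ne'
  have h1 : innB ((√(innB c c))⁻¹ • c) ((√(innB c c))⁻¹ • c) = 1 := by
    rw [innB_smul_left, innB_smul_right, ← mul_assoc, ← mul_inv, Real.mul_self_sqrt hpos.le,
      inv_mul_cancel₀ hpos.ne']
  rw [← nm_smul hmt hs, nm, h1, inv_one, one_smul]
  exact (hC _ h1).trans (le_max_left _ _)

/-- One time step: over a short interval the trajectory is dragged along by invertible matrices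
`b(t)`, and `logSq (b t)` does not increase. -/
lemma flow_step {mt : Bil n → Matrix (Fin n) (Fin n) ℝ} (hmt : IsMoment mt) {c : Bil n}
    (hc : c ≠ 0) {f κ C a δ : ℝ} (hcrit : actX (nm mt c) c = f • c) (hκ : 0 ≤ κ) (hC0 : 0 ≤ C)
    (hC : ∀ x : Bil n, x ≠ 0 → ‖nm mt x‖ ≤ C) (hδ : 0 ≤ δ)
    (hCδ : κ * C * (‖(1 : Matrix (Fin n) (Fin n) ℝ)‖ + 1 / 2) * δ ≤ 1 / 2) {χ : ℝ → Bil n}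
    (hχ0 : ∀ t ∈ Set.Icc a (a + δ), χ t ≠ 0)
    (hχ : ∀ t ∈ Set.Icc a (a + δ), HasDerivWithinAt χ
      (-κ • (actX (nm mt (χ t)) (χ t) - f • χ t)) (Set.Icc a (a + δ)) t)
    {b₀ e₀ : Matrix (Fin n) (Fin n) ℝ} (hbe : b₀ * e₀ = 1) (hrel : Rel b₀ c (χ a)) :
    ∀ t ∈ Set.Icc a (a + δ), ∃ b e : Matrix (Fin n) (Fin n) ℝ,
      b * e = 1 ∧ Rel b c (χ t) ∧ logSq b ≤ logSq b₀ := by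
  set β := nm mt c with hβ
  have hcont := continuousOn_nm hmt (fun t ht => (hχ t ht).continuousWithinAt) hχ0
  obtain ⟨U, hUa, hU⟩ := exists_linear_flow (A := fun t => -κ • nm mt (χ t)) hδ
    (hcont.const_smul (-κ)) (mul_nonneg hκ hC0) (fun t ht => by
      rw [norm_smul, norm_neg, Real.norm_of_nonneg hκ]
      exact mul_le_mul_of_nonneg_left (hC _ (hχ0 t ht)) hκ) hCδ
  -- the term `κ b β` on the right is integrated explicitly by an exponential
  set b : ℝ → Matrix (Fin n) (Fin n) ℝ :=
    fun t => U t * (b₀ * NormedSpace.exp ((κ * (t - a)) • β)) with hb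
  have hba : b a = b₀ := by simp [hb, hUa]
  have hb₀ : IsUnit b₀ := IsUnit.of_mul_eq_one _ hbe
  have hbu : ∀ t ∈ Set.Icc a (a + δ), IsUnit (b t) := fun t ht =>
    (hU t ht).2.mul (hb₀.mul (NormedSpace.isUnit_exp _))
  have hbd : ∀ t ∈ Set.Icc a (a + δ), HasDerivWithinAt b
      (-κ • (nm mt (χ t) * b t - b t * β)) (Set.Icc a (a + δ)) t := by
    intro t ht
    have h1 : HasDerivAt (fun t => NormedSpace.exp ((κ * (t - a)) • β))
        (κ • (NormedSpace.exp ((κ * (t - a)) • β) * β)) t := by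
      have h2 : HasDerivAt (fun t => κ * (t - a)) κ t := by
        simpa using ((hasDerivAt_id t).sub_const a).const_mul κ
      exact (hasDerivAt_exp_smul_const (𝕂 := ℝ) β (κ * (t - a))).scomp t h2
    refine ((hU t ht).1.mul (h1.hasDerivWithinAt.const_mul b₀)).congr_deriv ?_
    simp only [hb, smul_sub, neg_smul, Matrix.mul_assoc, Matrix.mul_smul, Matrix.neg_mul,
      Matrix.smul_mul]
    abel
  have hrelt := rel_of_ode hcrit (fun t ht => hC _ (hχ0 t ht)) hbd hχ (by rwa [hba])
  have hinv : ∀ t ∈ Set.Icc a (a + δ), ∃ e, b t * e = 1 := fun t ht =>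
    (hbu t ht).exists_right_inv
  have hlog : ∀ t ∈ Set.Icc a (a + δ), ∃ d ≤ 0,
      HasDerivWithinAt (fun t => logSq (b t)) d (Set.Icc a (a + δ)) t := by
    intro t ht
    obtain ⟨V, hV, hV', hspec⟩ := exists_spectral (b t)
    obtain ⟨e, he⟩ := hinv t ht
    exact ⟨_, deriv_logSq_nonpos hmt he hV hV' hspec hc (hχ0 t ht) (hrelt t ht) hκ rfl,
      hasDeriv_logSq ht (hbd t ht) hbu hV hV' hspec⟩
  choose! d hd hlogd using hlog
  have hanti : AntitoneOn (fun t => logSq (b t)) (Set.Icc a (a + δ)) :=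
    antitoneOn_of_hasDerivWithinAt_nonpos (convex_Icc _ _)
      (fun t ht => (hlogd t ht).continuousWithinAt)
      (fun t ht => (hlogd t (interior_subset ht)).mono interior_subset)
      (fun t ht => hd t (interior_subset ht))
  intro t ht
  obtain ⟨e, he⟩ := hinv t ht
  refine ⟨b t, e, he, hrelt t ht, ?_⟩
  have := hanti ⟨le_rfl, ht.1.trans ht.2⟩ ht ht.1
  simpa only [hba] using this

/-- A trajectory which starts in the orbit of a critical point is dragged along by matrices whose
`logSq` stays bounded. -/
lemma flow_bounded {mt : Bil n → Matrix (Fin n) (Fin n) ℝ} (hmt : IsMoment mt) {c : Bil n}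
    (hc : c ≠ 0) {f κ : ℝ} (hcrit : actX (nm mt c) c = f • c) (hκ : 0 ≤ κ) {χ : ℝ → Bil n}
    (hχ0 : ∀ t, 0 ≤ t → χ t ≠ 0)
    (hχ : ∀ t, 0 ≤ t → HasDerivWithinAt χ
      (-κ • (actX (nm mt (χ t)) (χ t) - f • χ t)) (Set.Ici 0) t)
    {b₀ e₀ : Matrix (Fin n) (Fin n) ℝ} (hbe : b₀ * e₀ = 1) (hrel : Rel b₀ c (χ 0)) :
    ∀ t, 0 ≤ t → ∃ b e : Matrix (Fin n) (Fin n) ℝ,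
      b * e = 1 ∧ Rel b c (χ t) ∧ logSq b ≤ logSq b₀ := by
  obtain ⟨C, hC0, hC⟩ := exists_nm_bound hmt
  set K := κ * C * (‖(1 : Matrix (Fin n) (Fin n) ℝ)‖ + 1 / 2)
  have hK : 0 ≤ K := by positivity
  -- the bound on `M` is global, so one step size serves for all times
  set δ : ℝ := 1 / (2 * (K + 1)) with hδdef
  have hδ : 0 < δ := by positivity
  have hKδ : K * δ ≤ 1 / 2 := by
    rw [hδdef, mul_one_div, div_le_div_iff₀ (by positivity) (by norm_num)]
    linarith
  have key : ∀ k : ℕ, ∀ t ∈ Set.Icc ((k : ℝ) * δ) (k * δ + δ),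
      ∃ b e : Matrix (Fin n) (Fin n) ℝ, b * e = 1 ∧ Rel b c (χ t) ∧ logSq b ≤ logSq b₀ := by
    have step : ∀ k : ℕ, ∀ b₁ e₁ : Matrix (Fin n) (Fin n) ℝ, b₁ * e₁ = 1 →
        Rel b₁ c (χ (k * δ)) → logSq b₁ ≤ logSq b₀ → ∀ t ∈ Set.Icc ((k : ℝ) * δ) (k * δ + δ),
        ∃ b e : Matrix (Fin n) (Fin n) ℝ, b * e = 1 ∧ Rel b c (χ t) ∧ logSq b ≤ logSq b₀ := by
      intro k b₁ e₁ hbe₁ hrel₁ hlog₁ t ht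
      have hk : 0 ≤ (k : ℝ) * δ := by positivity
      obtain ⟨b, e, h1, h2, h3⟩ := flow_step hmt hc hcrit hκ hC0 hC hδ.le hKδ
        (fun t ht => hχ0 t (hk.trans ht.1))
        (fun t ht => (hχ t (hk.trans ht.1)).mono fun s hs => hk.trans hs.1) hbe₁ hrel₁ t ht
      exact ⟨b, e, h1, h2, h3.trans hlog₁⟩
    intro k
    induction k with
    | zero => exact step 0 b₀ e₀ hbe (by simpa using hrel) le_rfl
    | succ k ih =>
      obtain ⟨b, e, h1, h2, h3⟩ := ih (k * δ + δ) ⟨by linarith, le_rfl⟩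
      refine step (k + 1) b e h1 ?_ h3
      have : ((k + 1 : ℕ) : ℝ) * δ = k * δ + δ := by push_cast; ring
      rwa [this]
  intro t ht
  refine key ⌊t / δ⌋₊ t ⟨?_, ?_⟩
  · have := Nat.floor_le (div_nonneg ht hδ.le)
    rwa [le_div_iff₀ hδ] at this
  · have := (Nat.lt_floor_add_one (t / δ)).le
    rw [div_le_iff₀ hδ] at this
    linarith

end

/-! ### Passage to the limit -/

/-- `F` is homogeneous of degree `0`, so its gradient is tangent to spheres. -/
lemma innB_gF {mt : Bil n → Matrix (Fin n) (Fin n) ℝ} (hmt : IsMoment mt) {F : Bil n → ℝ}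
    (hF : ∀ c : Bil n, F c = trace (mt c * mt c) / (innB c c) ^ 2) {gF : Bil n → Bil n}
    (hgF : ∀ c e : Bil n, innB (gF c) e = fderiv ℝ F c e) {c : Bil n} (hc : c ≠ 0) :
    innB (gF c) c = 0 := by
  have hpos := (innB_self_pos hc).ne'
  rw [gradient_formula hmt hF hgF hc, innB_smul_left, innB_sub_left, innB_smul_left,
    actX_smul_left, innB_smul_left, ← (hmt c).2 _ (hmt c).1, hF]
  field_simp
  ring

/-- The gradient flow of `F` preserves the norm. -/
lemma innB_flow {mt : Bil n → Matrix (Fin n) (Fin n) ℝ} (hmt : IsMoment mt) {F : Bil n → ℝ}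
    (hF : ∀ c : Bil n, F c = trace (mt c * mt c) / (innB c c) ^ 2) {gF : Bil n → Bil n}
    (hgF : ∀ c e : Bil n, innB (gF c) e = fderiv ℝ F c e) {φ : ℝ → Bil n}
    (hφnz : ∀ t, 0 ≤ t → φ t ≠ 0)
    (hode : ∀ t, 0 ≤ t → HasDerivWithinAt φ (-(gF (φ t))) (Set.Ici (0 : ℝ)) t) :
    ∀ t, 0 ≤ t → innB (φ t) (φ t) = innB (φ 0) (φ 0) := by
  have hφcont : ContinuousOn φ (Set.Ici 0) := fun t ht => (hode t ht).continuousWithinAt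
  intro t ht
  have hd : ∀ s ∈ Set.Ico 0 t,
      HasDerivWithinAt (fun s => innB (φ s) (φ s)) 0 (Set.Ici s) s := by
    intro s hs
    have h1 := (hode s hs.1).mono (Set.Ici_subset_Ici.2 hs.1)
    have h2 : ∀ i j k, HasDerivWithinAt (fun t => φ t i j k) ((-(gF (φ s))) i j k)
        (Set.Ici s) s := fun i j k =>
      hasDerivWithinAt_pi.1 (hasDerivWithinAt_pi.1 (hasDerivWithinAt_pi.1 h1 i) j) k
    have h3 := HasDerivWithinAt.fun_sum (u := Finset.univ) fun i _ =>
      HasDerivWithinAt.fun_sum (u := Finset.univ) fun j _ =>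
        HasDerivWithinAt.fun_sum (u := Finset.univ) fun k _ => (h2 i j k).fun_mul (h2 i j k)
    refine h3.congr_deriv ?_
    have h4 := innB_gF hmt hF hgF (hφnz s hs.1)
    calc _ = -2 * innB (gF (φ s)) (φ s) := by
          simp only [innB, dotProduct, Finset.mul_sum, Pi.neg_apply]
          refine Finset.sum_congr rfl fun i _ => Finset.sum_congr rfl fun j _ =>
            Finset.sum_congr rfl fun k _ => ?_
          ring
      _ = 0 := by rw [h4, mul_zero]
  have := constant_of_has_deriv_right_zero (continuous_innB.comp_continuousOn
    (hφcont.mono Set.Icc_subset_Ici_self)) hd t ⟨ht, le_rfl⟩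
  exact this

lemma continuous_T (c : Bil n) :
    Continuous fun x : Matrix (Fin n) (Fin n) ℝ × Matrix (Fin n) (Fin n) ℝ =>
      T x.2 x.2 x.1 c := by
  refine continuous_pi fun i => continuous_pi fun j => ?_
  simp only [T]
  refine continuous_finsetSum _ fun k _ => continuous_finsetSum _ fun l _ => ?_
  exact ((continuous_snd.matrix_elem k i).mul (continuous_snd.matrix_elem l j)).smul
    (continuous_fst.matrix_mulVec continuous_const)

lemma sqSing_bound {b e : Matrix (Fin n) (Fin n) ℝ} (hbe : b * e = 1) {D : ℝ}
    (hD : logSq b ≤ D) (i : Fin n) :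
    sqSing b i ≤ Real.exp √D ∧ (sqSing b i)⁻¹ ≤ Real.exp √D := by
  have hpos := (sqSing_inv hbe).1 i
  have h1 : Real.log (sqSing b i) ^ 2 ≤ D :=
    (Finset.single_le_sum (f := fun i => Real.log (sqSing b i) ^ 2) (fun i _ => sq_nonneg _)
      (Finset.mem_univ i)).trans hD
  have h2 := abs_le.1 (Real.abs_le_sqrt h1)
  constructor
  · calc sqSing b i = Real.exp (Real.log (sqSing b i)) := (Real.exp_log hpos).symm
      _ ≤ _ := Real.exp_le_exp.2 h2.2
  · calc (sqSing b i)⁻¹ = Real.exp (-Real.log (sqSing b i)) := by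
          rw [Real.exp_neg, Real.exp_log hpos]
      _ ≤ _ := Real.exp_le_exp.2 (by linarith)

lemma entry_bound {b : Matrix (Fin n) (Fin n) ℝ} {E : ℝ} {w : Fin n → ℝ}
    (hs : ∑ i, w i = ∑ i, ∑ j, b i j ^ 2) (hw : ∀ i, w i ≤ E) (i j : Fin n) :
    |b i j| ≤ √(n * E) := by
  refine Real.abs_le_sqrt ?_
  calc b i j ^ 2 ≤ ∑ j, b i j ^ 2 :=
        Finset.single_le_sum (f := fun j => b i j ^ 2) (fun j _ => sq_nonneg _)
          (Finset.mem_univ j)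
    _ ≤ ∑ i, ∑ j, b i j ^ 2 :=
        Finset.single_le_sum (f := fun i => ∑ j, b i j ^ 2)
          (fun i _ => Finset.sum_nonneg fun j _ => sq_nonneg _) (Finset.mem_univ i)
    _ = ∑ i, w i := hs.symm
    _ ≤ ∑ _i : Fin n, E := Finset.sum_le_sum fun i _ => hw i
    _ = n * E := by simp

/-- A set of invertible matrices on which `logSq` is bounded is relatively compact in
`GL(n, ℝ)`. -/
lemma exists_subseq {b e : ℕ → Matrix (Fin n) (Fin n) ℝ} {D : ℝ}
    (hbe : ∀ k, b k * e k = 1) (hD : ∀ k, logSq (b k) ≤ D) :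
    ∃ (p : Matrix (Fin n) (Fin n) ℝ × Matrix (Fin n) (Fin n) ℝ) (θ : ℕ → ℕ),
      p.1 * p.2 = 1 ∧ StrictMono θ ∧
        Tendsto (fun k => (b (θ k), e (θ k))) atTop (𝓝 p) := by
  set R := √(n * Real.exp √D)
  have hcpt : IsCompact (Set.pi Set.univ fun _ : Fin n => Set.pi Set.univ
      fun _ : Fin n => Set.Icc (-R) R) :=
    isCompact_univ_pi fun _ => isCompact_univ_pi fun _ => isCompact_Icc
  have hb : ∀ k, b k ∈ (Set.pi Set.univ fun _ : Fin n => Set.pi Set.univ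
      fun _ : Fin n => Set.Icc (-R) R) := fun k i _ j _ =>
    abs_le.1 (entry_bound (sqSing_sum (b k))
      (fun i => (sqSing_bound (hbe k) (hD k) i).1) i j)
  have he : ∀ k, e k ∈ (Set.pi Set.univ fun _ : Fin n => Set.pi Set.univ
      fun _ : Fin n => Set.Icc (-R) R) := fun k i _ j _ =>
    abs_le.1 (entry_bound (sqSing_inv (hbe k)).2
      (fun i => (sqSing_bound (hbe k) (hD k) i).2) i j)
  obtain ⟨p, -, θ, hθ, hp⟩ := (hcpt.prod hcpt).tendsto_subseq
    (x := fun k => ((b k, e k) : (Fin n → Fin n → ℝ) × (Fin n → Fin n → ℝ)))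
    fun k => ⟨hb k, he k⟩
  have hp' : Tendsto (fun k => (b (θ k), e (θ k))) atTop
      (𝓝 (p : Matrix (Fin n) (Fin n) ℝ × Matrix (Fin n) (Fin n) ℝ)) := hp
  refine ⟨p, θ, ?_, hθ, hp'⟩
  have hmul : Continuous fun x : Matrix (Fin n) (Fin n) ℝ × Matrix (Fin n) (Fin n) ℝ =>
      x.1 * x.2 := continuous_fst.matrix_mul continuous_snd
  have h1 := (hmul.tendsto p).comp hp'
  have h2 : ((fun x : Matrix (Fin n) (Fin n) ℝ × Matrix (Fin n) (Fin n) ℝ => x.1 * x.2) ∘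
      fun k => (b (θ k), e (θ k))) = fun _ => 1 := funext fun k => hbe (θ k)
  rw [h2] at h1
  exact tendsto_nhds_unique h1 tendsto_const_nhds

section
-- otherwise the unifier unfolds `T` in `tendsto_T`
attribute [local irreducible] T

lemma tendsto_T {b e : ℕ → Matrix (Fin n) (Fin n) ℝ}
    {p : Matrix (Fin n) (Fin n) ℝ × Matrix (Fin n) (Fin n) ℝ} (c : Bil n)
    (h : Tendsto (fun k => (b k, e k)) atTop (𝓝 p)) :
    Tendsto (fun k => T (e k) (e k) (b k) c) atTop (𝓝 (T p.2 p.2 p.1 c)) :=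
  ((continuous_T c).tendsto p).comp h

end

lemma T_ne_zero {b e : Matrix (Fin n) (Fin n) ℝ} {x : Bil n} (hbe : b * e = 1) (hx : x ≠ 0) :
    T e e b x ≠ 0 := by
  intro h
  have h1 := congrArg (T b b e) h
  rw [T_comp, mul_eq_one_comm.1 hbe, T_one] at h1
  exact hx (h1.trans (by simpa using T_smulc 0 b b e (0 : Bil n)))

/-- Limits of points of fixed norm on the rays through `b`-translates of `c`, with `logSq b`
bounded, stay in the orbit of `c`; scalars are absorbed by the centre of `GL(n, ℝ)`. -/
lemma limit_in_orbit {c : Bil n} (hc : c ≠ 0) {N D : ℝ} (hN : 0 < N) {x : ℕ → Bil n}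
    (hx : ∀ k, innB (x k) (x k) = N) {ρ : ℕ → ℝ} (hρ : ∀ k, 0 < ρ k)
    {b e : ℕ → Matrix (Fin n) (Fin n) ℝ} (hbe : ∀ k, b k * e k = 1)
    (hrel : ∀ k, Rel (b k) c (ρ k • x k)) (hD : ∀ k, logSq (b k) ≤ D) {y : Bil n}
    (hy : Tendsto x atTop (𝓝 y)) : ∃ h : GL (Fin n) ℝ, y = actG h c := by
  obtain ⟨p, θ, hp, hθ, hlim⟩ := exists_subseq hbe hD
  set χ : ℕ → Bil n := fun k => T (e k) (e k) (b k) c with hχdef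
  have hχ : ∀ k, χ k = ρ k • x k := by
    intro k
    have h1 := congrArg (T (e k) (e k) 1) (hrel k)
    rw [T_comp, T_comp, hbe k, Matrix.one_mul, Matrix.one_mul, Matrix.one_mul, T_one] at h1
    exact h1
  have hχlim := tendsto_T c hlim
  have hχ0 : T p.2 p.2 p.1 c ≠ 0 := T_ne_zero hp hc
  obtain ⟨χ', hχ'⟩ : ∃ χ', T p.2 p.2 p.1 c = χ' := ⟨_, rfl⟩
  rw [hχ'] at hχlim hχ0
  have hxχ : ∀ k, x k = √(N / innB (χ k) (χ k)) • χ k := by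
    intro k
    have hk := (hρ k).ne'
    have h1 : N / innB (χ k) (χ k) = ((ρ k)⁻¹) ^ 2 := by
      rw [hχ, innB_smul_left, innB_smul_right, hx]
      field_simp
    rw [h1, Real.sqrt_sq (inv_nonneg.2 (hρ k).le), hχ, smul_smul, inv_mul_cancel₀ hk, one_smul]
  obtain ⟨r, hr⟩ : ∃ r, √(N / innB χ' χ') = r := ⟨_, rfl⟩
  have hrpos : 0 < r := hr ▸ Real.sqrt_pos.2 (div_pos hN (innB_self_pos hχ0))
  have hxlim : Tendsto (fun k => x (θ k)) atTop (𝓝 (r • χ')) := by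
    refine Tendsto.congr (fun k => (hxχ (θ k)).symm) ?_
    rw [← hr]
    have h1 : Tendsto (fun k => innB (χ (θ k)) (χ (θ k))) atTop (𝓝 (innB χ' χ')) :=
      (continuous_innB.tendsto χ').comp hχlim
    exact ((Tendsto.div tendsto_const_nhds h1 (innB_self_pos hχ0).ne').sqrt).smul hχlim
  have hfin : y = r • χ' := tendsto_nhds_unique (hy.comp hθ.tendsto_atTop) hxlim
  have hu : (r⁻¹ • p.1) * (r • p.2) = 1 := by
    rw [Matrix.smul_mul, Matrix.mul_smul, smul_smul, inv_mul_cancel₀ hrpos.ne', one_smul, hp]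
  refine ⟨⟨r⁻¹ • p.1, r • p.2, hu, mul_eq_one_comm.1 hu⟩, ?_⟩
  have h2 : actG ⟨r⁻¹ • p.1, r • p.2, hu, mul_eq_one_comm.1 hu⟩ c =
      T (r • p.2) (r • p.2) (r⁻¹ • p.1) c := rfl
  rw [h2, hfin, ← hχ', T_smul₁, T_smul₂, T_smul₃, smul_smul, smul_smul, mul_assoc,
    mul_inv_cancel₀ hrpos.ne', mul_one]

/-- If the orbit `GL(n,ℝ)·μ₀` of a nonzero Jacobi (Lie) bracket is distinguished
(i.e. `N_{μ₀}` is an Einstein nilradical), then every ω-limit point of the negative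
gradient flow of `F = ‖m‖²∘π` starting at `μ₀` lies in the orbit `GL(n,ℝ)·μ₀`;
in particular the limit bracket is isomorphic to `μ₀`. -/
theorem omega_limit_in_orbit
    -- the moment map `m̃`: the unique symmetric matrix with `tr(m̃(μ) X) = ⟨X·μ, μ⟩`
    -- for every symmetric `X`
    (mt : Bil n → Matrix (Fin n) (Fin n) ℝ)
    (hmt : ∀ c : Bil n, (mt c)ᵀ = mt c ∧
      ∀ X : Matrix (Fin n) (Fin n) ℝ, Xᵀ = X →
        Matrix.trace (mt c * X) = innB (actX X c) c)
    -- `F(μ) = tr(m̃(μ)²)/⟨μ,μ⟩²`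
    (F : Bil n → ℝ) (hF : ∀ c : Bil n, F c = Matrix.trace (mt c * mt c) / (innB c c) ^ 2)
    -- the Fréchet gradient `∇F`, characterized against the inner product on `Vₙ`
    (gF : Bil n → Bil n) (hgF : ∀ c e : Bil n, innB (gF c) e = fderiv ℝ F c e)
    (μ₀ : Bil n) (halt : IsAlt μ₀) (hμ₀ : μ₀ ≠ 0) (hjac : Jacobi μ₀)
    -- the orbit `GL(n,ℝ)·μ₀` is distinguished (`N_{μ₀}` is an Einstein nilradical)
    (hdist : ∃ g : GL (Fin n) ℝ, gF (actG g μ₀) = 0)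
    -- `φ` is the negative gradient flow trajectory starting at `μ₀`
    (φ : ℝ → Bil n) (hφ0 : φ 0 = μ₀) (hφnz : ∀ t, 0 ≤ t → φ t ≠ 0)
    (hode : ∀ t, 0 ≤ t → HasDerivWithinAt φ (-(gF (φ t))) (Set.Ici (0 : ℝ)) t)
    -- `μ∞` is an ω-limit point of `φ`
    (μinf : Bil n)
    (hlim : ∃ tn : ℕ → ℝ, (∀ k, 0 ≤ tn k) ∧ Tendsto tn atTop atTop ∧
      Tendsto (fun k => φ (tn k)) atTop (𝓝 μinf)) :
    ∃ g : GL (Fin n) ℝ, μinf = actG g μ₀ := by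
  have hM : IsMoment mt := hmt
  obtain ⟨g, hg⟩ := hdist
  obtain ⟨tn, htn0, -, htn⟩ := hlim
  set c := actG g μ₀ with hcdef
  have hgg : (g : Matrix (Fin n) (Fin n) ℝ) *
      ((g⁻¹ : GL (Fin n) ℝ) : Matrix (Fin n) (Fin n) ℝ) = 1 := g.mul_inv
  have hgg' : ((g⁻¹ : GL (Fin n) ℝ) : Matrix (Fin n) (Fin n) ℝ) *
      (g : Matrix (Fin n) (Fin n) ℝ) = 1 := g.inv_mul
  have hc : c ≠ 0 := T_ne_zero hgg hμ₀
  have hcrit : actX (nm mt c) c = F c • c := by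
    rw [gradient_formula hM hF hgF hc] at hg
    have h4 : (4 / innB c c) ≠ 0 := div_ne_zero (by norm_num) (innB_self_pos hc).ne'
    exact sub_eq_zero.1 ((smul_eq_zero.1 hg).resolve_left h4)
  have hrel0 : Rel ((g⁻¹ : GL (Fin n) ℝ) : Matrix (Fin n) (Fin n) ℝ) c μ₀ := by
    rw [Rel, hcdef, actG_eq, T_comp, Matrix.mul_one, hgg']
  have hφcont : ContinuousOn φ (Set.Ici 0) := fun t ht => (hode t ht).continuousWithinAt
  set N := innB μ₀ μ₀ with hN
  have hNpos : 0 < N := innB_self_pos hμ₀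
  have hnorm : ∀ t, 0 ≤ t → innB (φ t) (φ t) = N := by
    rw [hN, ← hφ0]
    exact innB_flow hM hF hgF hφnz hode
  set κ := 4 / N with hκ
  have hκ0 : 0 ≤ κ := by positivity
  -- rescaling by `ρ` replaces the multiplier `F (φ t)` by the constant `F c`
  set ψ : ℝ → ℝ := fun s => F (φ (max s 0)) - F c with hψ
  have hψcont : Continuous ψ := by
    have h1 : Continuous fun s : ℝ => φ (max s 0) :=
      hφcont.comp_continuous (continuous_id.max continuous_const) fun s =>
        Set.mem_Ici.2 (le_max_right _ _)
    have h2 : Continuous fun s : ℝ => mt (φ (max s 0)) := (continuous_mt hM).comp h1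
    simp only [hψ, hF (φ _)]
    refine Continuous.sub (Continuous.div (h2.matrix_mul h2).matrix_trace
      ((continuous_innB.comp h1).pow 2) fun s => ?_) continuous_const
    exact pow_ne_zero 2 (innB_self_pos (hφnz _ (le_max_right _ _))).ne'
  set ρ : ℝ → ℝ := fun t => Real.exp (-κ * ∫ s in (0 : ℝ)..t, ψ s) with hρ
  have hρpos : ∀ t, 0 < ρ t := fun t => Real.exp_pos _
  have hρd : ∀ t, HasDerivAt ρ (ρ t * (-κ * ψ t)) t := fun t =>
    ((hψcont.integral_hasStrictDerivAt 0 t).hasDerivAt.const_mul (-κ)).exp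
  set χ : ℝ → Bil n := fun t => ρ t • φ t with hχdef
  have hχ0 : ∀ t, 0 ≤ t → χ t ≠ 0 := fun t ht => smul_ne_zero (hρpos t).ne' (hφnz t ht)
  have hχ : ∀ t, 0 ≤ t → HasDerivWithinAt χ
      (-κ • (actX (nm mt (χ t)) (χ t) - F c • χ t)) (Set.Ici 0) t := by
    intro t ht
    refine ((hρd t).hasDerivWithinAt.smul (hode t ht)).congr_deriv ?_
    rw [gradient_formula hM hF hgF (hφnz t ht), hnorm t ht]
    have h1 : nm mt (χ t) = N⁻¹ • mt (φ t) := by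
      rw [hχdef, nm_smul hM (hρpos t).ne', nm, hnorm t ht]
    rw [h1, hχdef]
    simp only [hψ, max_eq_left ht, actX_smul]
    rw [← hκ]
    module
  have hχ00 : χ 0 = μ₀ := by simp [hχdef, hρ, hφ0]
  have hall := flow_bounded hM hc hcrit hκ0 hχ0 hχ hgg' (by rwa [hχ00])
  choose b e hbe hrel hlog using fun k => hall (tn k) (htn0 k)
  obtain ⟨h, hh⟩ := limit_in_orbit hc hNpos (fun k => hnorm (tn k) (htn0 k))
    (fun k => hρpos (tn k)) hbe hrel hlog htn
  refine ⟨h * g, ?_⟩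
  rw [hh, hcdef, actG_eq, actG_eq, actG_eq, T_comp, _root_.mul_inv_rev, Units.val_mul,
    Units.val_mul]

end NilsolitonFlow
end
end

section
/- Let μ₁, μ₂ ∈ Vₙ∖{0} satisfy the Jacobi identity and be nilpotent brackets (for some m, every m-fold iterated bracket μ(x₁, μ(x₂, ···, μ(x_{m−1}, x_m)···)) vanishes), and suppose their complexifications are isomorphic: μ₂^ℂ = g·μ₁^ℂ for some g ∈ GL(n,ℂ). Then there exists h ∈ GL(n,ℝ) with ∇F(h·μ₁) = 0 if and only if there exists h ∈ GL(n,ℝ) with ∇F(h·μ₂) = 0; that is, the orbit GL(n,ℝ)·μ₁ is distinguished if and only if GL(n,ℝ)·μ₂ is distinguished (equivalently, by Lauret's theorem, N_{μ₁} is an Einstein nilradical if and only if N_{μ₂} is). -/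
/-!
Real forms of a complex nilpotent Lie algebra are simultaneously Einstein nilradicals
(Jablonski, Theorem on real forms; cf. Nikolayevsky).

The space `Vₙ` of alternating bilinear maps `μ : ℝⁿ × ℝⁿ → ℝⁿ` is identified, via the
standard basis `(eᵢ)`, with its structure coefficient arrays `c : Fin n → Fin n → (Fin n → ℝ)`,
`c i j = μ(eᵢ, eⱼ)`; similarly for `Vₙ^ℂ` over `ℂ`.
-/

/-!
A nonzero bracket `c` is a critical point of `F` exactly when its moment matrix acts on it by a
scalar, `m̃(c)·c = s c` (`IsMoment.gradient_eq_zero_iff`). This condition makes sense for complex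
tensors and is invariant under the unitary group (`IsCrit.unitary`). It therefore suffices to show:
if `C` is a real critical tensor and `N = g·C` is another real tensor in its complex orbit, then the
real orbit of `N` meets the unitary orbit of `C` (`exists_unitary`).

In an orthonormal eigenbasis of the moment matrix, `C` is graded by `D = m̃ + s`, a derivation. The
moment identity applied to `[B, Bᴴ]` shows that derivations of `C` have nonnegative weight and that
the derivations of weight zero are closed under adjoints (`weight_identity`). Moreover
`tr (D Y) = s tr Y` for all derivations `Y`. Consequently an automorphism `a` moves `D` only by a
derivation of strictly positive weight (`conj_sub_strict`), and such a perturbation of `D` can be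
undone by a unipotent automorphism (`exists_strict`, `strict_intertwiner_aut`).

Since `C` and `N` are real, `a = g⁻¹ conj(g)` is an automorphism of `C`. The average of `D` and
`a D a⁻¹` is invariant under the real structure that `g` pulls back from `N`. Conjugating it to `D`
replaces `g` by some `G` with `G·C = N` for which the automorphism `α = conj(G)⁻¹ G` commutes with
`D` (`exists_commuting`). By a convexity argument the positive powers of `αᴴ α` are then
automorphisms as well (`spectral_mul_of_aut`). Let `b = (αᴴ α)^(1/4)`. Uniqueness of positive square
roots and `α conj(α) = 1` make the form `(G⁻¹)ᴴ b² G⁻¹` real, so it equals `hᵀ h` with `h` real.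
Then `k = h G b⁻¹` is unitary and `h·N = h G b⁻¹·C = k·C`.
-/

open Matrix Filter Topology

noncomputable section

namespace NilsolitonRealForms

variable {n : ℕ}

abbrev Bil (n : ℕ) := Fin n → Fin n → (Fin n → ℝ)

/-- `μ` is alternating. -/
def IsAlt (c : Bil n) : Prop := ∀ i j, c i j = -c j i

/-- The inner product `⟨μ, λ⟩ = ∑_{i,j} ⟨μ(eᵢ,eⱼ), λ(eᵢ,eⱼ)⟩` on `Vₙ`. -/
def innB (c e : Bil n) : ℝ := ∑ i, ∑ j, c i j ⬝ᵥ e i j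

/-- The `GL(n,ℝ)`-action `(g·μ)(x,y) = g μ(g⁻¹x, g⁻¹y)`, in structure coefficients. -/
def actG (g : GL (Fin n) ℝ) (c : Bil n) : Bil n := fun i j =>
  ∑ k, ∑ l,
    (((g⁻¹ : GL (Fin n) ℝ) : Matrix (Fin n) (Fin n) ℝ) k i *
      ((g⁻¹ : GL (Fin n) ℝ) : Matrix (Fin n) (Fin n) ℝ) l j) •
      ((g : Matrix (Fin n) (Fin n) ℝ) *ᵥ c k l)

/-- The derived `𝔤𝔩(n,ℝ)`-action `(X·μ)(x,y) = Xμ(x,y) − μ(Xx,y) − μ(x,Xy)`,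
in structure coefficients. -/
def actX (X : Matrix (Fin n) (Fin n) ℝ) (c : Bil n) : Bil n := fun i j =>
  X *ᵥ c i j - (∑ k, X k i • c k j) - (∑ k, X k j • c i k)

/-- The bilinear map (bracket) associated to a coefficient array. -/
def brkt (c : Bil n) (x y : Fin n → ℝ) : Fin n → ℝ := ∑ i, ∑ j, (x i * y j) • c i j

/-- The Jacobi identity. -/
def Jacobi (c : Bil n) : Prop :=
  ∀ x y z : Fin n → ℝ,
    brkt c (brkt c x y) z + brkt c (brkt c y z) x + brkt c (brkt c z x) y = 0


/-- Right-nested iterated brackets: `nest c x m = μ(x_m, μ(x_{m-1}, ⋯ μ(x₁, x₀)⋯))`. -/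
def nest (c : Bil n) (x : ℕ → Fin n → ℝ) : ℕ → (Fin n → ℝ)
  | 0 => x 0
  | m + 1 => brkt c (x (m + 1)) (nest c x m)

/-- `μ` is a nilpotent bracket: for some `m`, every `m`-fold iterated bracket
`μ(x₁, μ(x₂, ⋯ μ(x_{m−1}, x_m)⋯))` vanishes. -/
def IsNilpotentBracket (c : Bil n) : Prop :=
  ∃ m : ℕ, ∀ x : ℕ → Fin n → ℝ, nest c x m = 0

/-- Complex bilinear maps `ℂⁿ × ℂⁿ → ℂⁿ`, recorded by their values on the standard basis. -/
abbrev BilC (n : ℕ) := Fin n → Fin n → (Fin n → ℂ)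

/-- The ℂ-bilinear extension `μ^ℂ ∈ Vₙ^ℂ` of `μ ∈ Vₙ`. -/
def cplxBil (c : Bil n) : BilC n := fun i j k => (c i j k : ℂ)

/-- The `GL(n,ℂ)`-action `(g·μ)(x,y) = g μ(g⁻¹x, g⁻¹y)` on `Vₙ^ℂ`, in structure
coefficients. -/
def actGC (g : GL (Fin n) ℂ) (c : BilC n) : BilC n := fun i j =>
  ∑ k, ∑ l,
    (((g⁻¹ : GL (Fin n) ℂ) : Matrix (Fin n) (Fin n) ℂ) k i *
      ((g⁻¹ : GL (Fin n) ℂ) : Matrix (Fin n) (Fin n) ℂ) l j) •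
      ((g : Matrix (Fin n) (Fin n) ℂ) *ᵥ c k l)

section

open scoped Kronecker ComplexOrder

/-! ### Tensors, the two actions and the Hermitian product -/

/-- Complex `n × n` matrices. -/
abbrev Mat (n : ℕ) := Matrix (Fin n) (Fin n) ℂ

/-- Complex bilinear maps `ℂⁿ × ℂⁿ → ℂⁿ` viewed as linear maps `ℂⁿ ⊗ ℂⁿ → ℂⁿ`: the entry
`C k (i, j)` is the `k`-th coordinate of the value at `(eᵢ, eⱼ)`. With this encoding both actions
become matrix products. -/
abbrev Ten (n : ℕ) := Matrix (Fin n) (Fin n × Fin n) ℂ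

/-- The Kronecker sum: `X` acting as a derivation on `ℂⁿ ⊗ ℂⁿ`. -/
def kadd (X : Mat n) : Matrix (Fin n × Fin n) (Fin n × Fin n) ℂ := X ⊗ₖ 1 + 1 ⊗ₖ X

/-- The derived action of `X ∈ 𝔤𝔩(n, ℂ)` on tensors; `ad X C = 0` says that `X` is a derivation
of `C`. -/
def ad (X : Mat n) (C : Ten n) : Ten n := X * C - C * kadd X

/-- The action of `P ∈ GL(n, ℂ)` on tensors, where `Q` stands for `P⁻¹`. The inverse is a separate
argument, so that no inverse matrix has to be simplified; the hypothesis `P * Q = 1` is added where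
it matters. -/
def ac (P Q : Mat n) (C : Ten n) : Ten n := P * C * (Q ⊗ₖ Q)

/-- The standard Hermitian product on tensors, linear in the first variable. -/
def ip (C E : Ten n) : ℂ := Matrix.trace (C * Eᴴ)

lemma ac_ac (P Q P' Q' : Mat n) (C : Ten n) :
    ac P Q (ac P' Q' C) = ac (P * P') (Q' * Q) C := by
  simp only [ac, Matrix.mul_kronecker_mul, Matrix.mul_assoc]

lemma ac_one (C : Ten n) : ac 1 1 C = C := by
  simp [ac]

lemma ad_ac {P Q : Mat n} (hPQ : P * Q = 1) (X : Mat n) (C : Ten n) :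
    ad X (ac P Q C) = ac P Q (ad (Q * X * P) C) := by
  have h1 : kadd (Q * X * P) * (Q ⊗ₖ Q) = (Q ⊗ₖ Q) * kadd X := by
    simp only [kadd, Matrix.add_mul, Matrix.mul_add, ← Matrix.mul_kronecker_mul, Matrix.mul_assoc,
      hPQ, Matrix.mul_one, Matrix.one_mul]
  have h2 : P * (Q * X * P * C) = X * (P * C) := by
    rw [← Matrix.mul_assoc, ← Matrix.mul_assoc, ← Matrix.mul_assoc, hPQ, Matrix.one_mul,
      Matrix.mul_assoc]
  simp only [ad, ac, Matrix.mul_sub, Matrix.sub_mul]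
  rw [h2, Matrix.mul_assoc P (C * kadd _), Matrix.mul_assoc C (kadd _), h1]
  simp only [Matrix.mul_assoc]

lemma ad_add (X Y : Mat n) (C : Ten n) : ad (X + Y) C = ad X C + ad Y C := by
  simp only [ad, kadd, Matrix.add_mul, Matrix.mul_add, Matrix.add_kronecker, Matrix.kronecker_add]
  abel

lemma ad_smul (t : ℂ) (X : Mat n) (C : Ten n) : ad (t • X) C = t • ad X C := by
  simp only [ad, kadd, Matrix.smul_mul, Matrix.mul_smul, Matrix.mul_add, Matrix.smul_kronecker,
    Matrix.kronecker_smul, smul_sub, smul_add]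

lemma ad_sub (X Y : Mat n) (C : Ten n) : ad (X - Y) C = ad X C - ad Y C := by
  have := ad_add X ((-1 : ℂ) • Y) C
  rw [ad_smul] at this
  simpa [sub_eq_add_neg] using this

lemma kadd_sub (X Y : Mat n) : kadd (X - Y) = kadd X - kadd Y := by
  ext i j
  simp [kadd, Matrix.kroneckerMap_apply]
  ring

lemma ad_mul_sub (X Y : Mat n) (C : Ten n) :
    ad (X * Y - Y * X) C = ad X (ad Y C) - ad Y (ad X C) := by
  have hk : kadd (X * Y - Y * X) = kadd X * kadd Y - kadd Y * kadd X := by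
    rw [kadd_sub]
    simp only [kadd, Matrix.mul_add, Matrix.add_mul, ← Matrix.mul_kronecker_mul, Matrix.mul_one,
      Matrix.one_mul]
    abel
  simp only [ad, hk, Matrix.mul_sub, Matrix.sub_mul, Matrix.mul_assoc]
  abel

lemma ad_one (C : Ten n) : ad 1 C = -C := by
  have : kadd (1 : Mat n) = 1 + 1 := by simp [kadd]
  simp only [ad, this, Matrix.mul_add, Matrix.mul_one, Matrix.one_mul]
  abel

lemma kadd_conjTranspose (X : Mat n) : (kadd X)ᴴ = kadd Xᴴ := by
  simp [kadd, Matrix.conjTranspose_kronecker]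

lemma ip_ac (P Q : Mat n) (C E : Ten n) : ip (ac P Q C) E = ip C (ac Pᴴ Qᴴ E) := by
  simp only [ip, ac, Matrix.conjTranspose_mul, Matrix.conjTranspose_kronecker,
    Matrix.conjTranspose_conjTranspose]
  rw [Matrix.mul_assoc, Matrix.mul_assoc, Matrix.trace_mul_comm]
  simp only [Matrix.mul_assoc]

lemma ip_ad (X : Mat n) (C E : Ten n) : ip (ad X C) E = ip C (ad Xᴴ E) := by
  simp only [ip, ad, Matrix.conjTranspose_sub, Matrix.conjTranspose_mul, kadd_conjTranspose,
    Matrix.conjTranspose_conjTranspose, Matrix.mul_sub, Matrix.sub_mul, Matrix.trace_sub]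
  rw [Matrix.mul_assoc X, Matrix.trace_mul_comm X]
  simp only [Matrix.mul_assoc]

lemma ip_apply (C E : Ten n) : ip C E = ∑ k, ∑ p, C k p * star (E k p) := by
  simp [ip, Matrix.trace, Matrix.mul_apply]

lemma ip_self_eq_zero {C : Ten n} (h : ip C C = 0) : C = 0 := by
  exact Matrix.trace_mul_conjTranspose_self_eq_zero_iff.mp h

lemma ip_self_nonneg (C : Ten n) : 0 ≤ (ip C C).re := by
  rw [ip_apply]
  simp only [Complex.re_sum]
  refine Finset.sum_nonneg fun k _ => Finset.sum_nonneg fun p _ => ?_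
  simp [Complex.mul_re]
  nlinarith [sq_nonneg (C k p).re, sq_nonneg (C k p).im]

lemma diagonal_mul_kron (f : Fin n → ℂ) (C : Ten n) (k i j) :
    (C * (diagonal f ⊗ₖ diagonal f)) k (i, j) = C k (i, j) * (f i * f j) := by
  simp [Matrix.diagonal_kronecker_diagonal]

lemma ad_diagonal (f : Fin n → ℂ) (C : Ten n) (k i j) :
    ad (diagonal f) C k (i, j) = (f k - f i - f j) * C k (i, j) := by
  have : kadd (diagonal f) = diagonal fun p : Fin n × Fin n => f p.1 + f p.2 := by
    rw [kadd, ← Matrix.diagonal_one, Matrix.diagonal_kronecker_diagonal,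
      Matrix.diagonal_kronecker_diagonal, Matrix.diagonal_add]
    simp
  simp [ad, this]
  ring

lemma ad_apply (X : Mat n) (C : Ten n) (k i j) :
    ad X C k (i, j) = ∑ l, X k l * C l (i, j) - ∑ l, X l i * C k (l, j)
      - ∑ l, X l j * C k (i, l) := by
  simp [ad, kadd, Matrix.mul_apply, Matrix.mul_add, Fintype.sum_prod_type,
    Matrix.kroneckerMap_apply, Matrix.one_apply]
  simp [mul_comm, sub_sub]

/-- `C` has moment matrix `M`, and `M` acts on `C` by the scalar `s`: the critical point equation
of the normalised squared norm of the moment map. -/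
structure IsCrit (C : Ten n) (M : Mat n) (s : ℂ) : Prop where
  moment : ∀ X : Mat n, ip (ad X C) C = Matrix.trace (M * X)
  eigen : ad M C = s • C

lemma ac_smul (P Q : Mat n) (s : ℂ) (C : Ten n) : ac P Q (s • C) = s • ac P Q C := by
  simp [ac]

/-- Critical tensors are carried to critical tensors by the unitary group. -/
lemma IsCrit.unitary {C : Ten n} {M : Mat n} {s : ℂ} (h : IsCrit C M s) {k : Mat n}
    (hk : kᴴ * k = 1) : IsCrit (ac k kᴴ C) (k * M * kᴴ) s := by
  have hk' : k * kᴴ = 1 := mul_eq_one_comm.mp hk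
  constructor
  · intro X
    rw [ad_ac hk', ip_ac, ac_ac, Matrix.conjTranspose_conjTranspose, hk, ac_one, h.moment]
    rw [← Matrix.mul_assoc, Matrix.trace_mul_comm]
    simp only [Matrix.mul_assoc]
  · rw [ad_ac hk']
    have : kᴴ * (k * M * kᴴ) * k = M := by
      rw [Matrix.mul_assoc, Matrix.mul_assoc (k * M), hk, Matrix.mul_one, ← Matrix.mul_assoc, hk,
        Matrix.one_mul]
    rw [this, h.eigen, ac_smul]

/-! ### Derivations of a graded critical tensor -/

/-- The critical point equation in an eigenbasis of the moment matrix: the moment matrix is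
`diagonal (d - s)`, and `diagonal d` is a derivation, that is, `C` is graded by the weights `d`. -/
structure IsGraded (C : Ten n) (d : Fin n → ℝ) (s : ℝ) : Prop where
  supp : ∀ k i j, C k (i, j) ≠ 0 → d k = d i + d j
  moment : ∀ X : Mat n, ip (ad X C) C = ∑ i, ((d i - s : ℝ) : ℂ) * X i i

/-- The component of weight `r` of a matrix, for the grading of `𝔤𝔩(n, ℂ)` in which the elementary
matrix `Eᵢⱼ` has weight `d i - d j`. -/
def wt (d : Fin n → ℝ) (r : ℝ) (A : Mat n) : Mat n :=
  Matrix.of fun i j => if d i - d j = r then A i j else 0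

/-- The weight components of a derivation are derivations. -/
lemma ad_wt {C : Ten n} {d : Fin n → ℝ} {s : ℝ} (h : IsGraded C d s) (r : ℝ) {A : Mat n}
    (hA : ad A C = 0) : ad (wt d r A) C = 0 := by
  ext k ⟨i, j⟩
  have key : ad (wt d r A) C k (i, j) = if d k - d i - d j = r then ad A C k (i, j) else 0 := by
    have e1 : ∀ l, wt d r A k l * C l (i, j) =
        if d k - d i - d j = r then A k l * C l (i, j) else 0 := fun l => by
      by_cases hc : C l (i, j) = 0
      · simp [hc]
      · simp [wt, h.supp _ _ _ hc, sub_sub]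
    have e2 : ∀ l, wt d r A l i * C k (l, j) =
        if d k - d i - d j = r then A l i * C k (l, j) else 0 := fun l => by
      by_cases hc : C k (l, j) = 0
      · simp [hc]
      · have : d k - d i - d j = d l - d i := by rw [h.supp _ _ _ hc]; ring
        simp [wt, this]
    have e3 : ∀ l, wt d r A l j * C k (i, l) =
        if d k - d i - d j = r then A l j * C k (i, l) else 0 := fun l => by
      by_cases hc : C k (i, l) = 0
      · simp [hc]
      · have : d k - d i - d j = d l - d j := by rw [h.supp _ _ _ hc]; ring
        simp [wt, this]
    rw [ad_apply, ad_apply, Finset.sum_congr rfl fun l _ => e1 l,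
      Finset.sum_congr rfl fun l _ => e2 l, Finset.sum_congr rfl fun l _ => e3 l]
    split_ifs <;> simp
  rw [key, hA]
  simp

/-- For a derivation `B` of pure weight `r`, the moment identity for `[B, Bᴴ]` computes the norm of
`Bᴴ · C` as `r` times the norm of `B`. Its sign forces `r ≥ 0`, and for `r = 0` it makes `Bᴴ` a
derivation. -/
lemma weight_identity {C : Ten n} {d : Fin n → ℝ} {s : ℝ} (h : IsGraded C d s) {r : ℝ}
    {B : Mat n} (hB : ad B C = 0) (hr : ∀ i j, B i j ≠ 0 → d i - d j = r) :
    ip (ad Bᴴ C) (ad Bᴴ C) = ((r * ∑ i, ∑ j, Complex.normSq (B i j) : ℝ) : ℂ) := by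
  have h1 : ip (ad (B * Bᴴ - Bᴴ * B) C) C = ip (ad Bᴴ C) (ad Bᴴ C) := by
    rw [ad_mul_sub, hB]
    have : ad Bᴴ (0 : Ten n) = 0 := by simp [ad]
    rw [this, sub_zero, ip_ad]
  rw [← h1, h.moment]
  have h2 : ∀ i, ((d i - s : ℝ) : ℂ) * (B * Bᴴ - Bᴴ * B) i i =
      ((∑ j, (d i - s) * Complex.normSq (B i j) - ∑ j, (d i - s) * Complex.normSq (B j i) : ℝ) : ℂ) := by
    intro i
    simp only [Matrix.sub_apply, Matrix.mul_apply, Matrix.conjTranspose_apply, ← Finset.mul_sum]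
    push_cast
    rw [← mul_sub]
    congr 2
    · exact Finset.sum_congr rfl fun j _ => Complex.mul_conj _
    · exact Finset.sum_congr rfl fun j _ => by rw [mul_comm]; exact Complex.mul_conj _
  rw [Finset.sum_congr rfl fun i _ => h2 i, ← Complex.ofReal_sum]
  congr 1
  rw [Finset.sum_sub_distrib]
  conv_lhs => rw [Finset.sum_comm (f := fun i j => (d i - s) * Complex.normSq (B j i))]
  rw [← Finset.sum_sub_distrib, Finset.mul_sum]
  refine Finset.sum_congr rfl fun i _ => ?_
  rw [← Finset.sum_sub_distrib, Finset.mul_sum]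
  refine Finset.sum_congr rfl fun j _ => ?_
  by_cases hij : B i j = 0
  · simp [hij]
  · rw [← hr i j hij]; ring

lemma wt_apply_ne (d : Fin n → ℝ) (r : ℝ) (A : Mat n) (i j) (h : wt d r A i j ≠ 0) :
    d i - d j = r := by
  by_contra hc
  simp [wt, hc] at h

/-- Derivations have no components of negative weight. -/
lemma apply_eq_zero_of_lt {C : Ten n} {d : Fin n → ℝ} {s : ℝ} (h : IsGraded C d s) {A : Mat n}
    (hA : ad A C = 0) {i j : Fin n} (hij : d i < d j) : A i j = 0 := by
  have h1 := weight_identity h (ad_wt h (d i - d j) hA) (wt_apply_ne d _ A)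
  have h2 := ip_self_nonneg (ad (wt d (d i - d j) A)ᴴ C)
  rw [h1, Complex.ofReal_re] at h2
  have h3 : ∑ i', ∑ j', Complex.normSq (wt d (d i - d j) A i' j') ≤ 0 := by
    by_contra hc
    push Not at hc
    nlinarith
  have h4 : Complex.normSq (wt d (d i - d j) A i j) ≤
      ∑ i', ∑ j', Complex.normSq (wt d (d i - d j) A i' j') :=
    (Finset.single_le_sum (f := fun j' => Complex.normSq (wt d (d i - d j) A i j'))
      (fun _ _ => Complex.normSq_nonneg _) (Finset.mem_univ j)).trans
    (Finset.single_le_sum (f := fun i' => ∑ j', Complex.normSq (wt d (d i - d j) A i' j'))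
      (fun _ _ => Finset.sum_nonneg fun _ _ => Complex.normSq_nonneg _) (Finset.mem_univ i))
  have h5 : wt d (d i - d j) A i j = 0 :=
    Complex.normSq_eq_zero.mp (le_antisymm (h4.trans h3) (Complex.normSq_nonneg _))
  simpa [wt] using h5

lemma ad_conjTranspose_wt_zero {C : Ten n} {d : Fin n → ℝ} {s : ℝ} (h : IsGraded C d s)
    {A : Mat n} (hA : ad A C = 0) : ad (wt d 0 A)ᴴ C = 0 := by
  have h1 := weight_identity h (ad_wt h 0 hA) (wt_apply_ne d _ A)
  apply ip_self_eq_zero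
  rw [h1]; simp

/-- A derivation in the radical of the trace form on derivations has only components of positive
weight: its weight-zero part can be tested against its own adjoint, which is a derivation. -/
lemma apply_eq_zero_of_le {C : Ten n} {d : Fin n → ℝ} {s : ℝ} (h : IsGraded C d s) {E : Mat n}
    (hE : ad E C = 0) (htr : ∀ Y : Mat n, ad Y C = 0 → Matrix.trace (E * Y) = 0)
    {i j : Fin n} (hij : d i ≤ d j) : E i j = 0 := by
  rcases hij.lt_or_eq with hlt | heq
  · exact apply_eq_zero_of_lt h hE hlt
  have h1 := htr _ (ad_conjTranspose_wt_zero h hE)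
  have h2 : Matrix.trace (E * (wt d 0 E)ᴴ) = Matrix.trace (wt d 0 E * (wt d 0 E)ᴴ) := by
    simp only [Matrix.trace, Matrix.diag, Matrix.mul_apply]
    refine Finset.sum_congr rfl fun a _ => Finset.sum_congr rfl fun b _ => ?_
    by_cases hab : d a - d b = 0 <;> simp [wt, hab]
  rw [h2] at h1
  have h3 := congrFun (congrFun (Matrix.trace_mul_conjTranspose_self_eq_zero_iff.mp h1) i) j
  simpa [wt, heq] using h3

/-- The derivation `diagonal d` represents `s` times the trace on derivations; it is a pre-Einstein
derivation, determined up to the radical of the trace form. -/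
lemma trace_diagonal_mul {C : Ten n} {d : Fin n → ℝ} {s : ℝ} (h : IsGraded C d s) {Y : Mat n}
    (hY : ad Y C = 0) :
    Matrix.trace (diagonal (fun i => (d i : ℂ)) * Y) = s * Matrix.trace Y := by
  have h1 := h.moment Y
  rw [hY] at h1
  have h2 : ip (0 : Ten n) C = 0 := by simp [ip]
  rw [h2] at h1
  simp only [Matrix.trace, Matrix.diag, Matrix.diagonal_mul, Finset.mul_sum]
  rw [← sub_eq_zero, ← Finset.sum_sub_distrib, h1]
  refine Finset.sum_congr rfl fun i _ => ?_
  push_cast; ring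

lemma ad_diagonal_eq_zero {C : Ten n} {d : Fin n → ℝ} {s : ℝ} (h : IsGraded C d s) :
    ad (diagonal (fun i => (d i : ℂ))) C = 0 := by
  ext k ⟨i, j⟩
  rw [ad_diagonal]
  by_cases hc : C k (i, j) = 0
  · simp [hc]
  · rw [h.supp k i j hc]; push_cast; simp

lemma ad_eq_zero_conj {C : Ten n} {a b : Mat n} (hab : a * b = 1) (ha : ac a b C = C) {X : Mat n}
    (hX : ad X C = 0) : ad (a * X * b) C = 0 := by
  have hba : b * a = 1 := mul_eq_one_comm.mp hab
  rw [← ha, ad_ac hab]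
  have : b * (a * X * b) * a = X := by
    rw [Matrix.mul_assoc, Matrix.mul_assoc (a * X), hba, Matrix.mul_one, ← Matrix.mul_assoc, hba,
      Matrix.one_mul]
  rw [this, hX]; simp [ac]

/-- An automorphism `a` of `C` moves `D = diagonal d` by a derivation of strictly positive weight,
since `a * D * a⁻¹` and `D` have the same trace pairing with every derivation. -/
lemma conj_sub_strict {C : Ten n} {d : Fin n → ℝ} {s : ℝ} (h : IsGraded C d s) {a b : Mat n}
    (hab : a * b = 1) (ha : ac a b C = C) :
    let D : Mat n := diagonal (fun i => (d i : ℂ))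
    ad (a * D * b - D) C = 0 ∧ ∀ i j, d i ≤ d j → (a * D * b - D) i j = 0 := by
  intro D
  have hba : b * a = 1 := mul_eq_one_comm.mp hab
  have hb : ac b a C = C := by
    conv_lhs => rw [← ha, ac_ac, hba, ac_one]
  have h0 : ad D C = 0 := ad_diagonal_eq_zero h
  have h1 : ad (a * D * b - D) C = 0 := by
    rw [ad_sub, ad_eq_zero_conj hab ha h0, h0, sub_zero]
  refine ⟨h1, fun i j hij => apply_eq_zero_of_le h h1 (fun Y hY => ?_) hij⟩
  have h2 : Matrix.trace (a * D * b * Y) = Matrix.trace (D * (b * Y * a)) := by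
    rw [Matrix.mul_assoc a, Matrix.mul_assoc a, Matrix.trace_mul_comm a]
    simp only [Matrix.mul_assoc]
  have h3 : Matrix.trace (b * Y * a) = Matrix.trace Y := by
    rw [Matrix.trace_mul_comm, ← Matrix.mul_assoc, hab, Matrix.one_mul]
  rw [Matrix.sub_mul, Matrix.trace_sub, h2, trace_diagonal_mul h hY,
    trace_diagonal_mul h (ad_eq_zero_conj hba hb hY), h3, sub_self]

/-! ### Unipotent automorphisms -/

/-- Induction on the weight of a coordinate. -/
lemma eq_zero_of_lt_imp (d : Fin n → ℝ) {v : Fin n → ℂ}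
    (hv : ∀ k, (∀ l, d l < d k → v l = 0) → v k = 0) : v = 0 := by
  have wf : WellFounded fun k l : Fin n => d k < d l := by
    have : IsTrans (Fin n) fun k l => d k < d l := ⟨fun _ _ _ h1 h2 => lt_trans h1 h2⟩
    have : Std.Irrefl fun k l : Fin n => d k < d l := ⟨fun _ => lt_irrefl _⟩
    exact Finite.wellFounded_of_trans_of_irrefl _
  funext k
  exact wf.induction (C := fun k => v k = 0) k fun k ih => hv k ih

/-- If `E` strictly raises weights, an eigenvector of `diagonal d + E` with real eigenvalue `r`
vanishes as soon as its components of weight `≤ r` vanish. -/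
lemma eq_zero_of_eigen {d : Fin n → ℝ} {E : Mat n} (hE : ∀ i j, d i ≤ d j → E i j = 0)
    {v : Fin n → ℂ} {r : ℝ} (hv : ∀ k, d k ≤ r → v k = 0)
    (h : ∀ k, (d k : ℂ) * v k + ∑ l, E k l * v l = r * v k) : v = 0 := by
  refine eq_zero_of_lt_imp d fun k hk => ?_
  by_cases hkr : d k ≤ r
  · exact hv k hkr
  have h1 : ∑ l, E k l * v l = 0 := Finset.sum_eq_zero fun l _ => by
    by_cases hl : d l < d k
    · rw [hk l hl, mul_zero]
    · rw [hE k l (not_lt.mp hl), zero_mul]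
  have h2 := h k
  rw [h1, add_zero, ← sub_eq_zero, ← sub_mul] at h2
  refine (mul_eq_zero.mp h2).resolve_left ?_
  rw [← Complex.ofReal_sub, Complex.ofReal_eq_zero]
  exact fun h3 => hkr (by linarith)

/-- If `E` strictly raises weights, then `diagonal d + E` is conjugate to `diagonal d` by a
unipotent matrix `1 + X`. The equation for `X` is linear, and the operator in it is injective by
`eq_zero_of_eigen`, hence bijective. -/
lemma exists_strict (d : Fin n → ℝ) {E : Mat n} (hE : ∀ i j, d i ≤ d j → E i j = 0) :
    ∃ X : Mat n, (∀ i j, d i ≤ d j → X i j = 0) ∧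
      (1 + X) * diagonal (fun i => (d i : ℂ)) =
        (diagonal (fun i => (d i : ℂ)) + E) * (1 + X) := by
  let T : Mat n →ₗ[ℂ] Mat n :=
    { toFun := fun X => Matrix.of fun i j => if d i ≤ d j then X i j else
        X i j * d j - d i * X i j - ∑ k, E i k * X k j
      map_add' := fun X Y => by
        ext i j
        simp only [Matrix.of_apply, Matrix.add_apply]
        split_ifs
        · rfl
        · simp only [mul_add, Finset.sum_add_distrib]; ring
      map_smul' := fun t X => by
        ext i j
        simp only [Matrix.of_apply, Matrix.smul_apply, smul_eq_mul, RingHom.id_apply]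
        split_ifs
        · rfl
        · simp only [mul_left_comm _ t, ← Finset.mul_sum]; ring }
  have hT : ∀ X i j, T X i j = if d i ≤ d j then X i j else
        X i j * d j - d i * X i j - ∑ k, E i k * X k j := fun _ _ _ => rfl
  -- `E * X` only has entries `(i, j)` with `d i > d j`, like `E` and `X` themselves.
  have hEX : ∀ X : Mat n, (∀ i j, d i ≤ d j → X i j = 0) → ∀ i j, d i ≤ d j →
      ∑ k, E i k * X k j = 0 := by
    intro X hX i j hij
    refine Finset.sum_eq_zero fun k _ => ?_
    rcases le_total (d i) (d k) with h | h
    · rw [hE i k h, zero_mul]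
    · rw [hX k j (h.trans hij), mul_zero]
  have hinj : Function.Injective T := by
    rw [injective_iff_map_eq_zero]
    intro X hX
    have hX0 : ∀ i j, d i ≤ d j → X i j = 0 := fun i j hij => by
      have := congrFun (congrFun hX i) j
      rwa [hT, if_pos hij] at this
    have hcol : ∀ j, (fun i => X i j) = 0 := fun j =>
      eq_zero_of_eigen hE (r := d j) (fun k hk => hX0 k j hk) fun k => by
        by_cases hk : d k ≤ d j
        · rw [hX0 k j hk, hEX X hX0 k j hk]; simp
        · have := congrFun (congrFun hX k) j
          rw [hT, if_neg hk] at this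
          simp only [Matrix.zero_apply] at this
          linear_combination -this
    ext i j
    exact congrFun (hcol j) i
  obtain ⟨X, hX⟩ := (LinearMap.injective_iff_surjective.mp hinj) E
  have hX0 : ∀ i j, d i ≤ d j → X i j = 0 := fun i j hij => by
    have := congrFun (congrFun hX i) j
    rwa [hT, if_pos hij, hE i j hij] at this
  refine ⟨X, hX0, ?_⟩
  ext i j
  rw [Matrix.add_mul, Matrix.add_mul, Matrix.one_mul, Matrix.mul_add, Matrix.mul_add,
    Matrix.mul_one, Matrix.mul_one]
  simp only [Matrix.add_apply, Matrix.mul_diagonal, Matrix.diagonal_mul]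
  rw [Matrix.mul_apply (M := E)]
  by_cases hij : d i ≤ d j
  · rw [hX0 i j hij, hEX X hX0 i j hij, hE i j hij]; simp
  · have := congrFun (congrFun hX i) j
    rw [hT, if_neg hij] at this
    linear_combination this

lemma isUnit_one_add_strict (d : Fin n → ℝ) {X : Mat n} (hX : ∀ i j, d i ≤ d j → X i j = 0) :
    IsUnit (1 + X) := by
  rw [← Matrix.mulVec_injective_iff_isUnit]
  rw [← Matrix.coe_mulVecLin, injective_iff_map_eq_zero]
  intro v hv
  refine eq_zero_of_lt_imp d fun k hk => ?_
  have h1 := congrFun hv k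
  simp only [Matrix.mulVecLin_apply, Matrix.add_mulVec, Matrix.one_mulVec, Pi.add_apply,
    Pi.zero_apply] at h1
  have h2 : (X *ᵥ v) k = 0 := by
    rw [Matrix.mulVec_eq_sum, Finset.sum_apply]
    refine Finset.sum_eq_zero fun l _ => ?_
    by_cases hl : d l < d k
    · simp [hk l hl]
    · simp [hX k l (not_lt.mp hl)]
  rwa [h2, add_zero] at h1

/-- If moreover `E` is a derivation of `C`, then the conjugating matrix `1 + X` is an automorphism of
`C`. The defect `Z` intertwines `diagonal d + E` with `diagonal d` and has no component of weight
`≤ 0`, so it vanishes by `eq_zero_of_eigen`. -/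
lemma strict_intertwiner_aut {C : Ten n} {d : Fin n → ℝ} {s : ℝ} (h : IsGraded C d s)
    {E X : Mat n} (hEC : ad E C = 0) (hE : ∀ i j, d i ≤ d j → E i j = 0)
    (hX : ∀ i j, d i ≤ d j → X i j = 0)
    (hu : (1 + X) * diagonal (fun i => (d i : ℂ)) =
        (diagonal (fun i => (d i : ℂ)) + E) * (1 + X)) :
    (1 + X) * C = C * ((1 + X) ⊗ₖ (1 + X)) := by
  set D : Mat n := diagonal (fun i => (d i : ℂ)) with hD
  set u := 1 + X with hudef
  have hDC : D * C = C * kadd D := sub_eq_zero.mp (ad_diagonal_eq_zero h)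
  have hDEC : (D + E) * C = C * kadd (D + E) := by
    have : ad (D + E) C = 0 := by rw [ad_add, hEC, ad_diagonal_eq_zero h, add_zero]
    exact sub_eq_zero.mp this
  have hkk : kadd (D + E) * (u ⊗ₖ u) = (u ⊗ₖ u) * kadd D := by
    simp only [kadd, Matrix.add_mul _ _ (u ⊗ₖ u), Matrix.mul_add (u ⊗ₖ u),
      ← Matrix.mul_kronecker_mul, ← hu, Matrix.one_mul, Matrix.mul_one]
  set Z : Ten n := u * C - C * (u ⊗ₖ u) with hZ
  have hZeq : (D + E) * Z = Z * kadd D := by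
    rw [hZ, Matrix.mul_sub, Matrix.sub_mul, ← Matrix.mul_assoc, ← hu, Matrix.mul_assoc u D, hDC,
      ← Matrix.mul_assoc (D + E), hDEC, Matrix.mul_assoc C, hkk]
    simp only [Matrix.mul_assoc]
  have huii : ∀ i, u i i = 1 := fun i => by simp [hudef, hX i i le_rfl]
  have hune : ∀ i j, u i j ≠ 0 → i ≠ j → d j < d i := fun i j hne hij => by
    by_contra hc
    exact hne (by simp [hudef, hX i j (not_lt.mp hc), hij])
  have hule : ∀ i j, u i j ≠ 0 → d j ≤ d i := fun i j hne => by
    by_cases hij : i = j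
    · rw [hij]
    · exact (hune i j hne hij).le
  have hZ0 : ∀ k i j, d k ≤ d i + d j → Z k (i, j) = 0 := by
    intro k i j hk
    have e1 : (u * C) k (i, j) = C k (i, j) := by
      rw [Matrix.mul_apply, Finset.sum_eq_single k, huii, one_mul]
      · intro l _ hl
        by_contra hc
        obtain ⟨h1, h2⟩ := mul_ne_zero_iff.mp hc
        have := hune k l h1 (Ne.symm hl)
        have := h.supp _ _ _ h2
        linarith
      · simp
    have e2 : (C * (u ⊗ₖ u)) k (i, j) = C k (i, j) := by
      rw [Matrix.mul_apply, Finset.sum_eq_single (i, j)]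
      · simp [Matrix.kroneckerMap_apply, huii]
      · rintro ⟨p, q⟩ _ hpq
        by_contra hc
        obtain ⟨h1, h2⟩ := mul_ne_zero_iff.mp hc
        rw [Matrix.kroneckerMap_apply] at h2
        obtain ⟨h2, h3⟩ := mul_ne_zero_iff.mp h2
        have h4 := h.supp _ _ _ h1
        have h5 := hule _ _ h2
        have h6 := hule _ _ h3
        apply hpq
        congr 1
        · by_contra h7
          have := hune _ _ h2 h7
          simp only at *
          linarith
        · by_contra h7
          have := hune _ _ h3 h7
          simp only at *
          linarith
      · simp
    rw [hZ, Matrix.sub_apply, e1, e2, sub_self]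
  have hfin : ∀ i j, (fun k => Z k (i, j)) = 0 := fun i j =>
    eq_zero_of_eigen hE (r := d i + d j) (fun k hk => hZ0 k i j hk) fun k => by
      have h1 := congrFun (congrFun hZeq k) (i, j)
      have h2 : (Z * kadd D) k (i, j) = (D * Z) k (i, j) - ad D Z k (i, j) := by
        simp [ad]
      rw [h2, ad_diagonal, Matrix.add_mul, Matrix.add_apply, Matrix.mul_apply (M := E), hD,
        Matrix.diagonal_mul] at h1
      rw [h1]; push_cast; ring
  have : Z = 0 := by
    ext k ⟨i, j⟩
    exact congrFun (hfin i j) k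
  exact sub_eq_zero.mp this

/-! ### Reduction to a commuting cocycle, and polar decomposition -/

/-- Entrywise complex conjugation. -/
def cj {m : Type*} (X : Matrix (Fin n) m ℂ) : Matrix (Fin n) m ℂ := X.map (starRingEnd ℂ)

lemma cj_mul {m : Type*} (X : Mat n) (Y : Matrix (Fin n) m ℂ) : cj (X * Y) = cj X * cj Y := by
  simp [cj, Matrix.map_mul]

lemma cj_add {m : Type*} (X Y : Matrix (Fin n) m ℂ) : cj (X + Y) = cj X + cj Y := by
  ext; simp [cj]

lemma cj_cj {m : Type*} (X : Matrix (Fin n) m ℂ) : cj (cj X) = X := by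
  ext; simp [cj]

lemma cj_one : cj (1 : Mat n) = 1 := by
  ext i j; simp [cj, Matrix.one_apply, apply_ite]

lemma cj_ac (P Q : Mat n) (C : Ten n) : cj (ac P Q C) = ac (cj P) (cj Q) (cj C) := by
  simp only [cj, ac, Matrix.map_mul]
  congr 1
  ext ⟨i, i'⟩ ⟨j, j'⟩
  simp [Matrix.kroneckerMap_apply]

lemma cj_diagonal (d : Fin n → ℝ) :
    cj (diagonal (fun i => (d i : ℂ))) = diagonal (fun i => (d i : ℂ)) := by
  ext i j
  by_cases h : i = j <;> simp [cj, h]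

lemma cj_conjTranspose (X : Mat n) : cj Xᴴ = (cj X)ᴴ := by
  ext; simp [cj]

/-- Let `C` and `g · C` be real. After replacing `g` by `g * u`, with `u` an automorphism of `C`, the
cocycle `conj(g)⁻¹ * g` commutes with `D = diagonal d`. Here `u` conjugates `D` to the average of
`D` and `a * D * a⁻¹`, where `a = g⁻¹ * conj(g)`: this average is fixed by the real structure that
`g` pulls back from `g · C`. -/
lemma exists_commuting {C : Ten n} {d : Fin n → ℝ} {s : ℝ} (h : IsGraded C d s) (hC : cj C = C)
    {g gi : Mat n} (hg : g * gi = 1) (hN : cj (ac g gi C) = ac g gi C) :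
    ∃ u v : Mat n, u * v = 1 ∧ ac u v C = C ∧
      Commute (cj (v * gi) * (g * u)) (diagonal (fun i => (d i : ℂ))) := by
  have hgi : gi * g = 1 := mul_eq_one_comm.mp hg
  have hcg : cj g * cj gi = 1 := by rw [← cj_mul, hg, cj_one]
  set D : Mat n := diagonal (fun i => (d i : ℂ)) with hD
  set a := gi * cj g with ha
  set b := cj gi * g with hb
  have hab : a * b = 1 := by
    rw [ha, hb, Matrix.mul_assoc, ← Matrix.mul_assoc (cj g), hcg, Matrix.one_mul, hgi]
  have hba : b * a = 1 := mul_eq_one_comm.mp hab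
  have hcja : cj a = b := by rw [ha, cj_mul, cj_cj]
  have hcjb : cj b = a := by rw [hb, cj_mul, cj_cj]
  have haC : ac a b C = C := by
    rw [cj_ac, hC] at hN
    rw [ha, hb, ← ac_ac, hN, ac_ac, hgi, ac_one]
  obtain ⟨hEC, hE⟩ := conj_sub_strict h hab haC
  rw [← hD] at hEC hE
  set E := (1 / 2 : ℂ) • (a * D * b - D) with hEdef
  have hEC' : ad E C = 0 := by rw [hEdef, ad_smul, hEC, smul_zero]
  have hE' : ∀ i j, d i ≤ d j → E i j = 0 := fun i j hij => by
    rw [hEdef, Matrix.smul_apply, hE i j hij, smul_zero]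
  obtain ⟨X, hX, hu⟩ := exists_strict d hE'
  have haut := strict_intertwiner_aut h hEC' hE' hX hu
  have hunit := isUnit_one_add_strict d hX
  rw [← hD] at hu
  set u := 1 + X
  have huv : u * u⁻¹ = 1 := Matrix.mul_nonsing_inv _ ((Matrix.isUnit_iff_isUnit_det _).mp hunit)
  set v := u⁻¹
  refine ⟨u, v, huv, ?_, ?_⟩
  · rw [ac, haut, Matrix.mul_assoc, ← Matrix.mul_kronecker_mul, huv]; simp
  set D' := D + E with hD'
  have hD'eq : D' = (1 / 2 : ℂ) • (D + a * D * b) := by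
    rw [hD', hEdef]
    ext i j
    simp only [Matrix.add_apply, Matrix.smul_apply, Matrix.sub_apply, smul_eq_mul]
    ring
  have hcjD : cj D = D := cj_diagonal d
  have hcjD' : cj D' = (1 / 2 : ℂ) • (D + b * D * a) := by
    have h1 : cj (D + a * D * b) = D + b * D * a := by
      rw [cj_add, cj_mul, cj_mul, hcja, hcjb, hcjD]
    rw [hD'eq, ← h1]
    ext i j
    simp only [cj, Matrix.map_apply, Matrix.smul_apply, smul_eq_mul, map_mul]
    congr 1
    rw [map_div₀, map_one, Complex.conj_ofNat]
  have hbD : b * D' = cj D' * b := by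
    rw [hcjD', hD'eq, Matrix.mul_smul, Matrix.smul_mul, Matrix.mul_add, Matrix.add_mul,
      Matrix.mul_assoc (b * D), hab, Matrix.mul_one, Matrix.mul_assoc a, ← Matrix.mul_assoc b a, hba,
      Matrix.one_mul, add_comm]
  have hDv : D * cj v = cj v * cj D' := by
    have h1 : cj u * D = cj D' * cj u := by
      conv_lhs => rw [← hcjD]
      rw [← cj_mul, hu, cj_mul]
    have h2 : cj u * cj v = 1 := by rw [← cj_mul, huv, cj_one]
    have h3 : cj v * cj u = 1 := mul_eq_one_comm.mp h2
    calc D * cj v = cj v * (cj u * D) * cj v := by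
          rw [← Matrix.mul_assoc, h3, Matrix.one_mul]
      _ = cj v * cj D' := by
          rw [h1, Matrix.mul_assoc, Matrix.mul_assoc, h2, Matrix.mul_one]
  have hal : cj (v * gi) * (g * u) = cj v * b * u := by
    rw [cj_mul, hb]; simp only [Matrix.mul_assoc]
  rw [hal]
  change cj v * b * u * D = D * (cj v * b * u)
  calc cj v * b * u * D = cj v * (b * D') * u := by
        rw [Matrix.mul_assoc (cj v * b), hu]; simp only [Matrix.mul_assoc]
    _ = cj v * cj D' * b * u := by rw [hbD]; simp only [Matrix.mul_assoc]
    _ = D * (cj v * b * u) := by rw [← hDv]; simp only [Matrix.mul_assoc]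

lemma exists_spectral {𝕜 : Type*} [RCLike 𝕜] {A : Matrix (Fin n) (Fin n) 𝕜} (hA : A.IsHermitian) :
    ∃ (U : Matrix (Fin n) (Fin n) 𝕜) (e : Fin n → ℝ), Uᴴ * U = 1 ∧
      A = U * diagonal (fun i => (e i : 𝕜)) * Uᴴ ∧ (A.PosDef → ∀ i, 0 < e i) := by
  refine ⟨hA.eigenvectorUnitary, hA.eigenvalues, ?_, ?_, fun h i => h.eigenvalues_pos i⟩
  · exact Unitary.coe_star_mul_self _
  · exact hA.spectral_theorem

/-- A positive definite matrix is determined by its square. -/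
lemma posDef_sqrt_unique {P Q : Mat n} (hP : P.PosDef) (hQ : Q.PosDef) (h : P * P = Q * Q) :
    P = Q := by
  obtain ⟨U, e, hU, hPe, hpos⟩ := exists_spectral hP.1
  have hU' : U * Uᴴ = 1 := mul_eq_one_comm.mp hU
  replace hpos := hpos hP
  -- `Q` commutes with `P * P = Q * Q`, hence with `P`, because squaring is injective on the
  -- positive eigenvalues of `P`.
  set Q' := Uᴴ * Q * U with hQ'
  set Δ : Mat n := diagonal (fun i => (e i : ℂ)) with hΔ
  have hPU : P = U * Δ * Uᴴ := hPe
  have hΔP : Uᴴ * P * U = Δ := by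
    rw [hPU, Matrix.mul_assoc, Matrix.mul_assoc (U * Δ), hU, Matrix.mul_one, ← Matrix.mul_assoc, hU,
      Matrix.one_mul]
  have hmul : ∀ Y Z : Mat n, (Uᴴ * Y * U) * (Uᴴ * Z * U) = Uᴴ * (Y * Z) * U := fun Y Z => by
    simp only [Matrix.mul_assoc]
    rw [← Matrix.mul_assoc U, hU', Matrix.one_mul]
  have hsq : Δ * Δ = Q' * Q' := by rw [← hΔP, hQ', hmul, hmul, h]
  have hcomm : Δ * Δ * Q' = Q' * (Δ * Δ) := by rw [hsq, Matrix.mul_assoc]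
  have hcomm' : Δ * Q' = Q' * Δ := by
    ext i j
    have h1 := congrFun (congrFun hcomm i) j
    rw [hΔ, Matrix.diagonal_mul_diagonal, Matrix.diagonal_mul, Matrix.mul_diagonal] at h1
    rw [hΔ, Matrix.diagonal_mul, Matrix.mul_diagonal]
    have h2 : ((e i : ℂ) + e j) * ((e i : ℂ) * Q' i j - Q' i j * e j) = 0 := by
      linear_combination h1
    refine sub_eq_zero.mp ((mul_eq_zero.mp h2).resolve_left ?_)
    rw [← Complex.ofReal_add, Complex.ofReal_eq_zero]
    exact (add_pos (hpos i) (hpos j)).ne'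
  have hPQ : P * Q = Q * P := by
    have h1 : Uᴴ * (P * Q) * U = Uᴴ * (Q * P) * U := by
      rw [← hmul, ← hmul, hΔP, ← hQ', hcomm']
    have h2 := congrArg (fun Y => U * Y * Uᴴ) h1
    simp only [Matrix.mul_assoc, hU', Matrix.mul_one] at h2
    simpa only [← Matrix.mul_assoc, hU', Matrix.one_mul] using h2
  have h3 : (P + Q) * (P - Q) = 0 := by
    rw [Matrix.add_mul, Matrix.mul_sub, Matrix.mul_sub, h, hPQ]; abel
  exact sub_eq_zero.mp ((hP.add hQ).isUnit.mul_right_eq_zero.mp h3)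

lemma moment_trace {C : Ten n} {d : Fin n → ℝ} {s : ℝ} (h : IsGraded C d s) (X : Mat n) :
    ip (ad X C) C = Matrix.trace (diagonal (fun i => ((d i - s : ℝ) : ℂ)) * X) := by
  rw [h.moment]
  simp [Matrix.trace]

/-- If the automorphism `α` of `C` commutes with `diagonal d`, then in an eigenbasis of `αᴴ * α` the
tensor is supported where the eigenvalues multiply, so that every real power of `αᴴ * α` is an
automorphism. By the moment identity, `log (αᴴ * α)` has the same pairing with `C` and with
`αᴴ · C`; the difference of these pairings is a sum of nonnegative terms
`log x * (x - 1)` times squared absolute values of the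
coordinates of `C` in that basis. -/
lemma spectral_mul_of_aut {C : Ten n} {d : Fin n → ℝ} {s : ℝ} (h : IsGraded C d s)
    {α β : Mat n} (hαβ : α * β = 1) (hα : ac α β C = C)
    (hcomm : Commute α (diagonal (fun i => (d i : ℂ))))
    {U : Mat n} {r : Fin n → ℝ} (hU : Uᴴ * U = 1) (hr : ∀ i, 0 < r i)
    (hR : αᴴ * α = U * diagonal (fun i => (r i : ℂ)) * Uᴴ) (k i j : Fin n)
    (hk : ac Uᴴ U C k (i, j) ≠ 0) : r k = r i * r j := by
  have hU' : U * Uᴴ = 1 := mul_eq_one_comm.mp hU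
  set M : Mat n := diagonal (fun i => ((d i - s : ℝ) : ℂ)) with hM
  set C' := ac Uᴴ U C with hC'
  set L : Mat n := diagonal (fun i => (Real.log (r i) : ℂ)) with hL
  set A := U * L * Uᴴ with hA
  have hβα : βᴴ * αᴴ = 1 := by rw [← Matrix.conjTranspose_mul, hαβ, Matrix.conjTranspose_one]
  have hαβ' : αᴴ * βᴴ = 1 := mul_eq_one_comm.mp hβα
  have hconjA : Uᴴ * A * U = L := by
    rw [hA, Matrix.mul_assoc, Matrix.mul_assoc (U * L), hU, Matrix.mul_one, ← Matrix.mul_assoc, hU,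
      Matrix.one_mul]
  -- `hframe` passes to the eigenbasis `U` of `αᴴ * α`, in which `A = log (αᴴ * α)` becomes `L`.
  have hframe : ∀ Y : Ten n, ip (ad A (ac U Uᴴ Y)) C = ip (ad L Y) C' := fun Y => by
    rw [ad_ac hU', hconjA, ip_ac, Matrix.conjTranspose_conjTranspose]
  have hCU : C = ac U Uᴴ C' := by rw [hC', ac_ac, hU', ac_one]
  have hMα : M * αᴴ = αᴴ * M := by
    have h1 : M = diagonal (fun i => (d i : ℂ)) - (s : ℂ) • 1 := by
      ext i j
      by_cases hij : i = j <;> simp [hM, hij]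
    have h2 : diagonal (fun i => (d i : ℂ)) * αᴴ = αᴴ * diagonal (fun i => (d i : ℂ)) := by
      have := congrArg Matrix.conjTranspose hcomm.eq
      rw [Matrix.conjTranspose_mul, Matrix.conjTranspose_mul, Matrix.diagonal_conjTranspose] at this
      have hst : (star fun i => (d i : ℂ)) = fun i => (d i : ℂ) := by
        funext i; simp
      rwa [hst] at this
    rw [h1, Matrix.sub_mul, Matrix.mul_sub, h2]; simp
  have e1 : ip (ad A C) C = ip (ad L C') C' := by
    rw [← hframe, ← hCU]
  have e2 : ip (ad A (ac αᴴ βᴴ C)) C = ip (ad A C) C := by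
    rw [ad_ac hαβ', ip_ac, Matrix.conjTranspose_conjTranspose, Matrix.conjTranspose_conjTranspose,
      hα, moment_trace h, moment_trace h, ← hM]
    rw [← Matrix.mul_assoc, Matrix.trace_mul_comm, ← Matrix.mul_assoc, ← Matrix.mul_assoc, ← hMα,
      Matrix.mul_assoc M, hαβ', Matrix.mul_one]
  have hRinv : β * βᴴ = U * diagonal (fun i => ((r i)⁻¹ : ℂ)) * Uᴴ := by
    have h1 : (αᴴ * α) * (β * βᴴ) = 1 := by
      rw [Matrix.mul_assoc, ← Matrix.mul_assoc α, hαβ, Matrix.one_mul, hαβ']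
    have h2 : (αᴴ * α) * (U * diagonal (fun i => ((r i)⁻¹ : ℂ)) * Uᴴ) = 1 := by
      rw [hR]
      simp only [Matrix.mul_assoc]
      rw [← Matrix.mul_assoc Uᴴ U, hU, Matrix.one_mul, ← Matrix.mul_assoc (diagonal _),
        Matrix.diagonal_mul_diagonal]
      have : (fun i => (r i : ℂ) * (r i : ℂ)⁻¹) = fun _ => 1 := by
        funext i
        exact mul_inv_cancel₀ (Complex.ofReal_ne_zero.mpr (hr i).ne')
      rw [this, Matrix.diagonal_one, Matrix.one_mul, hU']
    exact left_inv_eq_right_inv (mul_eq_one_comm.mp h1) h2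
  have e3 : ac αᴴ βᴴ C = ac U Uᴴ
      (ac (diagonal (fun i => (r i : ℂ))) (diagonal (fun i => ((r i)⁻¹ : ℂ))) C') := by
    conv_lhs => rw [← hα]
    rw [ac_ac, hR, hRinv, hC', ac_ac, ac_ac]
    simp only [Matrix.mul_assoc]
  rw [e3, hframe, e1, ip_apply, ip_apply] at e2
  have hterm : ∀ k i j, (Real.log (r k) - Real.log (r i) - Real.log (r j)) *
      (r k / (r i * r j) - 1) ≥ 0 ∧ ((Real.log (r k) - Real.log (r i) - Real.log (r j)) *
      (r k / (r i * r j) - 1) = 0 → r k = r i * r j) := by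
    intro k i j
    have hij := mul_pos (hr i) (hr j)
    have hlog : Real.log (r k) - Real.log (r i) - Real.log (r j) =
        Real.log (r k / (r i * r j)) := by
      rw [Real.log_div (hr k).ne' hij.ne', Real.log_mul (hr i).ne' (hr j).ne']; ring
    have hq : 0 < r k / (r i * r j) := div_pos (hr k) hij
    rw [hlog]
    constructor
    · rcases le_total 1 (r k / (r i * r j)) with h1 | h1
      · exact mul_nonneg (Real.log_nonneg h1) (by linarith)
      · exact mul_nonneg_of_nonpos_of_nonpos (Real.log_nonpos hq.le h1) (by linarith)
    · intro h0
      have : r k / (r i * r j) = 1 := by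
        rcases mul_eq_zero.mp h0 with h1 | h1
        · exact Real.eq_one_of_pos_of_log_eq_zero hq h1
        · linarith
      rwa [div_eq_one_iff_eq hij.ne'] at this
  have hsum : ∑ k, ∑ p : Fin n × Fin n, (Real.log (r k) - Real.log (r p.1) - Real.log (r p.2)) *
      (r k / (r p.1 * r p.2) - 1) * Complex.normSq (C' k p) = 0 := by
    rw [← sub_eq_zero, ← Finset.sum_sub_distrib] at e2
    rw [← Complex.ofReal_eq_zero, ← e2, Complex.ofReal_sum]
    refine Finset.sum_congr rfl fun k _ => ?_
    rw [← Finset.sum_sub_distrib, Complex.ofReal_sum]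
    refine Finset.sum_congr rfl fun p _ => ?_
    obtain ⟨i, j⟩ := p
    rw [hL, ad_diagonal, ad_diagonal, ac, diagonal_mul_kron, Matrix.diagonal_mul]
    push_cast
    rw [← Complex.mul_conj]
    have h1 : (r i : ℂ) ≠ 0 := Complex.ofReal_ne_zero.mpr (hr i).ne'
    have h2 : (r j : ℂ) ≠ 0 := Complex.ofReal_ne_zero.mpr (hr j).ne'
    change _ = _ - _ * (starRingEnd ℂ) _
    rw [show star (C' k (i, j)) = (starRingEnd ℂ) (C' k (i, j)) from rfl]
    field_simp
  rw [Finset.sum_eq_zero_iff_of_nonneg fun k _ => Finset.sum_nonneg fun p _ =>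
    mul_nonneg (hterm k p.1 p.2).1 (Complex.normSq_nonneg _)] at hsum
  have h1 := hsum k (Finset.mem_univ k)
  rw [Finset.sum_eq_zero_iff_of_nonneg fun p _ =>
    mul_nonneg (hterm k p.1 p.2).1 (Complex.normSq_nonneg _)] at h1
  have h2 := h1 (i, j) (Finset.mem_univ _)
  refine (hterm k i j).2 ((mul_eq_zero.mp h2).resolve_right ?_)
  exact fun h3 => hk (Complex.normSq_eq_zero.mp h3)

/-! ### Comparison of real tensors in one complex orbit -/

/-- A positive operator whose eigenvalues multiply along the support of `C` is an automorphism. -/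
lemma spectral_aut {C : Ten n} {U : Mat n} (hU : Uᴴ * U = 1) {f : Fin n → ℂ} (hf : ∀ i, f i ≠ 0)
    (h : ∀ k i j, ac Uᴴ U C k (i, j) ≠ 0 → f k = f i * f j) :
    ac (U * diagonal f * Uᴴ) (U * diagonal (fun i => (f i)⁻¹) * Uᴴ) C = C := by
  have hU' : U * Uᴴ = 1 := mul_eq_one_comm.mp hU
  have h1 : ac (diagonal f) (diagonal fun i => (f i)⁻¹) (ac Uᴴ U C) = ac Uᴴ U C := by
    ext k ⟨i, j⟩
    rw [ac, diagonal_mul_kron, Matrix.diagonal_mul]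
    by_cases hc : ac Uᴴ U C k (i, j) = 0
    · simp [hc]
    · rw [h k i j hc]
      field_simp [hf i, hf j]
  calc _ = ac U Uᴴ (ac (diagonal f) (diagonal fun i => (f i)⁻¹) (ac Uᴴ U C)) := by
        rw [ac_ac, ac_ac]; simp only [Matrix.mul_assoc]
    _ = C := by rw [h1, ac_ac, hU', ac_one]

lemma posDef_spectral {U : Mat n} (hU : Uᴴ * U = 1) {r : Fin n → ℝ} (hr : ∀ i, 0 < r i) :
    (U * diagonal (fun i => (r i : ℂ)) * Uᴴ).PosDef := by
  have h1 : (diagonal (fun i => (r i : ℂ)) : Mat n).PosDef := by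
    rw [Matrix.posDef_diagonal_iff]
    exact fun i => Complex.zero_lt_real.mpr (hr i)
  have hunit : IsUnit U := IsUnit.of_mul_eq_one _ (mul_eq_one_comm.mp hU)
  exact (Matrix.IsUnit.posDef_star_right_conjugate_iff hunit).mpr h1

/-- If `α` is a cocycle (`α * conj α = 1`) and `Q` the positive square root of `αᴴ * α`, then `Q` is
fixed by the twisted conjugation `Q ↦ αᴴ * conj Q * α`. -/
lemma sqrt_fixed {α Q : Mat n} (hα : α * cj α = 1) (hQ : Q.PosDef) (hQQ : Q * Q = αᴴ * α) :
    αᴴ * cj Q * α = Q := by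
  have hunit : IsUnit α := IsUnit.of_mul_eq_one _ hα
  have hcjQ : (cj Q).PosDef := by
    have : cj Q = Qᵀ := by
      conv_lhs => rw [← hQ.1.eq]
      ext; simp [cj]
    rw [this]
    exact hQ.transpose
  have hQ2 : (αᴴ * cj Q * α).PosDef :=
    (Matrix.IsUnit.posDef_star_left_conjugate_iff hunit).mpr hcjQ
  refine posDef_sqrt_unique hQ2 hQ ?_
  have h1 : cj Q * (cj Q * (α * αᴴ)) = 1 := by
    have h2 : cj (αᴴ) * αᴴ = 1 := by
      rw [cj_conjTranspose, ← Matrix.conjTranspose_mul, hα, Matrix.conjTranspose_one]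
    rw [← Matrix.mul_assoc, ← cj_mul, hQQ, cj_mul, Matrix.mul_assoc, ← Matrix.mul_assoc (cj α),
      mul_eq_one_comm.mp hα, Matrix.one_mul, h2]
  have h2 : cj Q * (α * αᴴ) * cj Q = 1 := mul_eq_one_comm.mp h1
  calc αᴴ * cj Q * α * (αᴴ * cj Q * α) = αᴴ * (cj Q * (α * αᴴ) * cj Q) * α := by
        simp only [Matrix.mul_assoc]
    _ = Q * Q := by rw [h2, Matrix.mul_one, hQQ]

/-- A real matrix regarded as a complex one. -/
def cplx {m m' : Type*} (X : Matrix m m' ℝ) : Matrix m m' ℂ := X.map Complex.ofRealHom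

lemma cplx_mul {m : Type*} (X : Matrix (Fin n) (Fin n) ℝ) (Y : Matrix (Fin n) m ℝ) :
    cplx (X * Y) = cplx X * cplx Y := by
  simp [cplx, Matrix.map_mul]

lemma cplx_one : cplx (1 : Matrix (Fin n) (Fin n) ℝ) = 1 := by
  ext i j; simp [cplx, Matrix.one_apply, apply_ite]

lemma cplx_transpose (X : Matrix (Fin n) (Fin n) ℝ) : cplx Xᵀ = (cplx X)ᴴ := by
  ext; simp [cplx]

/-- A real positive definite matrix, given as a complex matrix, is `hᵀ * h` with `h` real
invertible. -/
lemma exists_real_factor {G : Mat n} (hG : G.PosDef) (hreal : cj G = G) :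
    ∃ h : GL (Fin n) ℝ, (cplx (h : Matrix (Fin n) (Fin n) ℝ))ᴴ * cplx (h : Matrix _ _ ℝ) = G := by
  set A : Matrix (Fin n) (Fin n) ℝ := G.map Complex.re with hA
  have hAG : cplx A = G := by
    ext i j
    have := congrFun (congrFun hreal i) j
    exact Complex.conj_eq_iff_re.mp this
  have hAh : A.IsHermitian := by
    ext i j
    have := congrFun (congrFun hG.1.eq i) j
    simp only [Matrix.conjTranspose_apply, hA, Matrix.map_apply, star_trivial]
    rw [← this]; simp
  have hApos : A.PosDef := by
    refine Matrix.PosDef.of_dotProduct_mulVec_pos hAh fun {x} hx => ?_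
    have hx' : (fun i => (x i : ℂ)) ≠ 0 := fun h0 => hx (by
      funext i; exact Complex.ofReal_eq_zero.mp (congrFun h0 i))
    have h1 := hG.dotProduct_mulVec_pos hx'
    have h2 : star (fun i => (x i : ℂ)) ⬝ᵥ (G *ᵥ fun i => (x i : ℂ)) =
        ((star x ⬝ᵥ (A *ᵥ x) : ℝ) : ℂ) := by
      rw [← hAG]
      simp [dotProduct, Matrix.mulVec, cplx]
    rw [h2] at h1
    exact Complex.zero_lt_real.mp h1
  obtain ⟨U, e, hU, hAe, hpos⟩ := exists_spectral hAh
  replace hpos := hpos hApos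
  set h : Matrix (Fin n) (Fin n) ℝ := diagonal (fun i => Real.sqrt (e i)) * Uᵀ with hh
  have hhA : hᵀ * h = A := by
    rw [hAe, hh, Matrix.transpose_mul, Matrix.diagonal_transpose, Matrix.transpose_transpose,
      Matrix.mul_assoc, ← Matrix.mul_assoc (diagonal _), Matrix.diagonal_mul_diagonal]
    have : (fun i => Real.sqrt (e i) * Real.sqrt (e i)) = e := by
      funext i; exact Real.mul_self_sqrt (hpos i).le
    rw [this, Matrix.mul_assoc]; simp
  have hdet : h.det ≠ 0 := fun h0 => by
    have := hApos.det_pos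
    rw [← hhA, Matrix.det_mul, h0, mul_zero] at this
    exact lt_irrefl _ this
  refine ⟨Matrix.GeneralLinearGroup.mkOfDetNeZero h hdet, ?_⟩
  change (cplx h)ᴴ * cplx h = G
  rw [← cplx_transpose, ← cplx_mul, hhA, hAG]

/-- If a real graded critical tensor `C` has a real tensor `g · C` in its complex orbit, then the real
orbit of `g · C` meets the unitary orbit of `C`. With `G = g * u` as in `exists_commuting`,
`α = conj(G)⁻¹ * G` and `b = (αᴴ * α)^(1/4)`, the positive form `(G⁻¹)ᴴ * b² * G⁻¹` is real by
`sqrt_fixed`, hence equal to `hᵀ * h` with `h` real, and `k = h * G * b⁻¹` is unitary. -/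
lemma exists_unitary {C : Ten n} {d : Fin n → ℝ} {s : ℝ} (hgr : IsGraded C d s) (hC : cj C = C)
    {g gi : Mat n} (hg : g * gi = 1) (hN : cj (ac g gi C) = ac g gi C) :
    ∃ (h : GL (Fin n) ℝ) (k : Mat n), kᴴ * k = 1 ∧
      ac (cplx (h : Matrix (Fin n) (Fin n) ℝ)) (cplx ((h⁻¹ : GL (Fin n) ℝ) : Matrix _ _ ℝ))
        (ac g gi C) = ac k kᴴ C := by
  obtain ⟨u, v, huv, huC, hcomm⟩ := exists_commuting hgr hC hg hN
  set G := g * u with hGdef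
  set Gi := v * gi with hGi
  have hGG : G * Gi = 1 := by
    rw [hGdef, hGi, Matrix.mul_assoc, ← Matrix.mul_assoc u, huv, Matrix.one_mul, hg]
  have hGG' : Gi * G = 1 := mul_eq_one_comm.mp hGG
  have hGC : ac G Gi C = ac g gi C := by rw [hGdef, hGi, ← ac_ac, huC]
  have hcGG : cj G * cj Gi = 1 := by rw [← cj_mul, hGG, cj_one]
  have hcGG' : cj Gi * cj G = 1 := mul_eq_one_comm.mp hcGG
  set α := cj Gi * G with hα
  have hcα : cj α = Gi * cj G := by rw [hα, cj_mul, cj_cj]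
  have hαα : α * cj α = 1 := by
    rw [hcα, hα, Matrix.mul_assoc, ← Matrix.mul_assoc G, hGG, Matrix.one_mul, hcGG']
  have hαC : ac α (cj α) C = C := by
    have h1 : ac (cj G) (cj Gi) C = ac G Gi C := by
      rw [hGC, ← hN, ← hGC, cj_ac, hC]
    rw [hcα, hα, ← ac_ac, ← h1, ac_ac, hcGG', ac_one]
  have hαunit : IsUnit α := IsUnit.of_mul_eq_one _ hαα
  have hR : (αᴴ * α).PosDef := Matrix.PosDef.conjTranspose_mul_self _
    (Matrix.mulVec_injective_iff_isUnit.mpr hαunit)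
  obtain ⟨U, r, hU, hRe, hpos⟩ := exists_spectral hR.1
  replace hpos := hpos hR
  have hmul := spectral_mul_of_aut hgr hαα hαC hcomm hU hpos hRe
  -- The fourth root `b` of `αᴴ * α` is an automorphism of `C`, with square `Q = (αᴴ * α)^(1/2)`.
  set f : Fin n → ℝ := fun i => Real.sqrt (Real.sqrt (r i)) with hf
  have hfpos : ∀ i, 0 < f i := fun i => Real.sqrt_pos.mpr (Real.sqrt_pos.mpr (hpos i))
  have hfne : ∀ i, (f i : ℂ) ≠ 0 := fun i => Complex.ofReal_ne_zero.mpr (hfpos i).ne'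
  have hff : ∀ i, f i * f i = Real.sqrt (r i) := fun i => Real.mul_self_sqrt (Real.sqrt_nonneg _)
  have hbC := spectral_aut (C := C) hU (f := fun i => (f i : ℂ)) hfne fun k i j hk => by
    rw [← Complex.ofReal_mul, hf]
    simp only
    rw [hmul k i j hk, Real.sqrt_mul (hpos i).le, Real.sqrt_mul (Real.sqrt_nonneg _)]
  have hUmul : ∀ p q : Fin n → ℂ, (U * diagonal p * Uᴴ) * (U * diagonal q * Uᴴ) =
      U * diagonal (fun i => p i * q i) * Uᴴ := fun p q => by
    rw [← Matrix.diagonal_mul_diagonal]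
    simp only [Matrix.mul_assoc]
    rw [← Matrix.mul_assoc Uᴴ U, hU, Matrix.one_mul]
  set b := U * diagonal (fun i => (f i : ℂ)) * Uᴴ with hb
  set bi := U * diagonal (fun i => (f i : ℂ)⁻¹) * Uᴴ with hbi
  have hbbi : b * bi = 1 := by
    rw [hb, hbi, hUmul]
    have : (fun i => (f i : ℂ) * (f i : ℂ)⁻¹) = fun _ => 1 := by
      funext i; exact mul_inv_cancel₀ (hfne i)
    rw [this, Matrix.diagonal_one, Matrix.mul_one, mul_eq_one_comm.mp hU]
  have hbib : bi * b = 1 := mul_eq_one_comm.mp hbbi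
  have hbiC : ac bi b C = C := by
    conv_lhs => rw [← hbC, ac_ac, hbib, ac_one]
  have hbh : bᴴ = b := (posDef_spectral hU hfpos).1
  have hbih : biᴴ = bi := by
    have h1 : biᴴ * b = 1 := by
      conv_lhs => rw [← hbh, ← Matrix.conjTranspose_mul, hbbi, Matrix.conjTranspose_one]
    exact left_inv_eq_right_inv h1 hbbi
  set Q := b * b with hQ
  have hQe : Q = U * diagonal (fun i => (Real.sqrt (r i) : ℂ)) * Uᴴ := by
    rw [hQ, hb, hUmul]
    simp only [← Complex.ofReal_mul, hff]
  have hQpos : Q.PosDef := by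
    rw [hQe]; exact posDef_spectral hU fun i => Real.sqrt_pos.mpr (hpos i)
  have hQQ : Q * Q = αᴴ * α := by
    rw [hQe, hUmul, hRe]
    simp only [← Complex.ofReal_mul, Real.mul_self_sqrt (hpos _).le]
    rfl
  have hfix := sqrt_fixed hαα hQpos hQQ
  set S := Giᴴ * Q * Gi with hS
  have hGiunit : IsUnit Gi := IsUnit.of_mul_eq_one _ hGG'
  have hSpos : S.PosDef := (Matrix.IsUnit.posDef_star_left_conjugate_iff hGiunit).mpr hQpos
  have hGh : Giᴴ * Gᴴ = 1 := by rw [← Matrix.conjTranspose_mul, hGG, Matrix.conjTranspose_one]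
  have hGh' : Gᴴ * Giᴴ = 1 := mul_eq_one_comm.mp hGh
  have hSreal : cj S = S := by
    have h1 : αᴴ = Gᴴ * (cj Gi)ᴴ := by rw [hα, Matrix.conjTranspose_mul]
    rw [h1, hα] at hfix
    conv_rhs => rw [hS, ← hfix]
    rw [hS, cj_mul, cj_mul, cj_conjTranspose]
    calc _ = (Giᴴ * Gᴴ) * ((cj Gi)ᴴ * cj Q * cj Gi) * (G * Gi) := by
          rw [hGh, hGG, Matrix.one_mul, Matrix.mul_one]
      _ = _ := by simp only [Matrix.mul_assoc]
  obtain ⟨h, hh⟩ := exists_real_factor hSpos hSreal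
  set H := cplx (h : Matrix (Fin n) (Fin n) ℝ) with hH
  set Hi := cplx ((h⁻¹ : GL (Fin n) ℝ) : Matrix (Fin n) (Fin n) ℝ) with hHi
  have hHHi : H * Hi = 1 := by
    rw [hH, hHi, ← cplx_mul, ← Units.val_mul, mul_inv_cancel, Units.val_one, cplx_one]
  have hk : (H * (G * bi))ᴴ * (H * (G * bi)) = 1 := by
    calc (H * (G * bi))ᴴ * (H * (G * bi)) = bi * (Gᴴ * (Hᴴ * H) * G) * bi := by
          rw [Matrix.conjTranspose_mul, Matrix.conjTranspose_mul, hbih]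
          simp only [Matrix.mul_assoc]
      _ = bi * ((Gᴴ * Giᴴ) * Q * (Gi * G)) * bi := by
          rw [hh, hS]; simp only [Matrix.mul_assoc]
      _ = (bi * b) * (b * bi) := by
          rw [hGh', hGG', Matrix.one_mul, Matrix.mul_one, hQ]; simp only [Matrix.mul_assoc]
      _ = 1 := by rw [hbib, hbbi, Matrix.one_mul]
  refine ⟨h, H * (G * bi), hk, ?_⟩
  have hkinv : (H * (G * bi))ᴴ = b * Gi * Hi := by
    refine left_inv_eq_right_inv hk ?_
    calc H * (G * bi) * (b * Gi * Hi) = H * (G * (bi * b) * Gi) * Hi := by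
          simp only [Matrix.mul_assoc]
      _ = 1 := by rw [hbib, Matrix.mul_one, hGG, Matrix.mul_one, hHHi]
  rw [hkinv, ← hGC]
  conv_lhs => rw [← hbiC]
  rw [ac_ac, ac_ac]
  simp only [Matrix.mul_assoc]
  rfl

/-! ### From structure coefficients to tensors -/

/-- The tensor of a complex coefficient array. -/
def toM (c : BilC n) : Ten n := Matrix.of fun k p => c p.1 p.2 k

/-- The tensor of the complexification of a real coefficient array. -/
def rM (c : Bil n) : Ten n := toM (cplxBil c)

lemma rM_apply (c : Bil n) (k i j) : rM c k (i, j) = (c i j k : ℂ) := rfl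

lemma rM_injective {c e : Bil n} (h : rM c = rM e) : c = e := by
  funext i j k
  have := congrFun (congrFun h k) (i, j)
  rw [rM_apply, rM_apply] at this
  exact_mod_cast this

lemma cj_rM (c : Bil n) : cj (rM c) = rM c := by
  ext k ⟨i, j⟩
  simp [cj, rM_apply]

lemma rM_smul (s : ℝ) (c : Bil n) : rM (s • c) = (s : ℂ) • rM c := by
  ext k ⟨i, j⟩
  simp [rM_apply]

lemma toM_actGC (g : GL (Fin n) ℂ) (c : BilC n) :
    toM (actGC g c) = ac (g : Mat n) ((g⁻¹ : GL (Fin n) ℂ) : Mat n) (toM c) := by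
  ext k ⟨i, j⟩
  simp only [toM, actGC, ac, Matrix.of_apply, Finset.sum_apply, Pi.smul_apply, smul_eq_mul,
    Matrix.mul_apply, Fintype.sum_prod_type, Matrix.kroneckerMap_apply, Matrix.mulVec, dotProduct]
  refine Finset.sum_congr rfl fun a _ => Finset.sum_congr rfl fun b _ => ?_
  exact mul_comm _ _

lemma rM_actG (g : GL (Fin n) ℝ) (c : Bil n) :
    rM (actG g c) = ac (cplx (g : Matrix (Fin n) (Fin n) ℝ))
      (cplx ((g⁻¹ : GL (Fin n) ℝ) : Matrix (Fin n) (Fin n) ℝ)) (rM c) := by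
  ext k ⟨i, j⟩
  rw [rM_apply]
  simp only [rM, cplxBil, cplx, toM, actG, ac, Matrix.of_apply, Finset.sum_apply, Pi.smul_apply,
    smul_eq_mul, Matrix.mul_apply, Fintype.sum_prod_type, Matrix.kroneckerMap_apply,
    Matrix.mulVec, dotProduct, Matrix.map_apply, Complex.ofRealHom_eq_coe, Complex.ofReal_sum,
    Complex.ofReal_mul]
  refine Finset.sum_congr rfl fun a _ => Finset.sum_congr rfl fun b _ => ?_
  exact mul_comm _ _

lemma rM_actX (X : Matrix (Fin n) (Fin n) ℝ) (c : Bil n) :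
    rM (actX X c) = ad (cplx X) (rM c) := by
  ext k ⟨i, j⟩
  rw [ad_apply, rM_apply]
  simp [actX, rM_apply, cplx, Matrix.mulVec, dotProduct]

lemma innB_eq_ip (c e : Bil n) : (innB c e : ℂ) = ip (rM c) (rM e) := by
  rw [ip_apply]
  simp only [innB, dotProduct, Fintype.sum_prod_type, rM_apply, Complex.ofReal_sum,
    Complex.ofReal_mul, Complex.star_def, Complex.conj_ofReal]
  rw [Finset.sum_comm]
  refine (Finset.sum_congr rfl fun j _ => Finset.sum_comm).trans ?_
  rw [Finset.sum_comm]
  exact Finset.sum_congr rfl fun k _ => Finset.sum_comm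

lemma ip_ad_transpose (c : Bil n) (X : Mat n) :
    ip (ad Xᵀ (rM c)) (rM c) = ip (ad X (rM c)) (rM c) := by
  rw [ip_ad Xᵀ]
  have hX : Xᵀᴴ = cj X := by ext; simp [cj]
  rw [hX]
  have h : ad (cj X) (rM c) = cj (ad X (rM c)) := by
    ext k ⟨i, j⟩
    rw [ad_apply]
    change _ = starRingEnd ℂ (ad X (rM c) k (i, j))
    rw [ad_apply]
    simp [cj, rM_apply]
  rw [h, ip_apply, ip_apply]
  refine Finset.sum_congr rfl fun k _ => Finset.sum_congr rfl fun p _ => ?_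
  simp [cj, mul_comm, rM, toM, cplxBil]

lemma ip_add_left (C D E : Ten n) : ip (C + D) E = ip C E + ip D E := by
  simp [ip, Matrix.add_mul]

lemma ip_smul_left (t : ℂ) (C E : Ten n) : ip (t • C) E = t * ip C E := by
  simp [ip]

lemma trace_cplx (X : Matrix (Fin n) (Fin n) ℝ) : trace (cplx X) = ((trace X : ℝ) : ℂ) := by
  simp [cplx, Matrix.trace]

/-- The moment identity, given for real symmetric matrices, holds for all complex matrices: for a
real bracket both sides are invariant under `X ↦ Xᵀ` and complex linear in `X`. -/
lemma moment_complex {c : Bil n} {m : Matrix (Fin n) (Fin n) ℝ} (hsymm : mᵀ = m)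
    (hm : ∀ X : Matrix (Fin n) (Fin n) ℝ, Xᵀ = X → trace (m * X) = innB (actX X c) c)
    (X : Mat n) : ip (ad X (rM c)) (rM c) = trace (cplx m * X) := by
  have hreal : ∀ Y : Matrix (Fin n) (Fin n) ℝ, Yᵀ = Y →
      ip (ad (cplx Y) (rM c)) (rM c) = trace (cplx m * cplx Y) := fun Y hY => by
    rw [← rM_actX, ← innB_eq_ip, ← hm Y hY, ← cplx_mul, trace_cplx]
  have htr : ∀ Z : Mat n, trace (cplx m * Zᵀ) = trace (cplx m * Z) := fun Z => by
    have : (cplx m)ᵀ = cplx m := by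
      conv_rhs => rw [← hsymm]
      rfl
    rw [← Matrix.trace_transpose, Matrix.transpose_mul, Matrix.transpose_transpose, this,
      Matrix.trace_mul_comm]
  -- `X + Xᵀ` is a complex combination of two real symmetric matrices.
  set R : Matrix (Fin n) (Fin n) ℝ := Matrix.of fun i j => (X i j).re + (X j i).re with hR
  set J : Matrix (Fin n) (Fin n) ℝ := Matrix.of fun i j => (X i j).im + (X j i).im with hJ
  have hdec : X + Xᵀ = cplx R + Complex.I • cplx J := by
    ext i j
    apply Complex.ext <;> simp [cplx, hR, hJ]
  have h1 : ip (ad (X + Xᵀ) (rM c)) (rM c) = trace (cplx m * (X + Xᵀ)) := by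
    rw [hdec, ad_add, ad_smul, ip_add_left, ip_smul_left, hreal R (by ext; simp [hR, add_comm]),
      hreal J (by ext; simp [hJ, add_comm])]
    simp [Matrix.mul_add]
  rw [ad_add, ip_add_left, ip_ad_transpose, Matrix.mul_add, Matrix.trace_add, htr] at h1
  linear_combination h1 / 2

lemma eq_of_trace_mul {M M' : Mat n} (h : ∀ X : Mat n, trace (M * X) = trace (M' * X)) :
    M = M' := by
  exact Matrix.ext_iff_trace_mul_right.mpr h

/-! ### The gradient of the normalised moment functional -/

lemma innB_add_left (c d e : Bil n) : innB (c + d) e = innB c e + innB d e := by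
  simp [innB, add_dotProduct, Finset.sum_add_distrib]

lemma innB_smul_left (t : ℝ) (c e : Bil n) : innB (t • c) e = t * innB c e := by
  simp [innB, smul_dotProduct, Finset.mul_sum]

lemma innB_comm (c e : Bil n) : innB c e = innB e c := by
  simp only [innB, dotProduct_comm]

lemma innB_add_right (c d e : Bil n) : innB c (d + e) = innB c d + innB c e := by
  rw [innB_comm, innB_add_left, innB_comm d, innB_comm e]

lemma innB_smul_right (t : ℝ) (c e : Bil n) : innB c (t • e) = t * innB c e := by
  rw [innB_comm, innB_smul_left, innB_comm]

lemma innB_self_eq_zero {c : Bil n} (h : innB c c = 0) : c = 0 := by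
  have h0 : ip (rM c) (rM c) = 0 := by rw [← innB_eq_ip, h, Complex.ofReal_zero]
  have h1 : rM c = rM 0 := by
    rw [ip_self_eq_zero h0]
    ext k ⟨i, j⟩
    simp [rM_apply]
  exact rM_injective h1

lemma actX_add (X : Matrix (Fin n) (Fin n) ℝ) (c e : Bil n) :
    actX X (c + e) = actX X c + actX X e := by
  funext i j
  simp only [actX, Pi.add_apply, Matrix.mulVec_add, smul_add, Finset.sum_add_distrib]
  abel

lemma actX_smul (X : Matrix (Fin n) (Fin n) ℝ) (t : ℝ) (c : Bil n) :
    actX X (t • c) = t • actX X c := by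
  funext i j
  simp only [actX, Pi.smul_apply, Matrix.mulVec_smul, smul_sub, Finset.smul_sum, smul_comm t]

lemma innB_actX_comm {X : Matrix (Fin n) (Fin n) ℝ} (hX : Xᵀ = X) (c e : Bil n) :
    innB (actX X c) e = innB (actX X e) c := by
  rw [innB_comm (actX X e)]
  have : (innB (actX X c) e : ℂ) = innB c (actX X e) := by
    rw [innB_eq_ip, innB_eq_ip, rM_actX, rM_actX, ip_ad, ← cplx_transpose, hX]
  exact_mod_cast this

lemma innB_actX_line {X : Matrix (Fin n) (Fin n) ℝ} (hX : Xᵀ = X) (c e : Bil n) (t : ℝ) :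
    innB (actX X (c + t • e)) (c + t • e) =
      innB (actX X c) c + t * (2 * innB (actX X c) e) + t ^ 2 * innB (actX X e) e := by
  simp only [actX_add, actX_smul, innB_add_left, innB_add_right, innB_smul_left, innB_smul_right,
    innB_actX_comm hX e c]
  ring

lemma eq_zero_of_symm_trace {A : Matrix (Fin n) (Fin n) ℝ} (hA : Aᵀ = A)
    (h : ∀ X : Matrix (Fin n) (Fin n) ℝ, Xᵀ = X → trace (A * X) = 0) : A = 0 := by
  have h1 := h A hA
  nth_rewrite 2 [← hA] at h1
  rw [← Matrix.conjTranspose_eq_transpose_of_trivial] at h1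
  exact Matrix.trace_mul_conjTranspose_self_eq_zero_iff.mp h1

/-- `mt` is the moment map on real brackets, in the characterisation by pairings with symmetric
matrices. -/
def IsMoment (mt : Bil n → Matrix (Fin n) (Fin n) ℝ) : Prop :=
  ∀ c : Bil n, (mt c)ᵀ = mt c ∧ ∀ X : Matrix (Fin n) (Fin n) ℝ, Xᵀ = X →
    trace (mt c * X) = innB (actX X c) c

/-- The moment map is quadratic; this is its expansion along a line. -/
lemma IsMoment.line {mt : Bil n → Matrix (Fin n) (Fin n) ℝ} (hmt : IsMoment mt) (c e : Bil n) :
    ∃ D : Matrix (Fin n) (Fin n) ℝ,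
      (∀ X : Matrix (Fin n) (Fin n) ℝ, Xᵀ = X → trace (D * X) = 2 * innB (actX X c) e) ∧
      ∀ t : ℝ, mt (c + t • e) = mt c + t • D + t ^ 2 • mt e := by
  have hD : ∀ X : Matrix (Fin n) (Fin n) ℝ, Xᵀ = X →
      trace ((mt (c + e) - mt c - mt e) * X) = 2 * innB (actX X c) e := fun X hX => by
    rw [Matrix.sub_mul, Matrix.sub_mul, Matrix.trace_sub, Matrix.trace_sub, (hmt _).2 X hX,
      (hmt _).2 X hX, (hmt _).2 X hX]
    have := innB_actX_line hX c e 1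
    rw [one_smul] at this
    rw [this]
    ring
  refine ⟨mt (c + e) - mt c - mt e, hD, fun t => ?_⟩
  refine sub_eq_zero.mp (eq_zero_of_symm_trace ?_ fun X hX => ?_)
  · simp only [Matrix.transpose_sub, Matrix.transpose_add, Matrix.transpose_smul, (hmt _).1]
  · rw [Matrix.sub_mul, Matrix.add_mul, Matrix.add_mul, Matrix.smul_mul, Matrix.smul_mul,
      Matrix.trace_sub, Matrix.trace_add, Matrix.trace_add, Matrix.trace_smul, Matrix.trace_smul,
      hD X hX, (hmt _).2 X hX, (hmt _).2 X hX, (hmt _).2 X hX, innB_actX_line hX]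
    simp only [smul_eq_mul]
    ring

lemma IsMoment.differentiable {mt : Bil n → Matrix (Fin n) (Fin n) ℝ} (hmt : IsMoment mt)
    (i j : Fin n) : Differentiable ℝ fun c : Bil n => mt c i j := by
  set X : Matrix (Fin n) (Fin n) ℝ := Matrix.single i j 1 + Matrix.single j i 1 with hX
  have hXs : Xᵀ = X := by
    rw [hX, Matrix.transpose_add, Matrix.transpose_single, Matrix.transpose_single, add_comm]
  have h : (fun c : Bil n => mt c i j) = fun c => innB (actX X c) c / 2 := by
    funext c
    rw [← (hmt c).2 X hXs, hX, Matrix.mul_add, Matrix.trace_add, Matrix.trace_mul_single,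
      Matrix.trace_mul_single]
    have := congrFun (congrFun (hmt c).1 i) j
    rw [Matrix.transpose_apply] at this
    simp [this]
  rw [h]
  simp only [innB, actX, dotProduct, Matrix.mulVec, Pi.sub_apply, Finset.sum_apply, Pi.smul_apply,
    smul_eq_mul]
  fun_prop

/-- The differential of `F`. The first-order term of `tr (m̃²)` in direction `e` is
`2 tr (m̃(c) D) = 4 ⟨m̃(c)·c, e⟩`, with `D` from `IsMoment.line`. -/
lemma IsMoment.fderiv {mt : Bil n → Matrix (Fin n) (Fin n) ℝ} (hmt : IsMoment mt)
    {F : Bil n → ℝ} (hF : ∀ c : Bil n, F c = trace (mt c * mt c) / (innB c c) ^ 2)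
    {c : Bil n} (hc : innB c c ≠ 0) (e : Bil n) :
    fderiv ℝ F c e = 4 * (innB (actX (mt c) c) e * innB c c -
      trace (mt c * mt c) * innB c e) / (innB c c) ^ 3 := by
  have hdiff : DifferentiableAt ℝ F c := by
    have h1 : F = fun c => (∑ i, ∑ j, mt c i j * mt c j i) / (innB c c) ^ 2 := by
      funext c
      rw [hF]
      simp [Matrix.trace, Matrix.mul_apply]
    have h2 := fun i j => hmt.differentiable i j
    have h3 : Differentiable ℝ fun c : Bil n => innB c c := by
      simp only [innB, dotProduct]
      fun_prop
    have h4 : DifferentiableAt ℝ (fun c : Bil n => ∑ i, ∑ j, mt c i j * mt c j i) c := by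
      fun_prop
    have h5 : DifferentiableAt ℝ (fun c : Bil n => innB c c ^ 2) c := (h3 c).pow 2
    rw [h1]
    simp only [div_eq_mul_inv]
    exact h4.mul (h5.inv (pow_ne_zero 2 hc))
  rw [← hdiff.lineDeriv_eq_fderiv]
  obtain ⟨D, hD, hline⟩ := hmt.line c e
  refine HasLineDerivAt.lineDeriv ?_
  have hT : trace (mt c * D) = 2 * innB (actX (mt c) c) e := by
    rw [Matrix.trace_mul_comm, hD _ (hmt c).1]
  have hφ : (fun t : ℝ => F (c + t • e)) = fun t =>
      (trace (mt c * mt c) + t * (4 * innB (actX (mt c) c) e) +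
        t ^ 2 * (trace (D * D) + 2 * trace (mt c * mt e)) + t ^ 3 * (2 * trace (D * mt e)) +
        t ^ 4 * trace (mt e * mt e)) /
        (innB c c + t * (2 * innB c e) + t ^ 2 * innB e e) ^ 2 := by
    funext t
    rw [hF, hline]
    congr 1
    · simp only [Matrix.add_mul, Matrix.mul_add, Matrix.smul_mul, Matrix.mul_smul,
        Matrix.trace_add, Matrix.trace_smul, smul_eq_mul, Matrix.trace_mul_comm D (mt c), hT,
        Matrix.trace_mul_comm (mt e) (mt c), Matrix.trace_mul_comm (mt e) D]
      ring
    · simp only [innB_add_left, innB_add_right, innB_smul_left, innB_smul_right, innB_comm e c]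
      ring
  have hpoly : ∀ a b p q r : ℝ,
      HasDerivAt (fun t : ℝ => a + t * b + t ^ 2 * p + t ^ 3 * q + t ^ 4 * r) b 0 := by
    intro a b p q r
    have := ((((hasDerivAt_const (0 : ℝ) a).add ((hasDerivAt_id (0 : ℝ)).mul_const b)).add
      ((hasDerivAt_pow 2 (0 : ℝ)).mul_const p)).add
      ((hasDerivAt_pow 3 (0 : ℝ)).mul_const q)).add ((hasDerivAt_pow 4 (0 : ℝ)).mul_const r)
    refine HasDerivAt.congr_deriv this ?_
    simp
  have hden : HasDerivAt (fun t : ℝ => innB c c + t * (2 * innB c e) + t ^ 2 * innB e e)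
      (2 * innB c e) 0 := by
    simpa using hpoly (innB c c) (2 * innB c e) (innB e e) 0 0
  unfold HasLineDerivAt
  rw [hφ]
  refine HasDerivAt.congr_deriv ((hpoly _ _ _ _ _).div (hden.pow 2) (by simpa using hc)) ?_
  simp
  field_simp
  ring

/-- A nonzero bracket is a critical point of `F` exactly when its moment matrix acts on it by a
scalar. -/
lemma IsMoment.gradient_eq_zero_iff {mt : Bil n → Matrix (Fin n) (Fin n) ℝ} (hmt : IsMoment mt)
    {F : Bil n → ℝ} (hF : ∀ c : Bil n, F c = trace (mt c * mt c) / (innB c c) ^ 2)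
    {gF : Bil n → Bil n} (hgF : ∀ c e : Bil n, innB (gF c) e = _root_.fderiv ℝ F c e)
    {c : Bil n} (hc : c ≠ 0) : gF c = 0 ↔ ∃ s : ℝ, actX (mt c) c = s • c := by
  have hN : innB c c ≠ 0 := fun h => hc (innB_self_eq_zero h)
  have hz : ∀ e : Bil n, innB 0 e = 0 := fun e => by simp [innB]
  constructor
  · intro h
    refine ⟨trace (mt c * mt c) / innB c c, ?_⟩
    have key : ∀ e, innB (actX (mt c) c + (-(trace (mt c * mt c) / innB c c)) • c) e = 0 := by
      intro e
      have h1 := hgF c e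
      rw [h, hz, hmt.fderiv hF hN, eq_comm, div_eq_zero_iff] at h1
      have h2 := h1.resolve_right (pow_ne_zero 3 hN)
      rw [innB_add_left, innB_smul_left]
      field_simp
      linarith
    have := innB_self_eq_zero (key _)
    rwa [neg_smul, ← sub_eq_add_neg, sub_eq_zero] at this
  · rintro ⟨s, hs⟩
    refine innB_self_eq_zero ?_
    have hT : trace (mt c * mt c) = s * innB c c := by
      rw [(hmt c).2 _ (hmt c).1, hs, innB_smul_left]
    rw [hgF, hmt.fderiv hF hN, hT, hs, innB_smul_left]
    ring

/-! ### Transfer of critical points -/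

lemma IsCrit.isGraded {C : Ten n} {e : Fin n → ℝ} {s : ℝ}
    (h : IsCrit C (diagonal fun i => (e i : ℂ)) s) : IsGraded C (fun i => e i + s) s := by
  constructor
  · intro k i j hC
    have h1 := congrFun (congrFun h.eigen k) (i, j)
    rw [ad_diagonal, Matrix.smul_apply, smul_eq_mul] at h1
    have h2 := mul_right_cancel₀ hC h1
    have h3 : e k - e i - e j = s := by exact_mod_cast h2
    change e k + s = e i + s + (e j + s)
    linarith
  · intro X
    rw [h.moment]
    simp [Matrix.trace, Matrix.diagonal_mul]

lemma actG_ne_zero {c : Bil n} (hc : c ≠ 0) (h : GL (Fin n) ℝ) : actG h c ≠ 0 := by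
  intro h0
  have hr0 : rM (0 : Bil n) = 0 := by
    ext k ⟨i, j⟩
    simp [rM_apply]
  have h1 : ac (cplx ((h⁻¹ : GL (Fin n) ℝ) : Matrix (Fin n) (Fin n) ℝ))
      (cplx (h : Matrix (Fin n) (Fin n) ℝ)) (rM (actG h c)) = rM c := by
    rw [rM_actG, ac_ac, ← cplx_mul, ← Units.val_mul, inv_mul_cancel, Units.val_one, cplx_one,
      ac_one]
  rw [h0, hr0] at h1
  apply hc
  apply rM_injective
  rw [← h1, hr0]
  simp [ac]

/-- One direction of the theorem. The bracket `h' · μ₂` supplied by `exists_unitary` lies in the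
unitary orbit of a critical tensor, so its moment matrix acts on it by the same scalar `s`. -/
lemma distinguished_of_complex_iso {mt : Bil n → Matrix (Fin n) (Fin n) ℝ} (hmt : IsMoment mt)
    {F : Bil n → ℝ} (hF : ∀ c : Bil n, F c = trace (mt c * mt c) / (innB c c) ^ 2)
    {gF : Bil n → Bil n} (hgF : ∀ c e : Bil n, innB (gF c) e = fderiv ℝ F c e)
    {μ₁ μ₂ : Bil n} (hμ₁ : μ₁ ≠ 0) (hμ₂ : μ₂ ≠ 0) {g gi : Mat n} (hg : g * gi = 1)
    (hiso : rM μ₂ = ac g gi (rM μ₁)) (h : ∃ h : GL (Fin n) ℝ, gF (actG h μ₁) = 0) :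
    ∃ h : GL (Fin n) ℝ, gF (actG h μ₂) = 0 := by
  obtain ⟨h, hh⟩ := h
  have hc := actG_ne_zero hμ₁ h
  obtain ⟨s, hs⟩ := (hmt.gradient_eq_zero_iff hF hgF hc).mp hh
  set c := actG h μ₁ with hcdef
  have hcrit : IsCrit (rM c) (cplx (mt c)) s :=
    ⟨moment_complex (hmt c).1 (hmt c).2, by rw [← rM_actX, hs, rM_smul]⟩
  -- A real orthogonal `O` diagonalises the moment matrix, so the rotated tensor `C` stays real.
  obtain ⟨O, e, hO, hOe, -⟩ := exists_spectral (𝕜 := ℝ) (A := mt c)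
    ((Matrix.conjTranspose_eq_transpose_of_trivial _).trans (hmt c).1)
  rw [Matrix.conjTranspose_eq_transpose_of_trivial] at hO hOe
  set P := cplx O with hP
  have hPP : Pᴴ * P = 1 := by rw [hP, ← cplx_transpose, ← cplx_mul, hO, cplx_one]
  have hPP' : P * Pᴴ = 1 := mul_eq_one_comm.mp hPP
  have hdiag : Pᴴ * cplx (mt c) * Pᴴᴴ = diagonal fun i => (e i : ℂ) := by
    have h1 : cplx (mt c) = P * diagonal (fun i => (e i : ℂ)) * Pᴴ := by
      rw [hOe, cplx_mul, cplx_mul, cplx_transpose]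
      congr 2
      ext i j
      by_cases hij : i = j <;> simp [cplx, hij]
    rw [h1, Matrix.conjTranspose_conjTranspose]
    calc Pᴴ * (P * diagonal (fun i => (e i : ℂ)) * Pᴴ) * P
        = (Pᴴ * P) * diagonal (fun i => (e i : ℂ)) * (Pᴴ * P) := by simp only [Matrix.mul_assoc]
      _ = _ := by rw [hPP, Matrix.one_mul, Matrix.mul_one]
  have hcritC := hcrit.unitary (k := Pᴴ) (by rw [Matrix.conjTranspose_conjTranspose, hPP'])
  rw [hdiag, Matrix.conjTranspose_conjTranspose] at hcritC
  set C := ac Pᴴ P (rM c) with hC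
  have hcP : cj P = P := by ext; simp [hP, cj, cplx]
  have hCreal : cj C = C := by
    rw [hC, cj_ac, cj_conjTranspose, hcP, cj_rM]
  set H := cplx (h : Matrix (Fin n) (Fin n) ℝ) with hH
  set Hi := cplx ((h⁻¹ : GL (Fin n) ℝ) : Matrix (Fin n) (Fin n) ℝ) with hHi
  have hHH : Hi * H = 1 := by
    rw [hH, hHi, ← cplx_mul, ← Units.val_mul, inv_mul_cancel, Units.val_one, cplx_one]
  have hHH' : H * Hi = 1 := mul_eq_one_comm.mp hHH
  have hN : ac (g * Hi * P) (Pᴴ * H * gi) C = rM μ₂ := by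
    have hrc : rM c = ac H Hi (rM μ₁) := rM_actG h μ₁
    have e1 : g * Hi * P * (Pᴴ * H) = g := by
      calc g * Hi * P * (Pᴴ * H) = g * (Hi * ((P * Pᴴ) * H)) := by simp only [Matrix.mul_assoc]
        _ = g := by rw [hPP', Matrix.one_mul, hHH, Matrix.mul_one]
    have e2 : Hi * P * (Pᴴ * H * gi) = gi := by
      calc Hi * P * (Pᴴ * H * gi) = Hi * ((P * Pᴴ) * H) * gi := by simp only [Matrix.mul_assoc]
        _ = gi := by rw [hPP', Matrix.one_mul, hHH, Matrix.one_mul]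
    rw [hC, hrc, ac_ac Pᴴ, ac_ac, e1, e2, ← hiso]
  have hGG : g * Hi * P * (Pᴴ * H * gi) = 1 := by
    calc g * Hi * P * (Pᴴ * H * gi) = g * (Hi * ((P * Pᴴ) * H)) * gi := by
          simp only [Matrix.mul_assoc]
      _ = 1 := by rw [hPP', Matrix.one_mul, hHH, Matrix.mul_one, hg]
  obtain ⟨h', k, hk, hkC⟩ := exists_unitary hcritC.isGraded hCreal hGG (by rw [hN, cj_rM])
  rw [hN, ← rM_actG] at hkC
  refine ⟨h', (hmt.gradient_eq_zero_iff hF hgF (actG_ne_zero hμ₂ h')).mpr ⟨s, ?_⟩⟩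
  have hcritk := hcritC.unitary hk
  rw [← hkC] at hcritk
  -- The moment matrix is determined by its pairings with all complex matrices.
  have hM : cplx (mt (actG h' μ₂)) = k * diagonal (fun i => (e i : ℂ)) * kᴴ := by
    refine eq_of_trace_mul fun X => ?_
    rw [← hcritk.moment X, moment_complex (hmt _).1 (hmt _).2]
  apply rM_injective
  rw [rM_actX, rM_smul, hM, hcritk.eigen]

end

/-- If two nonzero nilpotent Lie brackets `μ₁, μ₂ ∈ Vₙ` have isomorphic complexifications,
then the orbit `GL(n,ℝ)·μ₁` is distinguished iff `GL(n,ℝ)·μ₂` is (equivalently,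
`N_{μ₁}` is an Einstein nilradical iff `N_{μ₂}` is). -/
theorem distinguished_iff_of_isomorphic_complexification
    -- the moment map `m̃`: the unique symmetric matrix with `tr(m̃(μ) X) = ⟨X·μ, μ⟩`
    -- for every symmetric `X`
    (mt : Bil n → Matrix (Fin n) (Fin n) ℝ)
    (hmt : ∀ c : Bil n, (mt c)ᵀ = mt c ∧
      ∀ X : Matrix (Fin n) (Fin n) ℝ, Xᵀ = X →
        Matrix.trace (mt c * X) = innB (actX X c) c)
    -- `F(μ) = tr(m̃(μ)²)/⟨μ,μ⟩²`
    (F : Bil n → ℝ) (hF : ∀ c : Bil n, F c = Matrix.trace (mt c * mt c) / (innB c c) ^ 2)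
    -- the Fréchet gradient `∇F`, characterized against the inner product on `Vₙ`
    (gF : Bil n → Bil n) (hgF : ∀ c e : Bil n, innB (gF c) e = fderiv ℝ F c e)
    (μ₁ μ₂ : Bil n)
    (halt₁ : IsAlt μ₁) (hμ₁ : μ₁ ≠ 0) (hjac₁ : Jacobi μ₁) (hnil₁ : IsNilpotentBracket μ₁)
    (halt₂ : IsAlt μ₂) (hμ₂ : μ₂ ≠ 0) (hjac₂ : Jacobi μ₂) (hnil₂ : IsNilpotentBracket μ₂)
    -- the complexifications are isomorphic: `μ₂^ℂ = g·μ₁^ℂ` for some `g ∈ GL(n,ℂ)`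
    (hiso : ∃ g : GL (Fin n) ℂ, cplxBil μ₂ = actGC g (cplxBil μ₁)) :
    (∃ h : GL (Fin n) ℝ, gF (actG h μ₁) = 0) ↔
    (∃ h : GL (Fin n) ℝ, gF (actG h μ₂) = 0) := by
  obtain ⟨g, hg⟩ := hiso
  have hiso' : rM μ₂ = ac (g : Mat n) ((g⁻¹ : GL (Fin n) ℂ) : Mat n) (rM μ₁) := by
    rw [rM, hg, toM_actGC, rM]
  have hgg : (g : Mat n) * ((g⁻¹ : GL (Fin n) ℂ) : Mat n) = 1 := by
    rw [← Units.val_mul, mul_inv_cancel, Units.val_one]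
  have hgg' : ((g⁻¹ : GL (Fin n) ℂ) : Mat n) * (g : Mat n) = 1 := mul_eq_one_comm.mp hgg
  refine ⟨distinguished_of_complex_iso hmt hF hgF hμ₁ hμ₂ hgg hiso',
    distinguished_of_complex_iso hmt hF hgF hμ₂ hμ₁ hgg' ?_⟩
  rw [hiso', ac_ac, hgg', ac_one]

end NilsolitonRealForms
end
end

section
/- The function G₀ : V → ℝ defined by G₀(v) = ⟨⟨m̃(v), m̃(v)⟩⟩ is differentiable, and its Fréchet gradient is given by ∇G₀(v) = 4·m̃(v)v (the operator m̃(v) ∈ 𝔭 applied to the vector v). This is the vector-space lift of the formula grad‖m‖²(x) = 4 X_{m(x)}(x) for the gradient of the norm-squared moment map on projective space. -/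
/-!
Write `⟨⟨A, B⟩⟩ = tr (A Bᵗ)`, `h = w - v` and `X = m̃(w) - m̃(v) ∈ 𝔭`. Expanding the square,
`G₀(w) = G₀(v) + 2 ⟨⟨m̃(v), X⟩⟩ + ⟨⟨X, X⟩⟩`, and the defining property of `m̃(w)` and `m̃(v)`, tested
against `m̃(v)`, turns this into
`G₀(w) - G₀(v) - ⟨4 m̃(v) v, h⟩ = 2 ⟨m̃(v) h, h⟩ + ⟨⟨X, X⟩⟩`.
The first term on the right is quadratic in `h`. So is the second: testing against `X` itself gives
`⟨⟨X, X⟩⟩ = ⟨X h, w + v⟩ ≤ ‖X h‖ ‖w + v‖`, and since the operator norm is at most the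
Hilbert–Schmidt norm (`norm_sq_apply_le_trace`), `⟨⟨X, X⟩⟩ ≤ ‖h‖² ‖w + v‖²`. The remainder is thus
`O(‖h‖²)`.
-/

open scoped RealInnerProductSpace

noncomputable section

namespace MomentMapGradient

/-- The operator norm is bounded by the Hilbert–Schmidt norm. -/
theorem norm_sq_apply_le_trace {V : Type*} [NormedAddCommGroup V] [InnerProductSpace ℝ V]
    [FiniteDimensional ℝ V] (X : V →ₗ[ℝ] V) (h : V) :
    ‖X h‖ ^ 2 ≤ LinearMap.trace ℝ V (X ∘ₗ LinearMap.adjoint X) * ‖h‖ ^ 2 := by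
  let b := stdOrthonormalBasis ℝ V
  rw [LinearMap.trace_eq_sum_inner _ b, ← b.sum_sq_norm_inner_right (X h), Finset.sum_mul]
  refine Finset.sum_le_sum fun i _ => ?_
  rw [LinearMap.comp_apply, ← LinearMap.adjoint_inner_left, ← LinearMap.adjoint_inner_left,
    real_inner_self_eq_norm_sq, ← mul_pow]
  gcongr
  exact norm_inner_le_norm _ _

theorem trace_comp_adjoint_self_nonneg {V : Type*} [NormedAddCommGroup V] [InnerProductSpace ℝ V]
    [FiniteDimensional ℝ V] (X : V →ₗ[ℝ] V) :
    0 ≤ LinearMap.trace ℝ V (X ∘ₗ LinearMap.adjoint X) := by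
  rw [LinearMap.trace_eq_sum_inner _ (stdOrthonormalBasis ℝ V)]
  refine Finset.sum_nonneg fun i _ => ?_
  rw [LinearMap.comp_apply, ← LinearMap.adjoint_inner_left]
  exact real_inner_self_nonneg

/-- Self-improving bound, applied to `X = m̃(w) - m̃(v)`, `h = w - v` and `u = w + v`: the
Hilbert–Schmidt norm of `X` also controls the factor `‖X h‖` on the right of `hX`. -/
theorem trace_le_of_eq_inner {V : Type*} [NormedAddCommGroup V] [InnerProductSpace ℝ V]
    [FiniteDimensional ℝ V] (X : V →ₗ[ℝ] V) (h u : V)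
    (hX : LinearMap.trace ℝ V (X ∘ₗ LinearMap.adjoint X) = ⟪X h, u⟫) :
    LinearMap.trace ℝ V (X ∘ₗ LinearMap.adjoint X) ≤ ‖h‖ ^ 2 * ‖u‖ ^ 2 := by
  have h1 := norm_sq_apply_le_trace X h
  have h0 := trace_comp_adjoint_self_nonneg X
  have h2 := hX.trans_le (real_inner_le_norm (X h) u)
  set t := LinearMap.trace ℝ V (X ∘ₗ LinearMap.adjoint X)
  rcases h0.eq_or_lt with h0 | h0
  · rw [← h0]; positivity
  -- Squaring `t ≤ ‖X h‖ ‖u‖` gives `t² ≤ t ‖h‖² ‖u‖²`, and `t > 0` cancels.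
  · refine le_of_mul_le_mul_left ?_ h0
    calc t * t = t ^ 2 := by ring
      _ ≤ (‖X h‖ * ‖u‖) ^ 2 := by gcongr
      _ = ‖X h‖ ^ 2 * ‖u‖ ^ 2 := by ring
      _ ≤ t * ‖h‖ ^ 2 * ‖u‖ ^ 2 := by gcongr
      _ = t * (‖h‖ ^ 2 * ‖u‖ ^ 2) := by ring

/-- Let `𝔭 ⊆ End(V)` be a subspace of symmetric endomorphisms and `m̃(v) ∈ 𝔭` the
orthogonal projection of the rank-one operator `u ↦ ⟨u,v⟩v`, i.e. the unique element of
`𝔭` with `⟨⟨m̃(v), X⟩⟩ = tr(m̃(v) Xᵗ) = ⟨Xv, v⟩` for all `X ∈ 𝔭`.  Then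
`G₀(v) = ⟨⟨m̃(v), m̃(v)⟩⟩` is differentiable with Fréchet gradient
`∇G₀(v) = 4·m̃(v)v`. -/
theorem gradient_normSq_momentMap
    {V : Type*} [NormedAddCommGroup V] [InnerProductSpace ℝ V] [FiniteDimensional ℝ V]
    (pS : Submodule ℝ (V →ₗ[ℝ] V))
    (hpSsym : ∀ X ∈ pS, ∀ v w : V, ⟪X v, w⟫ = ⟪v, X w⟫)
    (mt : V → (V →ₗ[ℝ] V))
    (hmt : ∀ v : V, mt v ∈ pS ∧ ∀ X ∈ pS,
      LinearMap.trace ℝ V (mt v ∘ₗ LinearMap.adjoint X) = ⟪X v, v⟫) :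
    Differentiable ℝ (fun v : V => LinearMap.trace ℝ V (mt v ∘ₗ LinearMap.adjoint (mt v))) ∧
    ∀ v : V, gradient (fun v : V => LinearMap.trace ℝ V (mt v ∘ₗ LinearMap.adjoint (mt v))) v
      = (4 : ℝ) • (mt v v) := by
  have key : ∀ v : V, HasGradientAt
      (fun v : V => LinearMap.trace ℝ V (mt v ∘ₗ LinearMap.adjoint (mt v)))
      ((4 : ℝ) • (mt v v)) v := by
    intro v
    rw [hasGradientAt_iff_isLittleO]
    set c := LinearMap.trace ℝ V (mt v ∘ₗ LinearMap.adjoint (mt v)) with hc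
    have hO : (fun w => LinearMap.trace ℝ V (mt w ∘ₗ LinearMap.adjoint (mt w)) - c
        - ⟪(4 : ℝ) • (mt v v), w - v⟫) =O[nhds v] fun w => ‖w - v‖ ^ 2 := by
      refine Asymptotics.IsBigO.of_bound (2 * √c + (1 + 2 * ‖v‖) ^ 2) ?_
      filter_upwards [Metric.ball_mem_nhds v one_pos] with w hw
      rw [mem_ball_iff_norm] at hw
      obtain ⟨hv1, hv2⟩ := hmt v
      obtain ⟨hw1, hw2⟩ := hmt w
      have hX : mt w - mt v ∈ pS := pS.sub_mem hw1 hv1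
      have e1 := hv2 _ hX
      have e2 := hw2 _ hX
      have hXX : LinearMap.trace ℝ V ((mt w - mt v) ∘ₗ LinearMap.adjoint (mt w - mt v))
          = ⟪(mt w - mt v) (w - v), w + v⟫ := by
        have s := hpSsym _ hX w v
        rw [LinearMap.sub_comp, map_sub, e1, e2, map_sub, inner_sub_left, inner_add_right,
          inner_add_right, s, real_inner_comm w ((mt w - mt v) v)]
        ring
      have hid : LinearMap.trace ℝ V (mt w ∘ₗ LinearMap.adjoint (mt w)) - c
          - ⟪(4 : ℝ) • (mt v v), w - v⟫ = 2 * ⟪mt v (w - v), w - v⟫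
          + LinearMap.trace ℝ V ((mt w - mt v) ∘ₗ LinearMap.adjoint (mt w - mt v)) := by
        have a1 := hw2 _ hv1
        have a2 := hv2 _ hv1
        have a3 : LinearMap.trace ℝ V (mt v ∘ₗ LinearMap.adjoint (mt w)) = ⟪mt v w, w⟫ := by
          rw [← a1, LinearMap.trace_eq_sum_inner _ (stdOrthonormalBasis ℝ V),
            LinearMap.trace_eq_sum_inner _ (stdOrthonormalBasis ℝ V)]
          refine Finset.sum_congr rfl fun i _ => ?_
          rw [LinearMap.comp_apply, LinearMap.comp_apply, ← LinearMap.adjoint_inner_left,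
            ← LinearMap.adjoint_inner_left, real_inner_comm, LinearMap.adjoint_adjoint]
        have s := hpSsym _ hv1 w v
        have s' := real_inner_comm w (mt v v)
        rw [← hc] at a2
        simp only [map_sub, LinearMap.sub_comp, LinearMap.comp_sub, a1, a3, inner_sub_left,
          inner_sub_right, real_inner_smul_left, ← hc, s, ← a2, s']
        linarith
      have hb := trace_le_of_eq_inner _ _ _ hXX
      have hn := trace_comp_adjoint_self_nonneg (mt w - mt v)
      have hsum : ‖w + v‖ ≤ 1 + 2 * ‖v‖ := by
        calc ‖w + v‖ = ‖(w - v) + (2 : ℝ) • v‖ := by congr 1; module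
          _ ≤ ‖w - v‖ + ‖(2 : ℝ) • v‖ := norm_add_le _ _
          _ ≤ 1 + 2 * ‖v‖ := by rw [norm_smul]; norm_num; exact hw.le
      have hmv : ‖mt v (w - v)‖ ≤ √c * ‖w - v‖ := by
        refine (pow_le_pow_iff_left₀ (norm_nonneg _) (by positivity) two_ne_zero).1 ?_
        rw [mul_pow, Real.sq_sqrt (trace_comp_adjoint_self_nonneg _)]
        exact norm_sq_apply_le_trace _ _
      have hin : |⟪mt v (w - v), w - v⟫| ≤ √c * ‖w - v‖ ^ 2 :=
        calc _ ≤ ‖mt v (w - v)‖ * ‖w - v‖ := abs_real_inner_le_norm _ _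
          _ ≤ √c * ‖w - v‖ * ‖w - v‖ := by gcongr
          _ = _ := by ring
      have hb2 : ‖w - v‖ ^ 2 * ‖w + v‖ ^ 2 ≤ ‖w - v‖ ^ 2 * (1 + 2 * ‖v‖) ^ 2 := by gcongr
      rw [hid, Real.norm_eq_abs, Real.norm_eq_abs, abs_of_nonneg (sq_nonneg ‖w - v‖)]
      refine (abs_add_le _ _).trans ?_
      rw [abs_mul, abs_two, abs_of_nonneg hn]
      linarith
    refine hO.trans_isLittleO ?_
    exact Asymptotics.isLittleO_pow_sub_sub v one_lt_two
  exact ⟨fun v => (key v).differentiableAt, fun v => (key v).gradient⟩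

end MomentMapGradient
end
end
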